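/- arXiv:2208.00582 — 6 statements merged into one kernel-verified Lean document; each statement's English description precedes it below -/
import Mathlib

section
/- Let W be a double-well potential, n ≥ 1, and let (ε_i) be a sequence of positive reals with ε_i → 0. For each i let u_i be a double-well phase transition with parameter ε_i on the flat torus T^{1+n}. Let 0 ≤ θ_1 < θ_2 < ⋯ < θ_m < 2π (m ≥ 1) and set Σ := ⋃_{k=1}^m ({θ_k} + 2πℤ) × ℝ^n ⊆ ℝ^{1+n}. Assume each nodal set Z_i := { x ∈ ℝ^{1+n} : u_i(x) = 0 } is nonempty and the Hausdorff distance between Z_i and Σ tends to 0 as i → ∞. Then the consecutive gaps between the angles are all equal: setting θ_{m+1} := θ_1 + 2π, one has θ_{k+1} − θ_k = 2π/m for every k ∈ {1, …, m}; equivalently, Σ is invariant under the rotation of the first factor by 2π/m radians. -/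
open Real Filter Set

/-- `W` is a double-well potential. -/
structure IsDoubleWell (W : ℝ → ℝ) : Prop where
  smooth : ContDiff ℝ (⊤ : ℕ∞) W
  nonneg : ∀ x, 0 ≤ W x
  eq_zero_iff : ∀ x, W x = 0 ↔ x = 1 ∨ x = -1
  even : ∀ x, W (-x) = W x
  deriv2_pos_one : 0 < iteratedDeriv 2 W 1
  deriv2_pos_neg_one : 0 < iteratedDeriv 2 W (-1)
  mono : StrictMonoOn (fun x => deriv W x / x) (Set.Ioo (0 : ℝ) 1)
  anti : StrictAntiOn (fun x => deriv W x / x) (Set.Ioo (-1 : ℝ) 0)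

/-- Second derivative of `u` at `x` in the `j`-th coordinate direction. -/
noncomputable def secondDirDeriv {d : ℕ} (u : EuclideanSpace ℝ (Fin d) → ℝ)
    (x : EuclideanSpace ℝ (Fin d)) (j : Fin d) : ℝ :=
  iteratedDeriv 2 (fun t : ℝ => u (x + t • EuclideanSpace.single j 1)) 0

/-- Euclidean Laplacian `Δu = Σ_j ∂²u/∂x_j²`. -/
noncomputable def lap {d : ℕ} (u : EuclideanSpace ℝ (Fin d) → ℝ)
    (x : EuclideanSpace ℝ (Fin d)) : ℝ :=
  ∑ j : Fin d, secondDirDeriv u x j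

/-- Double-well phase transition with parameter `ε` on the flat torus
`(ℝ/2πℤ) × (ℝ/ℤ)ⁿ`, viewed as a periodic function on `ℝ^{1+n}`
(first coordinate is the circle direction). -/
structure IsPhaseTransitionTorus {n : ℕ} (W : ℝ → ℝ) (ε : ℝ)
    (u : EuclideanSpace ℝ (Fin (n + 1)) → ℝ) : Prop where
  smooth : ContDiff ℝ (⊤ : ℕ∞) u
  mem_Icc : ∀ x, u x ∈ Set.Icc (-1 : ℝ) 1
  periodic_first : ∀ x, u (x + (2 * π) • EuclideanSpace.single 0 1) = u x
  periodic_rest : ∀ j : Fin (n + 1), j ≠ 0 →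
    ∀ x, u (x + EuclideanSpace.single j 1) = u x
  pde : ∀ x, ε ^ 2 * lap u x = deriv W (u x)

namespace PT

lemma W_contDiff {W : ℝ → ℝ} (hW : IsDoubleWell W) : ContDiff ℝ 2 W :=
  contDiff_infty.1 hW.smooth 2

lemma W_hasDeriv {W : ℝ → ℝ} (hW : IsDoubleWell W) (x : ℝ) : HasDerivAt W (deriv W x) x :=
  ((W_contDiff hW).differentiable (by norm_num) x).hasDerivAt

lemma dW_contDiff {W : ℝ → ℝ} (hW : IsDoubleWell W) : ContDiff ℝ 1 (deriv W) := by
  apply ContDiff.deriv'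
  exact (W_contDiff hW).of_le (by norm_num)

lemma dW_odd {W : ℝ → ℝ} (hW : IsDoubleWell W) (x : ℝ) : deriv W (-x) = - deriv W x := by
  have h : (fun y => W (-y)) = W := funext hW.even
  have := deriv_comp_neg W x
  rw [h] at this
  linarith

lemma dW_zero {W : ℝ → ℝ} (hW : IsDoubleWell W) : deriv W 0 = 0 := by
  have := dW_odd hW 0
  simp at this
  linarith

lemma dW_one {W : ℝ → ℝ} (hW : IsDoubleWell W) : deriv W 1 = 0 := by
  apply IsLocalMin.deriv_eq_zero
  refine Filter.Eventually.of_forall fun x => ?_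
  rw [(hW.eq_zero_iff 1).2 (Or.inl rfl)]
  exact hW.nonneg x

lemma dW_ratio_lt {W : ℝ → ℝ} (hW : IsDoubleWell W) {x y : ℝ} (hx : 0 < x) (hxy : x < y)
    (hy : y < 1) : y * deriv W x < x * deriv W y := by
  have := hW.mono ⟨hx, hxy.trans hy⟩ ⟨hx.trans hxy, hy⟩ hxy
  simp only at this
  rw [div_lt_div_iff₀ hx (hx.trans hxy)] at this
  linarith

lemma dW_neg {W : ℝ → ℝ} (hW : IsDoubleWell W) {x : ℝ} (hx : 0 < x) (hx1 : x < 1) :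
    deriv W x < 0 := by
  -- compare with the midpoint, then take a limit at 1
  set y := (x + 1) / 2 with hy
  have hxy : x < y := by linarith
  have hy1 : y < 1 := by linarith
  have h0 := dW_ratio_lt hW hx hxy hy1
  have hc : Continuous (deriv W) := (dW_contDiff hW).continuous
  have h1 : deriv W y ≤ 0 := by
    have hlim : Tendsto (fun z => y * deriv W z) (nhdsWithin 1 (Set.Iio 1)) (nhds (y * deriv W 1)) :=
      ((continuous_const.mul hc).tendsto 1).mono_left nhdsWithin_le_nhds
    have hlim' : Tendsto (fun z => z * deriv W y) (nhdsWithin 1 (Set.Iio 1)) (nhds (1 * deriv W y)) :=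
      ((continuous_id.mul continuous_const).tendsto 1).mono_left nhdsWithin_le_nhds
    have := le_of_tendsto_of_tendsto hlim' hlim (by
      filter_upwards [Ioo_mem_nhdsLT hy1] with z hz
      have := dW_ratio_lt hW (hx.trans hxy) hz.1 hz.2
      linarith)
    rw [dW_one hW] at this
    linarith
  have : x * deriv W y ≤ 0 := mul_nonpos_of_nonneg_of_nonpos hx.le h1
  by_contra hcon
  push Not at hcon
  have : 0 ≤ y * deriv W x := mul_nonneg (hx.trans hxy).le hcon
  linarith

lemma W_anti {W : ℝ → ℝ} (hW : IsDoubleWell W) : StrictAntiOn W (Set.Icc 0 1) := by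
  apply strictAntiOn_of_deriv_neg (convex_Icc 0 1) (W_contDiff hW).continuous.continuousOn
  intro x hx
  rw [interior_Icc] at hx
  exact dW_neg hW hx.1 hx.2

/-- clamp to `[-P, P]` -/
noncomputable def clamp (P x : ℝ) : ℝ := max (-P) (min P x)

lemma clamp_lip (P : ℝ) : LipschitzWith 1 (clamp P) := by
  have h1 : LipschitzWith 1 (fun x : ℝ => min P x) := by
    simpa using (LipschitzWith.id (α := ℝ)).const_min P
  exact h1.const_max (-P)

lemma clamp_abs {P : ℝ} (hP : 0 ≤ P) (x : ℝ) : |clamp P x| ≤ P := by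
  rw [abs_le]; unfold clamp
  exact ⟨le_max_left _ _, max_le (by linarith) (min_le_left _ _)⟩

lemma clamp_eq {P x : ℝ} (h : |x| ≤ P) : clamp P x = x := by
  rw [abs_le] at h; unfold clamp
  rw [min_eq_right h.2, max_eq_right h.1]

/-- truncated force -/
noncomputable def g (W : ℝ → ℝ) (x : ℝ) : ℝ := deriv W (clamp 1 x)

lemma g_eq {W : ℝ → ℝ} {x : ℝ} (h0 : 0 ≤ x) (h : x ≤ 1) : g W x = deriv W x := by
  unfold g; rw [clamp_eq (by rw [abs_le]; constructor <;> linarith)]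

lemma g_nonpos {W : ℝ → ℝ} (hW : IsDoubleWell W) {x : ℝ} (h0 : 0 ≤ x) : g W x ≤ 0 := by
  rcases le_or_gt 1 x with h | h
  · have : clamp 1 x = 1 := by
      unfold clamp; rw [min_eq_left h, max_eq_right (by norm_num)]
    unfold g; rw [this, dW_one hW]
  · rw [g_eq h0 h.le]
    rcases h0.eq_or_lt with h0 | h0
    · rw [← h0, dW_zero hW]
    · exact (dW_neg hW h0 h).le

lemma g_lip {W : ℝ → ℝ} (hW : IsDoubleWell W) : ∃ K, LipschitzWith K (g W) := by
  obtain ⟨K, hK⟩ := (dW_contDiff hW).contDiffOn.exists_lipschitzOnWith (by norm_num)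
    (convex_Icc (-1 : ℝ) 1) isCompact_Icc
  refine ⟨K, ?_⟩
  rw [← lipschitzOnWith_univ]
  have := hK.comp ((clamp_lip 1).lipschitzOnWith (s := Set.univ)) (fun x _ => by
    have := clamp_abs (zero_le_one) x
    rwa [abs_le] at this)
  rw [mul_one] at this
  exact this

lemma g_bdd {W : ℝ → ℝ} (hW : IsDoubleWell W) : ∃ C, 0 ≤ C ∧ ∀ x, |g W x| ≤ C := by
  obtain ⟨C, hC⟩ := (isCompact_Icc (a := (-1 : ℝ)) (b := 1)).exists_bound_of_continuousOn
    (dW_contDiff hW).continuous.continuousOn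
  refine ⟨C, le_trans (norm_nonneg _) (hC 0 (by norm_num)), fun x => ?_⟩
  have := clamp_abs (zero_le_one) x
  rw [abs_le] at this
  exact hC _ this

/-- solution on `(-T,T)` of `φ'' = G φ`. -/
def Sol (G : ℝ → ℝ) (T M : ℝ) (φ ψ : ℝ → ℝ) : Prop :=
  φ 0 = M ∧ ψ 0 = 0 ∧ ∀ t ∈ Set.Ioo (-T) T, HasDerivAt φ (ψ t) t ∧ HasDerivAt ψ (G (φ t)) t

lemma sol_exists {G : ℝ → ℝ} {K : NNReal} (hG : LipschitzWith K G) {C : ℝ} (hC0 : 0 ≤ C)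
    (hC : ∀ x, |G x| ≤ C) {T : ℝ} (hT : 0 < T) (M : ℝ) : ∃ φ ψ, Sol G T M φ ψ := by
  set P := C * T with hP
  have hP0 : 0 ≤ P := by positivity
  let v : ℝ → ℝ × ℝ → ℝ × ℝ := fun _ p => (clamp P p.2, G p.1)
  have hv : ∀ t, LipschitzWith (max 1 K) (v t) := by
    intro t
    have h1 := (clamp_lip P).comp (LipschitzWith.prod_snd (α := ℝ) (β := ℝ))
    have h2 := hG.comp (LipschitzWith.prod_fst (α := ℝ) (β := ℝ))
    simpa using h1.prodMk h2
  have hvb : ∀ t p, ‖v t p‖ ≤ max P C := by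
    intro t p
    rw [Prod.norm_def]
    exact max_le_max (clamp_abs hP0 _) (hC _)
  have hL0 : 0 ≤ max P C := le_max_of_le_left hP0
  have hpl : IsPicardLindelof v (tmin := -T) (tmax := T) ⟨0, by constructor <;> linarith⟩
      (M, (0:ℝ)) (⟨max P C * T, by positivity⟩) 0 ⟨max P C, hL0⟩ (max 1 K) := by
    constructor
    · intro t _; exact (hv t).lipschitzOnWith
    · intro x _; exact continuousOn_const
    · intro t _ x _; exact hvb t x
    · simp only [sub_zero, zero_sub, neg_neg, max_self, NNReal.coe_zero]
      exact le_rfl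
  obtain ⟨α, h0, hα⟩ := hpl.exists_eq_forall_mem_Icc_hasDerivWithinAt₀
  have hα' : ∀ t ∈ Set.Ioo (-T) T, HasDerivAt α (v t (α t)) t := fun t ht =>
    (hα t ⟨ht.1.le, ht.2.le⟩).hasDerivAt (Icc_mem_nhds ht.1 ht.2)
  have hfst : ∀ t ∈ Set.Ioo (-T) T, HasDerivAt (fun t => (α t).1) (clamp P (α t).2) t :=
    fun t ht => (hα' t ht).fst
  have hsnd : ∀ t ∈ Set.Ioo (-T) T, HasDerivAt (fun t => (α t).2) (G (α t).1) t :=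
    fun t ht => (hα' t ht).snd
  have h0' : α 0 = (M, 0) := h0
  refine ⟨fun t => (α t).1, fun t => (α t).2, by simp [h0'], by simp [h0'], fun t ht => ⟨?_, hsnd t ht⟩⟩
  have := Convex.norm_image_sub_le_of_norm_hasDerivWithin_le (s := Set.Ioo (-T) T)
    (fun x hx => (hsnd x hx).hasDerivWithinAt) (fun x _ => hC _) (convex_Ioo _ _)
    (x := 0) (y := t) (by constructor <;> linarith) ht
  simp only [h0', sub_zero, Real.norm_eq_abs] at this
  have h2 : |t| ≤ T := by rw [abs_le]; exact ⟨ht.1.le, ht.2.le⟩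
  have h3 := hfst t ht
  rwa [clamp_eq (this.trans (mul_le_mul_of_nonneg_left h2 hC0))] at h3

lemma sol_dist {G : ℝ → ℝ} {K : NNReal} (hG : LipschitzWith K G) {T M M' : ℝ} {φ ψ φ' ψ' : ℝ → ℝ}
    (h : Sol G T M φ ψ) (h' : Sol G T M' φ' ψ') {t : ℝ} (ht0 : 0 ≤ t) (htT : t < T) :
    |φ t - φ' t| ≤ |M - M'| * Real.exp (max 1 K * t) ∧
    |ψ t - ψ' t| ≤ |M - M'| * Real.exp (max 1 K * t) := by
  let v : ℝ → ℝ × ℝ → ℝ × ℝ := fun _ p => (p.2, G p.1)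
  have hv : ∀ t, LipschitzWith (max 1 K) (v t) := by
    intro t
    have h2 := hG.comp (LipschitzWith.prod_fst (α := ℝ) (β := ℝ))
    simpa using (LipschitzWith.prod_snd (α := ℝ) (β := ℝ)).prodMk h2
  have hd : ∀ {M : ℝ} {φ ψ : ℝ → ℝ}, Sol G T M φ ψ → ∀ s ∈ Set.Icc 0 t,
      HasDerivAt (fun s => (φ s, ψ s)) (v s (φ s, ψ s)) s := fun hh s hs =>
    HasDerivAt.prodMk (hh.2.2 s ⟨by linarith [hs.1], by linarith [hs.2]⟩).1
      (hh.2.2 s ⟨by linarith [hs.1], by linarith [hs.2]⟩).2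
  have := dist_le_of_trajectories_ODE (v := v) (K := max 1 K) (a := 0) (b := t)
    (f := fun s => (φ s, ψ s)) (g := fun s => (φ' s, ψ' s)) (δ := |M - M'|) hv
    (fun s hs => (hd h s hs).continuousAt.continuousWithinAt)
    (fun s hs => (hd h s ⟨hs.1, hs.2.le⟩).hasDerivWithinAt)
    (fun s hs => (hd h' s hs).continuousAt.continuousWithinAt)
    (fun s hs => (hd h' s ⟨hs.1, hs.2.le⟩).hasDerivWithinAt)
    (by simp [Prod.dist_eq, h.1, h.2.1, h'.1, h'.2.1, Real.dist_eq]) t ⟨ht0, le_rfl⟩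
  rw [Prod.dist_eq, max_le_iff] at this
  simpa [Real.dist_eq] using this

lemma sol_even {G : ℝ → ℝ} {K : NNReal} (hG : LipschitzWith K G) {T M : ℝ} {φ ψ : ℝ → ℝ}
    (h : Sol G T M φ ψ) {t : ℝ} (ht0 : 0 ≤ t) (htT : t < T) :
    φ (-t) = φ t ∧ ψ (-t) = - ψ t := by
  have h' : Sol G T M (fun s => φ (-s)) (fun s => - ψ (-s)) := by
    refine ⟨by simp [h.1], by simp [h.2.1], fun s hs => ?_⟩
    have hs' : -s ∈ Set.Ioo (-T) T := ⟨by linarith [hs.2], by linarith [hs.1]⟩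
    obtain ⟨h1, h2⟩ := h.2.2 (-s) hs'
    have e := hasDerivAt_neg s
    have h3 := HasDerivAt.comp s h1 e
    have h4 := (HasDerivAt.comp s h2 e).neg
    constructor
    · exact h3.congr_deriv (by simp)
    · exact h4.congr_deriv (by simp)
  have := sol_dist hG h' h ht0 htT
  simp only [sub_self, abs_zero, zero_mul, abs_nonpos_iff] at this
  constructor <;> linarith [this.1, this.2]

/-- while nonnegative on `[0,R]`, the solution stays below `M` and energy is conserved. -/
lemma sol_bounds {W : ℝ → ℝ} (hW : IsDoubleWell W) {T M R : ℝ} {φ ψ : ℝ → ℝ}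
    (h : Sol (g W) T M φ ψ) (hR : R < T) (hM1 : M ≤ 1)
    (hpos : ∀ t ∈ Set.Icc 0 R, 0 ≤ φ t) :
    ∀ t ∈ Set.Icc 0 R, ψ t ≤ 0 ∧ φ t ≤ M ∧ ψ t ^ 2 = 2 * (W (φ t) - W M) := by
  rcases lt_or_ge R 0 with hR0 | hR0
  · intro t ht; linarith [ht.1, ht.2]
  have hmem : ∀ t ∈ Set.Icc 0 R, t ∈ Set.Ioo (-T) T := fun t ht =>
    ⟨by linarith [ht.1], by linarith [ht.2]⟩
  have hψanti : AntitoneOn ψ (Set.Icc 0 R) := by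
    apply antitoneOn_of_deriv_nonpos (convex_Icc 0 R)
    · intro t ht; exact (h.2.2 t (hmem t ht)).2.continuousAt.continuousWithinAt
    · intro t ht
      exact (h.2.2 t (hmem t (interior_subset ht))).2.differentiableAt.differentiableWithinAt
    · intro t ht
      rw [(h.2.2 t (hmem t (interior_subset ht))).2.deriv]
      exact g_nonpos hW (hpos t (interior_subset ht))
  have hψ : ∀ t ∈ Set.Icc 0 R, ψ t ≤ 0 := by
    intro t ht
    have := hψanti ⟨le_rfl, hR0⟩ ht ht.1
    rwa [h.2.1] at this
  have hφanti : AntitoneOn φ (Set.Icc 0 R) := by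
    apply antitoneOn_of_deriv_nonpos (convex_Icc 0 R)
    · intro t ht; exact (h.2.2 t (hmem t ht)).1.continuousAt.continuousWithinAt
    · intro t ht
      exact (h.2.2 t (hmem t (interior_subset ht))).1.differentiableAt.differentiableWithinAt
    · intro t ht
      rw [(h.2.2 t (hmem t (interior_subset ht))).1.deriv]
      exact hψ t (interior_subset ht)
  have hφ : ∀ t ∈ Set.Icc 0 R, φ t ≤ M := by
    intro t ht
    have := hφanti ⟨le_rfl, hR0⟩ ht ht.1
    rwa [h.1] at this
  intro t ht
  refine ⟨hψ t ht, hφ t ht, ?_⟩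
  have hE : ∀ s ∈ Set.Icc 0 R, HasDerivAt (fun s => ψ s ^ 2 - 2 * W (φ s)) 0 s := by
    intro s hs
    obtain ⟨h1, h2⟩ := h.2.2 s (hmem s hs)
    have h3 := (h2.pow 2).sub (((W_hasDeriv hW (φ s)).comp s h1).const_mul 2)
    refine h3.congr_deriv ?_
    rw [g_eq (hpos s hs) ((hφ s hs).trans hM1)]
    norm_num
    ring
  have := constant_of_derivWithin_zero (f := fun s => ψ s ^ 2 - 2 * W (φ s)) (a := 0) (b := R)
    (fun s hs => (hE s hs).differentiableAt.differentiableWithinAt)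
    (fun s hs => by
      have hs' : s ∈ Set.Icc 0 R := ⟨hs.1, hs.2.le⟩
      exact (hE s hs').hasDerivWithinAt.derivWithin
        (uniqueDiffOn_Icc (lt_of_le_of_lt hs.1 hs.2) s hs')) t ht
  simp only [h.1, h.2.1] at this
  linarith

/-- From `M = 1/2`, the solution hits zero in bounded time. -/
lemma sol_hits {W : ℝ → ℝ} (hW : IsDoubleWell W) : ∃ R0 > 0, ∀ T φ ψ, R0 < T →
    Sol (g W) T (1/2) φ ψ → ∃ t ∈ Set.Icc 0 R0, φ t ≤ 0 := by
  set k := - (2 * deriv W (1/2)) with hk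
  have hk0 : 0 < k := by
    have := dW_neg hW (x := 1/2) (by norm_num) (by norm_num); linarith
  set κ := Real.sqrt k with hκ
  have hκ0 : 0 < κ := Real.sqrt_pos.2 hk0
  have hκk : κ * κ = k := Real.mul_self_sqrt hk0.le
  refine ⟨π / (2 * κ), by positivity, fun T φ ψ hT h => ?_⟩
  set R := π / (2 * κ) with hR
  have hR0 : 0 < R := by positivity
  by_contra hcon
  push Not at hcon
  have hb := sol_bounds hW h hT (by norm_num) (fun t ht => (hcon t ht).le)
  have hmem : ∀ t ∈ Set.Icc 0 R, t ∈ Set.Ioo (-T) T := fun t ht =>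
    ⟨by linarith [ht.1], by linarith [ht.2]⟩
  let H : ℝ → ℝ := fun t => ψ t * Real.cos (κ * t) + φ t * (κ * Real.sin (κ * t))
  have hH : ∀ t ∈ Set.Icc 0 R, HasDerivAt H ((g W (φ t) + k * φ t) * Real.cos (κ * t)) t := by
    intro t ht
    obtain ⟨h1, h2⟩ := h.2.2 t (hmem t ht)
    have e : HasDerivAt (fun t => κ * t) κ t := by simpa using (hasDerivAt_id t).const_mul κ
    have h3 := (h2.mul e.cos).add (h1.mul (e.sin.const_mul κ))
    refine h3.congr_deriv ?_
    rw [← hκk]; ring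
  have hanti : AntitoneOn H (Set.Icc 0 R) := by
    apply antitoneOn_of_deriv_nonpos (convex_Icc 0 R)
    · intro t ht; exact (hH t ht).continuousAt.continuousWithinAt
    · intro t ht; exact (hH t (interior_subset ht)).differentiableAt.differentiableWithinAt
    · intro t ht
      have ht' := interior_subset ht
      rw [(hH t ht').deriv]
      have hc : 0 ≤ Real.cos (κ * t) := by
        apply Real.cos_nonneg_of_mem_Icc
        have h1 : κ * t ≤ π / 2 := by
          calc κ * t ≤ κ * R := mul_le_mul_of_nonneg_left ht'.2 hκ0.le
            _ = π / 2 := by rw [hR]; field_simp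
        have h2 : 0 ≤ κ * t := mul_nonneg hκ0.le ht'.1
        constructor <;> linarith [Real.pi_pos]
      apply mul_nonpos_of_nonpos_of_nonneg _ hc
      have hp := hcon t ht'
      have hle := (hb t ht').2.1
      rw [g_eq hp.le (by linarith)]
      rcases hle.eq_or_lt with he | hl
      · rw [he, hk]; linarith
      · have := dW_ratio_lt hW hp hl (by norm_num)
        rw [hk]; linarith
  have := hanti ⟨le_rfl, hR0.le⟩ ⟨hR0.le, le_rfl⟩ hR0.le
  have e : κ * R = π / 2 := by rw [hR]; field_simp
  simp only [H, e, h.1, h.2.1, Real.cos_pi_div_two, Real.sin_pi_div_two] at this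
  have hp := hcon R ⟨hR0.le, le_rfl⟩
  simp at this
  have : 0 < φ R * κ := mul_pos hp hκ0
  linarith

/-- Shooting. -/
lemma shoot {W : ℝ → ℝ} (hW : IsDoubleWell W) {K : NNReal} (hK : LipschitzWith K (g W)) {T R : ℝ}
    (hR0 : 0 < R) (hR : R < T) (Φ Ψ : ℝ → ℝ → ℝ) (hs : ∀ M, Sol (g W) T M (Φ M) (Ψ M))
    {M0 : ℝ} (hM0 : 0 < M0) (hM01 : M0 < 1) (hz : ∃ t ∈ Set.Icc 0 R, Φ M0 t ≤ 0) :
    ∃ M, M0 ≤ M ∧ M < 1 ∧ Φ M R = 0 ∧ ∀ t ∈ Set.Ico 0 R, 0 < Φ M t := by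
  have hmem : ∀ t ∈ Set.Icc 0 R, t ∈ Set.Ioo (-T) T := fun t ht =>
    ⟨by linarith [ht.1], by linarith [ht.2]⟩
  have hcont : ContinuousOn (fun p : ℝ × ℝ => Φ p.1 p.2) (Set.Icc M0 1 ×ˢ Set.Icc 0 R) := by
    apply continuousOn_prod_of_continuousOn_lipschitzOnWith _
      (⟨Real.exp (max 1 K * R), (Real.exp_pos _).le⟩ : NNReal)
    · intro M _ t ht
      exact ((hs M).2.2 t (hmem t ht)).1.continuousAt.continuousWithinAt
    · intro t ht
      apply LipschitzOnWith.of_dist_le_mul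
      intro M _ M' _
      rw [Real.dist_eq, Real.dist_eq]
      refine (sol_dist hK (hs M) (hs M') ht.1 (by linarith [ht.2])).1.trans ?_
      rw [mul_comm]
      apply mul_le_mul_of_nonneg_right _ (abs_nonneg _)
      change _ ≤ Real.exp (max 1 K * R)
      apply Real.exp_le_exp.2
      apply mul_le_mul_of_nonneg_left ht.2
      positivity
  set B : Set (ℝ × ℝ) := (Set.Icc M0 1 ×ˢ Set.Icc 0 R) ∩ (fun p : ℝ × ℝ => Φ p.1 p.2) ⁻¹' Set.Iic 0
  have hB : IsCompact B := by
    apply (isCompact_Icc.prod isCompact_Icc).of_isClosed_subset _ Set.inter_subset_left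
    exact hcont.preimage_isClosed_of_isClosed (isClosed_Icc.prod isClosed_Icc) isClosed_Iic
  have hBne : B.Nonempty := by
    obtain ⟨t, ht, hle⟩ := hz
    exact ⟨(M0, t), ⟨⟨⟨le_rfl, hM01.le⟩, ht⟩, hle⟩⟩
  obtain ⟨⟨M, t0⟩, ⟨⟨hM, ht0⟩, hle⟩, hmax⟩ := hB.exists_isMaxOn hBne continuous_fst.continuousOn
  simp only at hM ht0
  simp only [Set.mem_preimage, Set.mem_Iic] at hle
  have hMpos : 0 < M := hM0.trans_le hM.1
  -- above M positive
  have hab : ∀ M' ∈ Set.Ioc M 1, ∀ t ∈ Set.Icc 0 R, 0 < Φ M' t := by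
    intro M' hM' t ht
    by_contra hcon
    push Not at hcon
    have : (M', t) ∈ B := ⟨⟨⟨by linarith [hM.1, hM'.1], hM'.2⟩, ht⟩, hcon⟩
    have := hmax this
    simp only [Set.mem_ofPred_eq] at this
    linarith [hM'.1]
  have hM1 : M < 1 := by
    rcases hM.2.eq_or_lt with h | h
    · exfalso
      have hone : Sol (g W) T 1 (fun _ => 1) (fun _ => 0) := by
        refine ⟨rfl, rfl, fun t _ => ⟨hasDerivAt_const t 1, ?_⟩⟩
        rw [g_eq (by norm_num) le_rfl, dW_one hW]
        exact hasDerivAt_const t 0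
      have := (sol_dist hK (hs 1) hone ht0.1 (by linarith [ht0.2])).1
      simp only [sub_self, abs_zero, zero_mul, abs_nonpos_iff] at this
      rw [h] at hle
      linarith
    · exact h
  -- nonneg
  have hnn : ∀ t ∈ Set.Icc 0 R, 0 ≤ Φ M t := by
    intro t ht
    have hc : ContinuousWithinAt (fun M' => Φ M' t) (Set.Ioc M 1) M := by
      have h1 := hcont (M, t) ⟨hM, ht⟩
      have h2 : ContinuousWithinAt (fun M' : ℝ => (M', t)) (Set.Ioc M 1) M := by fun_prop
      exact ContinuousWithinAt.comp (f := fun M' : ℝ => (M', t)) h1 h2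
        (fun M' hM' => ⟨⟨by linarith [hM.1, hM'.1], hM'.2⟩, ht⟩)
    have hne : (nhdsWithin M (Set.Ioc M 1)).NeBot := by
      rw [nhdsWithin_Ioc_eq_nhdsGT hM1]; infer_instance
    apply ge_of_tendsto hc
    filter_upwards [self_mem_nhdsWithin] with M' hM'
    exact (hab M' hM' t ht).le
  have hb := sol_bounds hW (hs M) hR hM1.le hnn
  have hψ : ∀ t ∈ Set.Icc 0 R, Φ M t = 0 → t = R := by
    intro t ht h0
    by_contra hne
    have htR : t < R := lt_of_le_of_ne ht.2 hne
    have ht0 : 0 < t := by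
      rcases ht.1.eq_or_lt with h | h
      · rw [← h, (hs M).1] at h0; linarith
      · exact h
    have hmin : IsLocalMin (Φ M) t := by
      filter_upwards [Icc_mem_nhds ht0 htR] with s hs'
      rw [h0]; exact hnn s hs'
    have h1 := hmin.hasDerivAt_eq_zero ((hs M).2.2 t (hmem t ht)).1
    have h2 := (hb t ht).2.2
    rw [h1, h0] at h2
    have := W_anti hW ⟨le_rfl, zero_le_one⟩ ⟨hMpos.le, hM1.le⟩ hMpos
    norm_num at h2
    linarith
  have ht0R := hψ t0 ht0 (le_antisymm hle (hnn t0 ht0))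
  refine ⟨M, hM.1, hM1, ?_, ?_⟩
  · rw [← ht0R]; exact le_antisymm hle (hnn t0 ht0)
  · intro t ht
    refine lt_of_le_of_ne (hnn t ⟨ht.1, ht.2.le⟩) (fun h => ?_)
    have := hψ t ⟨ht.1, ht.2.le⟩ h.symm
    linarith [ht.2]

structure IsProf (W : ℝ → ℝ) (R : ℝ) (φ ψ : ℝ → ℝ) (s : ℝ) : Prop where
  d1 : ∀ t ∈ Set.Icc (-R) R, HasDerivAt φ (ψ t) t
  d2 : ∀ t ∈ Set.Ioo (-R) R, HasDerivAt ψ (deriv W (φ t)) t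
  pos : ∀ t ∈ Set.Ioo (-R) R, 0 < φ t
  lt_one : ∀ t ∈ Set.Ioo (-R) R, φ t < 1
  zr : φ R = 0
  zl : φ (-R) = 0
  sr : ψ R = -s
  sl : ψ (-R) = s

lemma mkProf {W : ℝ → ℝ} (hW : IsDoubleWell W) {K : NNReal} (hK : LipschitzWith K (g W)) {T R M : ℝ}
    (hR0 : 0 < R) (hR : R < T) {φ ψ : ℝ → ℝ} (hs : Sol (g W) T M φ ψ)
    (hM1 : M < 1) (h0 : φ R = 0) (hp : ∀ t ∈ Set.Ico 0 R, 0 < φ t) :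
    IsProf W R φ ψ (Real.sqrt (2 * (W 0 - W M))) := by
  have hnn : ∀ t ∈ Set.Icc 0 R, 0 ≤ φ t := by
    intro t ht
    rcases ht.2.eq_or_lt with h | h
    · rw [h, h0]
    · exact (hp t ⟨ht.1, h⟩).le
  have hb := sol_bounds hW hs hR hM1.le hnn
  have habs : ∀ t ∈ Set.Icc (-R) R, φ t = φ |t| := by
    intro t ht
    rcases abs_cases t with ⟨h, _⟩ | ⟨h, h'⟩
    · rw [h]
    · rw [h]; have := (sol_even hK hs (t := -t) (by linarith) (by linarith [ht.1])).1
      rwa [neg_neg] at this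
  have hpos : ∀ t ∈ Set.Ioo (-R) R, 0 < φ t := fun t ht => by
    rw [habs t ⟨ht.1.le, ht.2.le⟩]
    exact hp _ ⟨abs_nonneg _, abs_lt.2 ht⟩
  have hlt : ∀ t ∈ Set.Ioo (-R) R, φ t < 1 := fun t ht => by
    rw [habs t ⟨ht.1.le, ht.2.le⟩]
    exact lt_of_le_of_lt (hb _ ⟨abs_nonneg _, (abs_lt.2 ht).le⟩).2.1 hM1
  have hbR := hb R ⟨hR0.le, le_rfl⟩
  have hsr : ψ R = - Real.sqrt (2 * (W 0 - W M)) := by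
    rw [← h0, ← hbR.2.2, Real.sqrt_sq_eq_abs, abs_of_nonpos hbR.1]; ring
  have hev := sol_even hK hs hR0.le hR
  refine ⟨?_, ?_, hpos, hlt, h0, ?_, hsr, ?_⟩
  · intro t ht; exact (hs.2.2 t ⟨by linarith [ht.1], by linarith [ht.2]⟩).1
  · intro t ht
    have := (hs.2.2 t ⟨by linarith [ht.1], by linarith [ht.2]⟩).2
    rwa [g_eq (hpos t ht).le (hlt t ht).le] at this
  · rw [hev.1, h0]
  · rw [hev.2, hsr, neg_neg]

lemma profiles {W : ℝ → ℝ} (hW : IsDoubleWell W) : ∃ R0 > 0, ∀ R1 R2, R0 ≤ R1 → R1 < R2 →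
    ∃ φ1 ψ1 φ2 ψ2 s1 s2, 0 ≤ s1 ∧ s1 < s2 ∧ IsProf W R1 φ1 ψ1 s1 ∧ IsProf W R2 φ2 ψ2 s2 := by
  obtain ⟨R0, hR0, hhit⟩ := sol_hits hW
  obtain ⟨K, hK⟩ := g_lip hW
  obtain ⟨C, hC0, hC⟩ := g_bdd hW
  refine ⟨R0, hR0, fun R1 R2 h01 h12 => ?_⟩
  have hT : 0 < R2 + 1 := by linarith
  choose Φ Ψ hs using fun M => sol_exists hK hC0 hC hT M
  obtain ⟨t, ht, hle⟩ := hhit (R2 + 1) _ _ (by linarith) (hs (1/2))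
  obtain ⟨M1, h1a, h1b, h1c, h1d⟩ := shoot hW hK (R := R1) (by linarith) (by linarith) Φ Ψ hs
    (M0 := 1/2) (by norm_num) (by norm_num) ⟨t, ⟨ht.1, ht.2.trans h01⟩, hle⟩
  obtain ⟨M2, h2a, h2b, h2c, h2d⟩ := shoot hW hK (R := R2) (by linarith) (by linarith) Φ Ψ hs
    (M0 := M1) (by linarith) h1b ⟨R1, ⟨by linarith, h12.le⟩, h1c.le⟩
  have hlt : M1 < M2 := by
    refine lt_of_le_of_ne h2a (fun h => ?_)
    have := h2d R1 ⟨by linarith, h12⟩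
    rw [← h, h1c] at this
    exact lt_irrefl _ this
  refine ⟨Φ M1, Ψ M1, Φ M2, Ψ M2, _, _, Real.sqrt_nonneg _, ?_,
    mkProf hW hK (by linarith) (by linarith) (hs M1) h1b h1c h1d,
    mkProf hW hK (by linarith) (by linarith) (hs M2) h2b h2c h2d⟩
  apply Real.sqrt_lt_sqrt
  · have := W_anti hW ⟨le_rfl, zero_le_one⟩ ⟨by linarith, h1b.le⟩ (by linarith : 0 < M1)
    linarith
  · have := W_anti hW ⟨by linarith, h1b.le⟩ ⟨by linarith, h2b.le⟩ hlt
    linarith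

/-- profile rescaled to `[0,ℓ]` with parameter `ε` -/
structure LProf (W : ℝ → ℝ) (ε ℓ : ℝ) (q p : ℝ → ℝ) (s : ℝ) : Prop where
  d1 : ∀ r ∈ Set.Icc 0 ℓ, HasDerivAt q (p r) r
  d2 : ∀ r ∈ Set.Ioo 0 ℓ, HasDerivAt p (deriv W (q r) / ε ^ 2) r
  pos : ∀ r ∈ Set.Ioo 0 ℓ, 0 < q r
  lt_one : ∀ r ∈ Set.Ioo 0 ℓ, q r < 1
  zl : q 0 = 0
  zr : q ℓ = 0
  sl : p 0 = s
  sr : p ℓ = -s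

lemma IsProf.scale {W : ℝ → ℝ} {ε ℓ s : ℝ} (hε : 0 < ε) {φ ψ : ℝ → ℝ}
    (h : IsProf W (ℓ / (2 * ε)) φ ψ s) :
    LProf W ε ℓ (fun r => φ ((r - ℓ / 2) / ε)) (fun r => ψ ((r - ℓ / 2) / ε) / ε) (s / ε) := by
  have e1 : (ℓ - ℓ / 2) / ε = ℓ / (2 * ε) := by field_simp; ring
  have e0 : (0 - ℓ / 2) / ε = - (ℓ / (2 * ε)) := by field_simp; ring
  have hI : ∀ r ∈ Set.Ioo 0 ℓ, (r - ℓ / 2) / ε ∈ Set.Ioo (-(ℓ / (2 * ε))) (ℓ / (2 * ε)) := by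
    intro r hr
    rw [← e0, ← e1]
    exact ⟨div_lt_div_of_pos_right (by linarith [hr.1]) hε,
      div_lt_div_of_pos_right (by linarith [hr.2]) hε⟩
  have hd : ∀ r, HasDerivAt (fun r => (r - ℓ / 2) / ε) (1 / ε) r := fun r =>
    ((hasDerivAt_id r).sub_const _).div_const ε
  refine ⟨?_, ?_, fun r hr => h.pos _ (hI r hr), fun r hr => h.lt_one _ (hI r hr), ?_, ?_, ?_, ?_⟩
  · intro r hr
    have hm : (r - ℓ / 2) / ε ∈ Set.Icc (-(ℓ / (2 * ε))) (ℓ / (2 * ε)) := by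
      rw [← e0, ← e1]
      exact ⟨div_le_div_of_nonneg_right (by linarith [hr.1]) hε.le,
        div_le_div_of_nonneg_right (by linarith [hr.2]) hε.le⟩
    have := HasDerivAt.comp r (h.d1 _ hm) (hd r)
    exact this.congr_deriv (by ring)
  · intro r hr
    have := (HasDerivAt.comp r (h.d2 _ (hI r hr)) (hd r)).div_const ε
    exact this.congr_deriv (by field_simp)
  · simp only [e0, h.zl]
  · simp only [e1, h.zr]
  · simp only [e0, h.sl]
  · simp only [e1, h.sr]; ring

lemma deriv_nonneg_of_right {k : ℝ → ℝ} {d : ℝ} (h : HasDerivAt k d 0) (h0 : k 0 = 0)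
    {δ : ℝ} (hδ : 0 < δ) (hk : ∀ τ, 0 < τ → τ < δ → 0 ≤ k τ) : 0 ≤ d := by
  have h1 := (hasDerivAt_iff_tendsto_slope.1 h).mono_left
    (nhdsWithin_mono 0 (fun x (hx : x ∈ Set.Ioi (0:ℝ)) => ne_of_gt hx))
  apply ge_of_tendsto h1
  filter_upwards [Ioo_mem_nhdsGT hδ] with τ hτ
  rw [slope_def_field, h0, sub_zero, sub_zero]
  exact div_nonneg (hk τ hτ.1 hτ.2) hτ.1.le

lemma deriv_nonpos_of_left {k : ℝ → ℝ} {d : ℝ} (h : HasDerivAt k d 0) (h0 : k 0 = 0)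
    {δ : ℝ} (hδ : 0 < δ) (hk : ∀ τ, 0 < τ → τ < δ → 0 ≤ k (-τ)) : d ≤ 0 := by
  have h' : HasDerivAt k d (-(0:ℝ)) := by simpa using h
  have h1 := HasDerivAt.comp 0 h' (hasDerivAt_neg (0:ℝ))
  have := deriv_nonneg_of_right h1 (by simpa using h0) hδ hk
  linarith

lemma sd_nonneg {f f' : ℝ → ℝ} {a δ : ℝ} (hδ : 0 < δ)
    (hmin : ∀ τ, |τ| < δ → f 0 ≤ f τ) (h1 : ∀ τ, |τ| < δ → HasDerivAt f (f' τ) τ)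
    (h2 : HasDerivAt f' a 0) : 0 ≤ a := by
  have hev : ∀ᶠ τ in nhds (0:ℝ), |τ| < δ := by
    have := Metric.ball_mem_nhds (0:ℝ) hδ
    filter_upwards [this] with τ hτ
    simpa [Real.dist_eq] using hτ
  have hm : IsLocalMin f 0 := hev.mono hmin
  have h00 : |(0:ℝ)| < δ := by simpa using hδ
  by_contra hneg
  push Not at hneg
  have hde : deriv f =ᶠ[nhds 0] f' := hev.mono fun τ hτ => (h1 τ hτ).deriv
  have hdd : deriv (deriv f) 0 = a := by rw [hde.deriv_eq, h2.deriv]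
  have hM := isLocalMax_of_deriv_deriv_neg (f := f) (x₀ := 0) (by rw [hdd]; exact hneg)
    hm.deriv_eq_zero (h1 0 h00).continuousAt
  have hconst : f =ᶠ[nhds 0] fun _ => f 0 := by
    filter_upwards [hm, hM] with τ h3 h4
    exact le_antisymm h4 h3
  have : deriv (deriv f) 0 = 0 := by
    have h5 := hconst.deriv
    rw [h5.deriv_eq]
    simp
  linarith

variable {n : ℕ}

lemma line_smooth {u : EuclideanSpace ℝ (Fin (n + 1)) → ℝ} (hu : ContDiff ℝ (⊤ : ℕ∞) u)
    (x : EuclideanSpace ℝ (Fin (n + 1))) (j : Fin (n + 1)) :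
    ∃ w' : ℝ → ℝ, (∀ τ, HasDerivAt (fun t : ℝ => u (x + t • EuclideanSpace.single j 1)) (w' τ) τ) ∧
      HasDerivAt w' (secondDirDeriv u x j) 0 := by
  set w : ℝ → ℝ := fun t : ℝ => u (x + t • EuclideanSpace.single j 1) with hw
  have hc : ContDiff ℝ 2 w := by
    have h2 : ContDiff ℝ 2 u := contDiff_infty.1 hu 2
    apply h2.comp
    fun_prop
  refine ⟨deriv w, fun τ => (hc.differentiable (by norm_num) τ).hasDerivAt, ?_⟩
  have hc1 : ContDiff ℝ 1 (deriv w) := by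
    apply ContDiff.deriv'
    exact hc.of_le (by norm_num)
  have := (hc1.differentiable (by norm_num) 0).hasDerivAt
  have e : secondDirDeriv u x j = deriv (deriv w) 0 := by
    unfold secondDirDeriv
    rw [iteratedDeriv_succ, iteratedDeriv_one]
  rw [e]; exact this

/-- Laplacian comparison at a touching point. -/
lemma lap_le {u : EuclideanSpace ℝ (Fin (n + 1)) → ℝ} (hu : ContDiff ℝ (⊤ : ℕ∞) u)
    (x : EuclideanSpace ℝ (Fin (n + 1))) {F F' : ℝ → ℝ} {F2 δ : ℝ} (hδ : 0 < δ)
    (hF1 : ∀ τ, |τ| < δ → HasDerivAt F (F' τ) τ) (hF2 : HasDerivAt F' F2 0)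
    (hF0 : F 0 = u x)
    (hle : ∀ τ, |τ| < δ → u (x + τ • EuclideanSpace.single 0 1) ≤ F τ)
    (hy : ∀ j : Fin (n + 1), j ≠ 0 → ∀ τ : ℝ, u (x + τ • EuclideanSpace.single j 1) ≤ u x) :
    lap u x ≤ F2 := by
  unfold lap
  rw [Fin.sum_univ_succ]
  have h0 : secondDirDeriv u x 0 ≤ F2 := by
    obtain ⟨w', h1, h2⟩ := line_smooth hu x 0
    have := sd_nonneg (f := fun τ => F τ - u (x + τ • EuclideanSpace.single 0 1))
      (f' := fun τ => F' τ - w' τ) hδ (fun τ hτ => by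
        simp only [zero_smul, add_zero, hF0, sub_self]
        linarith [hle τ hτ]) (fun τ hτ => (hF1 τ hτ).sub (h1 τ)) (hF2.sub h2)
    linarith
  have hj : ∀ j : Fin n, secondDirDeriv u x j.succ ≤ 0 := by
    intro j
    obtain ⟨w', h1, h2⟩ := line_smooth hu x j.succ
    have := sd_nonneg (f := fun τ => - u (x + τ • EuclideanSpace.single j.succ 1))
      (f' := fun τ => - w' τ) one_pos (fun τ hτ => by
        simp only [zero_smul, add_zero]
        linarith [hy j.succ (Fin.succ_ne_zero j) τ]) (fun τ hτ => (h1 τ).neg) (h2.neg)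
    linarith
  have := Finset.sum_nonpos (s := Finset.univ) (fun j _ => hj j)
  linarith

/-- comparison function -/
noncomputable def Q (q1 q2 : ℝ → ℝ) (l1 t t' r : ℝ) : ℝ :=
  t * q1 (min r 0 + l1) - t' * q2 (max r 0)

lemma Q_left {q1 q2 : ℝ → ℝ} {l1 t t' r : ℝ} (h2 : q2 0 = 0) (hr : r ≤ 0) :
    Q q1 q2 l1 t t' r = t * q1 (r + l1) := by
  simp [Q, min_eq_left hr, max_eq_right hr, h2]

lemma Q_right {q1 q2 : ℝ → ℝ} {l1 t t' r : ℝ} (h1 : q1 l1 = 0) (hr : 0 ≤ r) :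
    Q q1 q2 l1 t t' r = - (t' * q2 r) := by
  simp [Q, min_eq_right hr, max_eq_left hr, h1]

lemma coord_ne {j : Fin (n + 1)} (hj : j ≠ 0) (x : EuclideanSpace ℝ (Fin (n + 1))) (τ : ℝ) :
    (x + τ • EuclideanSpace.single j (1:ℝ)) 0 = x 0 := by
  simp [hj.symm]

lemma coord_zero (x : EuclideanSpace ℝ (Fin (n + 1))) (τ : ℝ) :
    (x + τ • EuclideanSpace.single (0 : Fin (n + 1)) (1:ℝ)) 0 = x 0 + τ := by
  simp

lemma no_touch {W : ℝ → ℝ} (hW : IsDoubleWell W) {ε : ℝ} (hε : 0 < ε)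
    {u : EuclideanSpace ℝ (Fin (n + 1)) → ℝ} (hu : IsPhaseTransitionTorus W ε u)
    {l1 l2 s1 s2 : ℝ} (hl1 : 0 < l1) (hl2 : 0 < l2) {q1 p1 q2 p2 : ℝ → ℝ} (P1 : LProf W ε l1 q1 p1 s1)
    (P2 : LProf W ε l2 q2 p2 s2) (hs1 : 0 ≤ s1) {t t' z : ℝ} (ht : 1 < t) (ht0 : 0 ≤ t') (ht1 : t' < 1)
    (hends : ∀ x : EuclideanSpace ℝ (Fin (n + 1)), x 0 = z - l1 ∨ x 0 = z + l2 → u x < 0)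
    (halt : (∀ x : EuclideanSpace ℝ (Fin (n + 1)), x 0 - z ∈ Set.Icc 0 l2 → u x < 0) ∨
      t * s1 < t' * s2)
    (hD : ∀ x : EuclideanSpace ℝ (Fin (n + 1)), x 0 - z ∈ Set.Icc (-l1) l2 →
      u x ≤ Q q1 q2 l1 t t' (x 0 - z))
    (x : EuclideanSpace ℝ (Fin (n + 1))) (hx : x 0 - z ∈ Set.Icc (-l1) l2)
    (hz : u x = Q q1 q2 l1 t t' (x 0 - z)) : False := by
  set r := x 0 - z with hr
  have hy : ∀ j : Fin (n + 1), j ≠ 0 → ∀ τ : ℝ, u (x + τ • EuclideanSpace.single j 1) ≤ u x := by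
    intro j hj τ
    have := hD (x + τ • EuclideanSpace.single j 1)
    rw [coord_ne hj] at this
    rw [hz]; exact this hx
  have hx0 : ∀ τ : ℝ, r + τ ∈ Set.Icc (-l1) l2 →
      u (x + τ • EuclideanSpace.single 0 1) ≤ Q q1 q2 l1 t t' (r + τ) := by
    intro τ hτ
    have := hD (x + τ • EuclideanSpace.single 0 1)
    rw [coord_zero, show x 0 + τ - z = r + τ by rw [hr]; ring] at this
    exact this hτ
  rcases hx.1.eq_or_lt with hA | hA
  · have := hends x (Or.inl (by linarith))
    rw [hz, Q_left P2.zl (by linarith), ← hA] at this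
    simp [P1.zl] at this
  rcases hx.2.eq_or_lt with hB | hB
  · have := hends x (Or.inr (by linarith))
    rw [hz, Q_right P1.zr (by linarith), hB] at this
    simp [P2.zr] at this
  rcases lt_trichotomy r 0 with hr0 | hr0 | hr0
  · -- left interior
    rw [Q_left P2.zl hr0.le] at hz
    have hm : r + l1 ∈ Set.Ioo 0 l1 := ⟨by linarith, by linarith⟩
    set δ := min (-r) (r + l1) with hδ
    have hδ0 : 0 < δ := lt_min (by linarith) (by linarith)
    have hτm : ∀ τ, |τ| < δ → r + τ < 0 ∧ 0 < r + τ + l1 := by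
      intro τ hτ
      have h1 := lt_of_lt_of_le hτ (min_le_left _ _)
      have h2 := lt_of_lt_of_le hτ (min_le_right _ _)
      rw [abs_lt] at h1 h2
      exact ⟨by linarith [h1.2], by linarith [h2.1]⟩
    have hshift : ∀ τ, HasDerivAt (fun τ => r + τ + l1) 1 τ := fun τ =>
      ((hasDerivAt_id τ).const_add r).add_const l1
    have hlap := lap_le hu.smooth x (F := fun τ => t * q1 (r + τ + l1))
      (F' := fun τ => t * p1 (r + τ + l1)) (F2 := t * (deriv W (q1 (r + l1)) / ε ^ 2)) hδ0
      (fun τ hτ => by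
        obtain ⟨h1, h2⟩ := hτm τ hτ
        have := (HasDerivAt.comp τ (P1.d1 (r + τ + l1) ⟨h2.le, by linarith⟩) (hshift τ)).const_mul t
        exact this.congr_deriv (by ring))
      (by
        have h3 := P1.d2 (r + 0 + l1) (by simpa using hm)
        have := (HasDerivAt.comp 0 h3 (hshift 0)).const_mul t
        exact this.congr_deriv (by rw [add_zero]; ring))
      (by simp [hz])
      (fun τ hτ => by
        obtain ⟨h1, h2⟩ := hτm τ hτ
        have := hx0 τ ⟨by linarith, by linarith⟩
        rwa [Q_left P2.zl h1.le] at this) hy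
    have hpde := hu.pde x
    have hε2 : 0 < ε ^ 2 := by positivity
    have h5 : deriv W (u x) ≤ t * deriv W (q1 (r + l1)) := by
      rw [← hpde]
      calc ε ^ 2 * lap u x ≤ ε ^ 2 * (t * (deriv W (q1 (r + l1)) / ε ^ 2)) :=
            mul_le_mul_of_nonneg_left hlap hε2.le
        _ = _ := by field_simp
    have hq := P1.pos _ hm
    have hq1 := P1.lt_one _ hm
    have hle1 := (hu.mem_Icc x).2
    set a := q1 (r + l1)
    have hlt : a < u x := by rw [hz]; nlinarith
    rcases hle1.eq_or_lt with h6 | h6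
    · rw [h6, dW_one hW] at h5
      have := dW_neg hW hq hq1
      nlinarith
    · have := dW_ratio_lt hW hq hlt h6
      rw [hz] at this h5
      have h7 : a * (t * deriv W a) < a * deriv W (t * a) := by linarith
      have := lt_of_mul_lt_mul_left h7 hq.le
      linarith
  · -- kink
    rw [Q_left P2.zl hr0.le, hr0, zero_add, P1.zr, mul_zero] at hz
    rcases halt with hneg | hsl
    · have := hneg x ⟨by linarith, by linarith⟩
      linarith
    obtain ⟨w', hw, -⟩ := line_smooth hu.smooth x 0
    have hR := deriv_nonneg_of_right
      (k := fun τ => - (t' * q2 τ) - u (x + τ • EuclideanSpace.single 0 1))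
      ((((P2.d1 0 ⟨le_rfl, hl2.le⟩).const_mul t').neg).sub (hw 0)) (by simp [hz, P2.zl])
      hl2 (fun τ h0 h1 => by
        have := hx0 τ ⟨by linarith, by linarith⟩
        rw [hr0, zero_add, Q_right P1.zr h0.le] at this
        linarith)
    have hshift : HasDerivAt (fun τ => τ + l1) 1 0 := (hasDerivAt_id (0:ℝ)).add_const l1
    have h3 := P1.d1 (0 + l1) ⟨by linarith, by linarith⟩
    have hL := deriv_nonpos_of_left
      (k := fun τ => t * q1 (τ + l1) - u (x + τ • EuclideanSpace.single 0 1))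
      (((HasDerivAt.comp 0 h3 hshift).const_mul t).sub (hw 0)) (by simp [hz, P1.zr])
      hl1 (fun τ h0 h1 => by
        have := hx0 (-τ) ⟨by linarith, by linarith⟩
        rw [hr0, zero_add, Q_left P2.zl (by linarith)] at this
        linarith)
    rw [zero_add, P1.sr] at hL
    rw [P2.sl] at hR
    linarith
  · -- right interior
    rw [Q_right P1.zr hr0.le] at hz
    have hm : r ∈ Set.Ioo 0 l2 := ⟨hr0, hB⟩
    have hq := P2.pos _ hm
    have hq1 := P2.lt_one _ hm
    have ht'pos : 0 < t' := by
      rcases halt with h | h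
      · have := h x ⟨hr0.le, hB.le⟩
        rw [hz] at this
        by_contra hc
        have : t' = 0 := le_antisymm (not_lt.1 hc) ht0
        subst this
        simp at this
      · have : 0 ≤ t * s1 := mul_nonneg (by linarith) hs1
        by_contra hc
        have : t' = 0 := le_antisymm (not_lt.1 hc) ht0
        subst this
        linarith
    set δ := min r (l2 - r) with hδ
    have hδ0 : 0 < δ := lt_min (by linarith) (by linarith)
    have hτm : ∀ τ, |τ| < δ → 0 < r + τ ∧ r + τ < l2 := by
      intro τ hτ
      have h1 := lt_of_lt_of_le hτ (min_le_left _ _)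
      have h2 := lt_of_lt_of_le hτ (min_le_right _ _)
      rw [abs_lt] at h1 h2
      exact ⟨by linarith [h1.1], by linarith [h2.2]⟩
    have hshift : ∀ τ, HasDerivAt (fun τ => r + τ) 1 τ := fun τ =>
      ((hasDerivAt_id τ).const_add r)
    have hlap := lap_le hu.smooth x (F := fun τ => - (t' * q2 (r + τ)))
      (F' := fun τ => - (t' * p2 (r + τ))) (F2 := - (t' * (deriv W (q2 r) / ε ^ 2))) hδ0
      (fun τ hτ => by
        obtain ⟨h1, h2⟩ := hτm τ hτ
        have := ((HasDerivAt.comp τ (P2.d1 (r + τ) ⟨h1.le, h2.le⟩) (hshift τ)).const_mul t').neg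
        exact this.congr_deriv (by ring))
      (by
        have h3 := P2.d2 (r + 0) (by simpa using hm)
        have := ((HasDerivAt.comp 0 h3 (hshift 0)).const_mul t').neg
        exact this.congr_deriv (by rw [add_zero]; ring))
      (by simp [hz])
      (fun τ hτ => by
        obtain ⟨h1, h2⟩ := hτm τ hτ
        have := hx0 τ ⟨by linarith, by linarith⟩
        rwa [Q_right P1.zr h1.le] at this) hy
    have hpde := hu.pde x
    have hε2 : 0 < ε ^ 2 := by positivity
    have h5 : deriv W (u x) ≤ - (t' * deriv W (q2 r)) := by
      rw [← hpde]
      calc ε ^ 2 * lap u x ≤ ε ^ 2 * (- (t' * (deriv W (q2 r) / ε ^ 2))) :=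
            mul_le_mul_of_nonneg_left hlap hε2.le
        _ = _ := by field_simp
    set a := q2 r
    rw [hz, dW_odd hW] at h5
    have hlt : t' * a < a := by nlinarith
    have := dW_ratio_lt hW (mul_pos ht'pos hq) hlt hq1
    have h7 : a * deriv W (t' * a) < a * (t' * deriv W a) := by linarith
    have := lt_of_mul_lt_mul_left h7 hq.le
    linarith

lemma first_touch {X : Type*} [TopologicalSpace X] [T2Space X] {K : Set X} (hK : IsCompact K) {D : ℝ → X → ℝ}
    (hc : ContinuousOn (fun p : ℝ × X => D p.1 p.2) (Set.Icc 0 1 ×ˢ K))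
    (h0 : ∀ p ∈ K, 0 < D 0 p)
    (hno : ∀ σ ∈ Set.Icc (0:ℝ) 1, (∀ p ∈ K, 0 ≤ D σ p) → ∀ p ∈ K, D σ p ≠ 0) :
    ∀ p ∈ K, 0 < D 1 p := by
  intro p1 hp1
  by_contra hcon
  push Not at hcon
  set B : Set (ℝ × X) := (Set.Icc 0 1 ×ˢ K) ∩ (fun p : ℝ × X => D p.1 p.2) ⁻¹' Set.Iic 0
  have hB : IsCompact B := by
    apply (isCompact_Icc.prod hK).of_isClosed_subset _ Set.inter_subset_left
    exact hc.preimage_isClosed_of_isClosed (isClosed_Icc.prod hK.isClosed) isClosed_Iic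
  have hBne : B.Nonempty := ⟨(1, p1), ⟨⟨⟨zero_le_one, le_rfl⟩, hp1⟩, hcon⟩⟩
  obtain ⟨⟨σ, p⟩, ⟨⟨hσ, hp⟩, hle⟩, hmin⟩ := hB.exists_isMinOn hBne continuous_fst.continuousOn
  simp only at hσ hp
  simp only [Set.mem_preimage, Set.mem_Iic] at hle
  have hbelow : ∀ σ' ∈ Set.Ico 0 σ, ∀ p' ∈ K, 0 < D σ' p' := by
    intro σ' hσ' p' hp'
    by_contra hh
    push Not at hh
    have hm : (σ', p') ∈ B := ⟨⟨⟨hσ'.1, by linarith [hσ'.2, hσ.2]⟩, hp'⟩, hh⟩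
    have := hmin hm
    simp only [Set.mem_ofPred_eq] at this
    linarith [hσ'.2]
  have hσ0 : 0 < σ := by
    rcases hσ.1.eq_or_lt with h | h
    · rw [← h] at hle
      linarith [h0 p hp]
    · exact h
  have hnn : ∀ p' ∈ K, 0 ≤ D σ p' := by
    intro p' hp'
    have hc' : ContinuousWithinAt (fun σ' => D σ' p') (Set.Ico 0 σ) σ := by
      have h1 := hc (σ, p') ⟨hσ, hp'⟩
      have h2 : ContinuousWithinAt (fun σ' : ℝ => (σ', p')) (Set.Ico 0 σ) σ := by fun_prop
      exact ContinuousWithinAt.comp (f := fun σ' : ℝ => (σ', p')) h1 h2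
        (fun σ' hσ' => ⟨⟨hσ'.1, by linarith [hσ'.2, hσ.2]⟩, hp'⟩)
    have hne : (nhdsWithin σ (Set.Ico 0 σ)).NeBot := by
      rw [nhdsWithin_Ico_eq_nhdsLT hσ0]; infer_instance
    apply ge_of_tendsto hc'
    filter_upwards [self_mem_nhdsWithin] with σ' hσ'
    exact (hbelow σ' hσ' p' hp').le
  exact hno σ hσ hnn p hp (le_antisymm hle (hnn p hp))

/-- lattice constants -/
noncomputable def per (j : Fin (n + 1)) : ℝ := if j = 0 then 2 * π else 1

lemma per_pos (j : Fin (n + 1)) : 0 < per j := by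
  unfold per; split_ifs <;> positivity

lemma per_le (j : Fin (n + 1)) : per j ≤ 2 * π := by
  unfold per; split_ifs
  · exact le_rfl
  · linarith [Real.pi_gt_three]

lemma u_periodic {W : ℝ → ℝ} {ε : ℝ}
    {u : EuclideanSpace ℝ (Fin (n + 1)) → ℝ} (hu : IsPhaseTransitionTorus W ε u)
    (k : Fin (n + 1) → ℤ) (x : EuclideanSpace ℝ (Fin (n + 1))) :
    u (x + WithLp.toLp 2 (fun j => (k j : ℝ) * per j)) = u x := by
  have h1 : ∀ j, Function.Periodic u (k j • (per j • EuclideanSpace.single j (1:ℝ))) := by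
    intro j
    apply Function.Periodic.zsmul
    intro y
    unfold per
    split_ifs with h
    · subst h; exact hu.periodic_first y
    · rw [one_smul]; exact hu.periodic_rest j h y
  have h2 : ∀ s : Finset (Fin (n + 1)),
      Function.Periodic u (∑ j ∈ s, k j • (per j • EuclideanSpace.single j (1:ℝ))) := by
    intro s
    induction s using Finset.induction_on with
    | empty => intro y; simp
    | insert a s ha ih =>
      rw [Finset.sum_insert ha]
      exact (h1 a).add_period ih
  have e : (WithLp.toLp 2 (fun j => (k j : ℝ) * per j) : EuclideanSpace ℝ (Fin (n + 1))) =
      ∑ j, k j • (per j • EuclideanSpace.single j (1:ℝ)) := by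
    ext i
    simp [Finset.sum_apply, Pi.single_apply]
    ring
  rw [e]
  exact h2 Finset.univ x

lemma reduce {W : ℝ → ℝ} {ε : ℝ}
    {u : EuclideanSpace ℝ (Fin (n + 1)) → ℝ} (hu : IsPhaseTransitionTorus W ε u)
    (x : EuclideanSpace ℝ (Fin (n + 1))) :
    ∃ p : EuclideanSpace ℝ (Fin (n + 1)), p 0 = x 0 ∧ (∀ j, j ≠ 0 → p j ∈ Set.Icc (0:ℝ) 1) ∧
      ∀ v, u (p + v) = u (x + v) := by
  refine ⟨x + WithLp.toLp 2 (fun j => ((if j = 0 then 0 else -⌊x j⌋ : ℤ) : ℝ) * per j), ?_, ?_, ?_⟩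
  · simp
  · intro j hj
    simp only [PiLp.add_apply, hj, if_false, per, mul_one, Int.cast_neg]
    exact ⟨by linarith [Int.floor_le (x j)], by linarith [Int.lt_floor_add_one (x j)]⟩
  · intro v
    have := u_periodic hu (fun j => (if j = 0 then 0 else -⌊x j⌋ : ℤ)) (x + v)
    rw [← this]
    congr 1
    abel

lemma near {W : ℝ → ℝ} {ε : ℝ}
    {u : EuclideanSpace ℝ (Fin (n + 1)) → ℝ} (hu : IsPhaseTransitionTorus W ε u)
    (x y : EuclideanSpace ℝ (Fin (n + 1))) :
    ∃ p : EuclideanSpace ℝ (Fin (n + 1)), u p = u x ∧ ∀ j, |p j - y j| ≤ 2 * π := by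
  refine ⟨x + WithLp.toLp 2 (fun j => ((-⌊(x j - y j) / per j⌋ : ℤ) : ℝ) * per j),
    u_periodic hu _ x, fun j => ?_⟩
  simp only [PiLp.add_apply, Int.cast_neg]
  have h1 := Int.floor_le ((x j - y j) / per j)
  have h2 := Int.lt_floor_add_one ((x j - y j) / per j)
  rw [le_div_iff₀ (per_pos j)] at h1
  rw [div_lt_iff₀ (per_pos j)] at h2
  have := per_le j
  rw [abs_le]
  constructor <;> nlinarith [per_pos j]

lemma box_compact (a b : ℝ) : IsCompact {p : EuclideanSpace ℝ (Fin (n + 1)) |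
    p 0 ∈ Set.Icc a b ∧ ∀ j, j ≠ 0 → p j ∈ Set.Icc (0:ℝ) 1} := by
  have h : IsCompact (Set.pi Set.univ
      (fun j : Fin (n + 1) => if j = 0 then Set.Icc a b else Set.Icc (0:ℝ) 1)) := by
    apply isCompact_univ_pi
    intro j
    split_ifs <;> exact isCompact_Icc
  have h2 := h.image (PiLp.continuous_toLp 2 (fun _ : Fin (n + 1) => ℝ))
  convert h2 using 1
  ext p
  simp only [Set.mem_ofPred_eq, Set.mem_image, Set.mem_pi, Set.mem_univ, true_imp_iff]
  constructor
  · intro hp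
    refine ⟨p.ofLp, fun j => ?_, rfl⟩
    split_ifs with hj
    · subst hj; exact hp.1
    · exact hp.2 j hj
  · rintro ⟨q, hq, rfl⟩
    refine ⟨by simpa using hq 0, fun j hj => by simpa [hj] using hq j⟩

lemma stage {W : ℝ → ℝ} (hW : IsDoubleWell W) {ε : ℝ} (hε : 0 < ε)
    {u : EuclideanSpace ℝ (Fin (n + 1)) → ℝ} (hu : IsPhaseTransitionTorus W ε u)
    {l1 l2 s1 s2 : ℝ} (hl1 : 0 < l1) (hl2 : 0 < l2) {q1 p1 q2 p2 : ℝ → ℝ} (P1 : LProf W ε l1 q1 p1 s1)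
    (P2 : LProf W ε l2 q2 p2 s2) (hs1 : 0 ≤ s1) (T T' ζ : ℝ → ℝ)
    (hTc : Continuous T) (hTc' : Continuous T') (hζc : Continuous ζ)
    (hT : ∀ σ ∈ Set.Icc (0:ℝ) 1, 1 < T σ) (hT0 : ∀ σ ∈ Set.Icc (0:ℝ) 1, 0 ≤ T' σ)
    (hT1 : ∀ σ ∈ Set.Icc (0:ℝ) 1, T' σ < 1)
    (hends : ∀ σ ∈ Set.Icc (0:ℝ) 1, ∀ x : EuclideanSpace ℝ (Fin (n + 1)),
      x 0 = ζ σ - l1 ∨ x 0 = ζ σ + l2 → u x < 0)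
    (halt : ∀ σ ∈ Set.Icc (0:ℝ) 1,
      (∀ x : EuclideanSpace ℝ (Fin (n + 1)), x 0 - ζ σ ∈ Set.Icc 0 l2 → u x < 0) ∨
      T σ * s1 < T' σ * s2)
    (hinit : ∀ x : EuclideanSpace ℝ (Fin (n + 1)), x 0 - ζ 0 ∈ Set.Icc (-l1) l2 →
      u x < Q q1 q2 l1 (T 0) (T' 0) (x 0 - ζ 0)) :
    ∀ x : EuclideanSpace ℝ (Fin (n + 1)), x 0 - ζ 1 ∈ Set.Icc (-l1) l2 →
      u x < Q q1 q2 l1 (T 1) (T' 1) (x 0 - ζ 1) := by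
  set K := {p : EuclideanSpace ℝ (Fin (n + 1)) |
    p 0 ∈ Set.Icc (-l1) l2 ∧ ∀ j, j ≠ 0 → p j ∈ Set.Icc (0:ℝ) 1} with hKdef
  have hK : IsCompact K := box_compact (-l1) l2
  let e0 : EuclideanSpace ℝ (Fin (n + 1)) := EuclideanSpace.single 0 (1:ℝ)
  let D : ℝ → EuclideanSpace ℝ (Fin (n + 1)) → ℝ := fun σ p =>
    Q q1 q2 l1 (T σ) (T' σ) (p 0) - u (p + ζ σ • e0)
  have hred : ∀ σ, ∀ x : EuclideanSpace ℝ (Fin (n + 1)), x 0 - ζ σ ∈ Set.Icc (-l1) l2 →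
      ∃ p ∈ K, D σ p = Q q1 q2 l1 (T σ) (T' σ) (x 0 - ζ σ) - u x := by
    intro σ x hx
    obtain ⟨p, hp0, hpj, hpv⟩ := reduce hu (x + (-ζ σ) • e0)
    have hp0' : p 0 = x 0 - ζ σ := by rw [hp0, coord_zero]; ring
    refine ⟨p, ⟨by rw [hp0']; exact hx, hpj⟩, ?_⟩
    simp only [D]
    rw [hp0', hpv]
    congr 2
    rw [add_assoc, ← add_smul]; simp
  have hc0 : ∀ p : EuclideanSpace ℝ (Fin (n + 1)), ∀ σ, (p + ζ σ • e0) 0 - ζ σ = p 0 := by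
    intro p σ; rw [coord_zero]; ring
  have key : ∀ p ∈ K, 0 < D 1 p := by
    apply first_touch hK
    · have hq1 : ContinuousOn q1 (Set.Icc 0 l1) := fun r hr =>
        (P1.d1 r hr).continuousAt.continuousWithinAt
      have hq2 : ContinuousOn q2 (Set.Icc 0 l2) := fun r hr =>
        (P2.d1 r hr).continuousAt.continuousWithinAt
      have hcu : Continuous u := hu.smooth.continuous
      have hp0 : Continuous (fun p : ℝ × EuclideanSpace ℝ (Fin (n + 1)) => p.2 0) := by fun_prop
      have h1 : ContinuousOn (fun p : ℝ × EuclideanSpace ℝ (Fin (n + 1)) => q1 (min (p.2 0) 0 + l1))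
          (Set.Icc 0 1 ×ˢ K) := by
        apply hq1.comp (by fun_prop)
        intro p hp
        have := hp.2.1
        exact ⟨by linarith [le_min this.1 (by linarith : -l1 ≤ 0)], by linarith [min_le_right (p.2 0) 0]⟩
      have h2 : ContinuousOn (fun p : ℝ × EuclideanSpace ℝ (Fin (n + 1)) => q2 (max (p.2 0) 0))
          (Set.Icc 0 1 ×ˢ K) := by
        apply hq2.comp (by fun_prop)
        intro p hp
        have := hp.2.1
        exact ⟨le_max_right _ _, max_le this.2 hl2.le⟩
      have h3 : Continuous (fun p : ℝ × EuclideanSpace ℝ (Fin (n + 1)) => u (p.2 + ζ p.1 • e0)) := by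
        fun_prop
      have h4 : Continuous (fun p : ℝ × EuclideanSpace ℝ (Fin (n + 1)) => T p.1) := by fun_prop
      have h5 : Continuous (fun p : ℝ × EuclideanSpace ℝ (Fin (n + 1)) => T' p.1) := by fun_prop
      exact ((h4.continuousOn.mul h1).sub (h5.continuousOn.mul h2)).sub h3.continuousOn
    · intro p hp
      have := hinit (p + ζ 0 • e0) (by rw [hc0]; exact hp.1)
      rw [hc0] at this
      simp only [D]; linarith
    · intro σ hσ hnn p hp hzero
      refine no_touch hW hε hu hl1 hl2 P1 P2 hs1 (hT σ hσ) (hT0 σ hσ) (hT1 σ hσ) (hends σ hσ)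
        (halt σ hσ) ?_ (p + ζ σ • e0) (by rw [hc0]; exact hp.1) ?_
      · intro x hx
        obtain ⟨p', hp', he⟩ := hred σ x hx
        have := hnn p' hp'
        rw [he] at this
        linarith
      · rw [hc0]
        simp only [D] at hzero
        linarith
  intro x hx
  obtain ⟨p, hp, he⟩ := hred 1 x hx
  have := key p hp
  rw [he] at this
  linarith

set_option maxHeartbeats 2000000 in
/-- The key lemma: a negative phase cannot persist on two sides of a thinner slab, next to a
zero. -/
lemma keyK {W : ℝ → ℝ} (hW : IsDoubleWell W) {a0 a b c : ℝ} (h0 : a0 < a) (h1 : a ≤ b)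
    (h2 : b - a < c - b) :
    ∃ δ0 > 0, ∃ ε0 > 0, ∀ δ, 0 < δ → δ ≤ δ0 → ∀ ε, 0 < ε → ε < ε0 →
      ∀ u : EuclideanSpace ℝ (Fin (n + 1)) → ℝ, IsPhaseTransitionTorus W ε u →
      (∀ x, x 0 ∈ Set.Icc (a0 + δ) (a - δ) → u x < 0) →
      (∀ x, x 0 ∈ Set.Icc (b + δ) (c - δ) → u x < 0) →
      ∀ x, |x 0 - b| ≤ δ → u x ≠ 0 := by
  obtain ⟨R0, hR0, hprof⟩ := profiles hW
  obtain ⟨η, hη, hη1, hη2⟩ : ∃ η > 0, 4 * η ≤ c - b - (b - a) ∧ 4 * η ≤ a - a0 := by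
    refine ⟨min (c - b - (b - a)) (a - a0) / 4, ?_, ?_, ?_⟩
    · have : 0 < min (c - b - (b - a)) (a - a0) := lt_min (by linarith) (by linarith)
      linarith
    · linarith [min_le_left (c - b - (b - a)) (a - a0)]
    · linarith [min_le_right (c - b - (b - a)) (a - a0)]
  obtain ⟨l1, hl1⟩ : ∃ l1, l1 = b - a + η := ⟨_, rfl⟩
  obtain ⟨l2, hl2⟩ : ∃ l2, l2 = b - a + 2 * η := ⟨_, rfl⟩
  have hl1p : 0 < l1 := by linarith
  have hl2p : 0 < l2 := by linarith
  refine ⟨η / 4, by linarith, l1 / (2 * R0), by positivity, ?_⟩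
  intro δ hδ hδ0 ε hε hε0 u hu hL hR x hx hux
  have hR1 : R0 ≤ l1 / (2 * ε) := by
    rw [lt_div_iff₀ (by positivity)] at hε0
    rw [le_div_iff₀ (by positivity)]
    nlinarith
  obtain ⟨φ1, ψ1, φ2, ψ2, s1, s2, hs1, hs12, P1, P2⟩ := hprof (l1 / (2 * ε)) (l2 / (2 * ε)) hR1
    (div_lt_div_of_pos_right (by linarith) (by positivity))
  have P1 := P1.scale hε
  have P2 := P2.scale hε
  have hs1 : 0 ≤ s1 / ε := by positivity
  have hs12 : s1 / ε < s2 / ε := div_lt_div_of_pos_right hs12 hε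
  generalize s1 / ε = σ1 at *
  generalize s2 / ε = σ2 at *
  generalize (fun r => φ1 ((r - l1 / 2) / ε)) = q1 at *
  generalize (fun r => φ2 ((r - l2 / 2) / ε)) = q2 at *
  generalize (fun r => ψ1 ((r - l1 / 2) / ε) / ε) = p1 at *
  generalize (fun r => ψ2 ((r - l2 / 2) / ε) / ε) = p2 at *
  obtain ⟨κ, hκ, hκ1, hκs⟩ : ∃ κ > 0, κ < 1 ∧ (1 + κ) * σ1 < (1 - κ) * σ2 := by
    have hpos : 0 < σ1 + σ2 := by linarith
    refine ⟨(σ2 - σ1) / (2 * (σ1 + σ2)), div_pos (by linarith) (by linarith), ?_, ?_⟩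
    · rw [div_lt_one (by linarith)]; linarith
    · have e : (σ2 - σ1) / (2 * (σ1 + σ2)) * (σ1 + σ2) = (σ2 - σ1) / 2 := by field_simp
      nlinarith
  -- lower bound for the left profile
  obtain ⟨c0, hc0, hq1⟩ : ∃ c0 > 0, ∀ r ∈ Set.Icc (η - 3 * δ) (l1 - δ), c0 ≤ q1 r := by
    have hne : (Set.Icc (η - 3 * δ) (l1 - δ)).Nonempty :=
      ⟨η - 3 * δ, le_rfl, by linarith⟩
    have hin : ∀ r ∈ Set.Icc (η - 3 * δ) (l1 - δ), r ∈ Set.Ioo 0 l1 := fun r hr =>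
      ⟨by linarith [hr.1], by linarith [hr.2]⟩
    have hcont : ContinuousOn q1 (Set.Icc (η - 3 * δ) (l1 - δ)) := fun r hr =>
      (P1.d1 r (Set.Ioo_subset_Icc_self (hin r hr))).continuousAt.continuousWithinAt
    obtain ⟨r0, hr0, hmin⟩ := isCompact_Icc.exists_isMinOn hne hcont
    exact ⟨q1 r0, P1.pos _ (hin _ hr0), fun r hr => hmin hr⟩
  obtain ⟨Tb, hTb, hTbc⟩ : ∃ Tb, 1 < Tb ∧ 1 < Tb * c0 := by
    refine ⟨2 + 2 / c0, ?_, ?_⟩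
    · have : 0 < 2 / c0 := by positivity
      linarith
    · have : (2 + 2 / c0) * c0 = 2 * c0 + 2 := by field_simp
      linarith
  have hq1nn : ∀ r ∈ Set.Icc 0 l1, 0 ≤ q1 r := by
    intro r hr
    rcases hr.1.eq_or_lt with h | h
    · rw [← h, P1.zl]
    rcases hr.2.eq_or_lt with h' | h'
    · rw [h', P1.zr]
    exact (P1.pos r ⟨h, h'⟩).le
  have st1 := stage hW hε hu hl1p hl2p P1 P2 hs1
    (fun σ => (1 - σ) * Tb + σ * (1 + κ)) (fun σ => σ * (1 - κ)) (fun _ => b + 2 * δ)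
    (by fun_prop) (by fun_prop) (by fun_prop)
    (by rintro σ ⟨h, h'⟩
        show 1 < (1 - σ) * Tb + σ * (1 + κ)
        rcases h.eq_or_lt with h | h
        · rw [← h]; linarith
        · nlinarith [mul_pos h hκ, mul_nonneg (sub_nonneg.2 h') (by linarith : 0 ≤ Tb - 1)])
    (by rintro σ ⟨h, h'⟩
        exact mul_nonneg h (by linarith))
    (by rintro σ ⟨h, h'⟩
        show σ * (1 - κ) < 1
        nlinarith)
    (by rintro σ - y (hy | hy)
        · exact hL y ⟨by linarith, by linarith⟩
        · exact hR y ⟨by linarith, by linarith⟩)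
    (by rintro σ -
        left
        rintro y ⟨hy, hy'⟩
        exact hR y ⟨by linarith, by linarith⟩)
    (by rintro y ⟨hy, hy'⟩
        show u y < Q q1 q2 l1 ((1 - 0) * Tb + 0 * (1 + κ)) (0 * (1 - κ)) (y 0 - (b + 2 * δ))
        have e1 : (1 - 0) * Tb + 0 * (1 + κ) = Tb := by ring
        rw [e1, zero_mul]
        simp only at hy hy'
        have hQ : Q q1 q2 l1 Tb 0 (y 0 - (b + 2 * δ)) =
          Tb * q1 (min (y 0 - (b + 2 * δ)) 0 + l1) := by unfold Q; ring
        rw [hQ]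
        have hm : min (y 0 - (b + 2 * δ)) 0 + l1 ∈ Set.Icc 0 l1 :=
          ⟨by linarith [le_min hy (by linarith : -l1 ≤ 0)],
            by linarith [min_le_right (y 0 - (b + 2 * δ)) 0]⟩
        have hnn : 0 ≤ Tb * q1 (min (y 0 - (b + 2 * δ)) 0 + l1) :=
          mul_nonneg (by linarith) (hq1nn _ hm)
        rcases le_or_gt (b + δ) (y 0) with h | h
        · exact lt_of_lt_of_le (hR y ⟨h, by linarith⟩) hnn
        rcases le_or_gt (y 0) (a - δ) with h' | h'
        · exact lt_of_lt_of_le (hL y ⟨by linarith, h'⟩) hnn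
        rw [min_eq_left (by linarith)]
        have h3 := hq1 (y 0 - (b + 2 * δ) + l1) ⟨by linarith, by linarith⟩
        have h4 := (hu.mem_Icc y).2
        nlinarith)
  have st2 := stage hW hε hu hl1p hl2p P1 P2 hs1
    (fun _ => (1 + κ)) (fun _ => (1 - κ)) (fun σ => b + 2 * δ - 4 * δ * σ)
    (by fun_prop) (by fun_prop) (by fun_prop)
    (by rintro σ -; show 1 < 1 + κ; linarith)
    (by rintro σ -; show 0 ≤ 1 - κ; linarith)
    (by rintro σ -; show 1 - κ < 1; linarith)
    (by rintro σ ⟨h, h'⟩ y (hy | hy)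
        · exact hL y ⟨by nlinarith, by nlinarith⟩
        · exact hR y ⟨by nlinarith, by nlinarith⟩)
    (by rintro σ -
        right
        exact hκs)
    (by intro y hy
        simp only [mul_zero, sub_zero] at hy ⊢
        have := st1 y hy
        simpa using this)
  obtain ⟨hx1, hx2⟩ := abs_le.1 hx
  have hfin := st2 x ⟨by simp only; linarith, by simp only; linarith⟩
  rw [Q_right P1.zr (by simp only; linarith), hux] at hfin
  have := P2.pos (x 0 - (b + 2 * δ - 4 * δ * 1)) ⟨by linarith, by linarith⟩
  nlinarith [mul_pos (by linarith : 0 < 1 - κ) this]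

lemma neg_pt {W : ℝ → ℝ} (hW : IsDoubleWell W) {ε : ℝ}
    {u : EuclideanSpace ℝ (Fin (n + 1)) → ℝ} (hu : IsPhaseTransitionTorus W ε u) :
    IsPhaseTransitionTorus W ε (fun x => -u x) := by
  refine ⟨hu.smooth.neg, fun x => ?_, fun x => ?_, fun j hj x => ?_, fun x => ?_⟩
  · have := hu.mem_Icc x
    exact ⟨by linarith [this.2], by linarith [this.1]⟩
  · simp only [hu.periodic_first]
  · simp only [hu.periodic_rest j hj]
  · have h1 : lap (fun x => -u x) x = - lap u x := by
      unfold lap secondDirDeriv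
      rw [← Finset.sum_neg_distrib]
      refine Finset.sum_congr rfl fun j _ => ?_
      exact iteratedDeriv_fun_neg ..
    rw [h1]
    have h2 := hu.pde x
    have h3 : deriv W (-u x) = - deriv W (u x) := dW_odd hW _
    simp only [h3]
    linarith

/-- constant sign on slabs -/
lemma slab_sign {u : EuclideanSpace ℝ (Fin (n + 1)) → ℝ} (hu : Continuous u) {a b : ℝ}
    (h : ∀ x, x 0 ∈ Set.Icc a b → u x ≠ 0) :
    (∀ x, x 0 ∈ Set.Icc a b → u x < 0) ∨ (∀ x, x 0 ∈ Set.Icc a b → 0 < u x) := by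
  have hconv : Convex ℝ {x : EuclideanSpace ℝ (Fin (n + 1)) | x 0 ∈ Set.Icc a b} := by
    intro x hx y hy s t hs ht hst
    have := (convex_Icc a b) hx hy hs ht hst
    simpa using this
  have hpc := hconv.isPreconnected
  by_contra hcon
  push Not at hcon
  obtain ⟨⟨x, hx, hx0⟩, ⟨y, hy, hy0⟩⟩ := hcon
  have := hpc.intermediate_value hy hx hu.continuousOn
  obtain ⟨z, hz, hz0⟩ := this ⟨hy0, hx0⟩
  exact h z hz hz0

lemma keyK2 {W : ℝ → ℝ} (hW : IsDoubleWell W) {a0 a b c : ℝ} (h0 : a0 < a) (h1 : a ≤ b)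
    (h2 : b - a < c - b) :
    ∃ δ0 > 0, ∃ ε0 > 0, ∀ δ, 0 < δ → δ ≤ δ0 → ∀ ε, 0 < ε → ε < ε0 →
      ∀ u : EuclideanSpace ℝ (Fin (n + 1)) → ℝ, IsPhaseTransitionTorus W ε u →
      ((∀ x, x 0 ∈ Set.Icc (a0 + δ) (a - δ) → u x < 0) ∧
      (∀ x, x 0 ∈ Set.Icc (b + δ) (c - δ) → u x < 0) ∨
      (∀ x, x 0 ∈ Set.Icc (a0 + δ) (a - δ) → 0 < u x) ∧
      (∀ x, x 0 ∈ Set.Icc (b + δ) (c - δ) → 0 < u x)) →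
      (∃ x, u x = 0 ∧ |x 0 - b| ≤ δ) → False := by
  obtain ⟨δ0, hδ0, ε0, hε0, H⟩ := keyK (n := n) hW h0 h1 h2
  refine ⟨δ0, hδ0, ε0, hε0, ?_⟩
  rintro δ hδ hδ' ε hε hε' u hu (⟨hL, hR⟩ | ⟨hL, hR⟩) ⟨x, hx, hxb⟩
  · exact H δ hδ hδ' ε hε hε' u hu hL hR x hxb hx
  · refine H δ hδ hδ' ε hε hε' (fun x => -u x) (neg_pt hW hu) (fun y hy => ?_) (fun y hy => ?_)
      x hxb (by simp only [hx, neg_zero])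
    · linarith [hL y hy]
    · linarith [hR y hy]

lemma gap_step {W : ℝ → ℝ} (hW : IsDoubleWell W) {Θ : ℤ → ℝ} (hΘ : StrictMono Θ)
    (H : ∀ δ > 0, ∀ ε0 > 0, ∃ ε, 0 < ε ∧ ε < ε0 ∧ ∃ u : EuclideanSpace ℝ (Fin (n + 1)) → ℝ,
      IsPhaseTransitionTorus W ε u ∧ (∀ x, u x = 0 → ∃ N, |x 0 - Θ N| < δ) ∧
      ∀ N, ∃ x, u x = 0 ∧ |x 0 - Θ N| < δ) (N : ℤ) :
    Θ (N + 1 + 1 + 1) - Θ (N + 1 + 1) ≤ Θ (N + 1 + 1) - Θ (N + 1) := by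
  by_contra hcon
  push Not at hcon
  have m1 : Θ N < Θ (N + 1) := hΘ (by omega)
  have m2 : Θ (N + 1) < Θ (N + 1 + 1) := hΘ (by omega)
  have m3 : Θ (N + 1 + 1) < Θ (N + 1 + 1 + 1) := hΘ (by omega)
  obtain ⟨δ1, hδ1, ε1, hε1, H1⟩ := keyK2 (n := n) hW m1 m2.le hcon
  obtain ⟨δ2, hδ2, ε2, hε2, H2⟩ := keyK2 (n := n) hW (c := Θ (N + 1 + 1)) m1 le_rfl (by linarith)
  obtain ⟨δ3, hδ3, ε3, hε3, H3⟩ :=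
    keyK2 (n := n) hW (c := Θ (N + 1 + 1 + 1)) m2 le_rfl (by linarith)
  obtain ⟨δ, hδ, d1, d2, d3⟩ : ∃ δ > 0, δ ≤ δ1 ∧ δ ≤ δ2 ∧ δ ≤ δ3 :=
    ⟨min δ1 (min δ2 δ3), lt_min hδ1 (lt_min hδ2 hδ3), min_le_left _ _,
      (min_le_right _ _).trans (min_le_left _ _), (min_le_right _ _).trans (min_le_right _ _)⟩
  obtain ⟨ε0, hε0, e1, e2, e3⟩ : ∃ δ > 0, δ ≤ ε1 ∧ δ ≤ ε2 ∧ δ ≤ ε3 :=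
    ⟨min ε1 (min ε2 ε3), lt_min hε1 (lt_min hε2 hε3), min_le_left _ _,
      (min_le_right _ _).trans (min_le_left _ _), (min_le_right _ _).trans (min_le_right _ _)⟩
  obtain ⟨ε, hε, hεlt, u, hu, hA, hB⟩ := H δ hδ ε0 hε0
  have hB' : ∀ M, ∃ x, u x = 0 ∧ |x 0 - Θ M| ≤ δ := fun M => by
    obtain ⟨x, hx, hx'⟩ := hB M
    exact ⟨x, hx, hx'.le⟩
  have hsign : ∀ M, (∀ x, x 0 ∈ Set.Icc (Θ M + δ) (Θ (M + 1) - δ) → u x < 0) ∨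
      (∀ x, x 0 ∈ Set.Icc (Θ M + δ) (Θ (M + 1) - δ) → 0 < u x) := by
    intro M
    apply slab_sign hu.smooth.continuous
    intro x hx hx0
    obtain ⟨M', hM'⟩ := hA x hx0
    rw [abs_lt] at hM'
    have a1 : Θ M < Θ M' := by linarith [hx.1, hM'.2]
    have a2 : Θ M' < Θ (M + 1) := by linarith [hx.2, hM'.1]
    rw [hΘ.lt_iff_lt] at a1 a2
    omega
  have K1 := fun h => H1 δ hδ d1 ε hε (by linarith) u hu h (hB' _)
  have K2 := fun h => H2 δ hδ d2 ε hε (by linarith) u hu h (hB' _)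
  have K3 := fun h => H3 δ hδ d3 ε hε (by linarith) u hu h (hB' _)
  rcases hsign N with h1 | h1 <;> rcases hsign (N + 1) with h2 | h2 <;>
    rcases hsign (N + 1 + 1) with h3 | h3
  · exact K1 (Or.inl ⟨h1, h3⟩)
  · exact K2 (Or.inl ⟨h1, h2⟩)
  · exact K1 (Or.inl ⟨h1, h3⟩)
  · exact K3 (Or.inr ⟨h2, h3⟩)
  · exact K3 (Or.inl ⟨h2, h3⟩)
  · exact K1 (Or.inr ⟨h1, h3⟩)
  · exact K2 (Or.inr ⟨h1, h2⟩)
  · exact K1 (Or.inr ⟨h1, h3⟩)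

/-- the bi-infinite list of angles -/
noncomputable def Th {m : ℕ} (hm : 0 < m) (θ : Fin m → ℝ) (N : ℤ) : ℝ :=
  θ ⟨(N % m).toNat, by
    have h1 := Int.emod_nonneg N (b := m) (by omega)
    have h2 := Int.emod_lt_of_pos N (b := m) (by omega)
    omega⟩ + 2 * π * ((N / m : ℤ) : ℝ)

lemma Th_eq {m : ℕ} (hm : 0 < m) (θ : Fin m → ℝ) (k : Fin m) (q : ℤ) :
    Th hm θ (k + q * m) = θ k + 2 * π * q := by
  have h1 : ((k : ℤ) + q * m) % m = k := by
    rw [Int.add_mul_emod_self_right]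
    exact Int.emod_eq_of_lt (by omega) (by have := k.2; omega)
  have h2 : ((k : ℤ) + q * m) / m = q := by
    rw [Int.add_mul_ediv_right _ _ (by omega), Int.ediv_eq_zero_of_lt (by omega)
      (by have := k.2; omega), zero_add]
  unfold Th
  congr 2
  · simp only [h1, Int.toNat_natCast]
  · rw [h2]

lemma Th_cover {m : ℕ} (hm : 0 < m) (N : ℤ) : ∃ (k : Fin m) (q : ℤ), N = k + q * m := by
  have h1 := Int.emod_nonneg N (b := m) (by omega)
  have h2 := Int.emod_lt_of_pos N (b := m) (by omega)
  refine ⟨⟨(N % m).toNat, by omega⟩, N / m, ?_⟩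
  have := Int.emod_add_mul_ediv N m
  simp only [Int.toNat_of_nonneg h1]
  linarith

lemma Th_succ {m : ℕ} (hm : 0 < m) (θ : Fin m → ℝ) (k : Fin m) (q : ℤ) :
    Th hm θ (k + q * m + 1) =
      (if h : (k : ℕ) + 1 < m then θ ⟨(k : ℕ) + 1, h⟩ else θ ⟨0, hm⟩ + 2 * π) + 2 * π * q := by
  split_ifs with h
  · rw [← Th_eq hm θ ⟨k + 1, h⟩ q]
    congr 1
    push_cast; ring
  · have hk : (k : ℕ) + 1 = m := by have := k.2; omega
    have := Th_eq hm θ ⟨0, hm⟩ (q + 1)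
    push_cast at this
    rw [show θ ⟨0, hm⟩ + 2 * π + 2 * π * (q : ℝ) = θ ⟨0, hm⟩ + 2 * π * ((q : ℝ) + 1) by ring, ← this]
    congr 1
    have : (k : ℤ) + 1 = m := by exact_mod_cast hk
    linear_combination this

lemma Th_mono {m : ℕ} (hm : 0 < m) (θ : Fin m → ℝ) (hθ : StrictMono θ) (hθ_lb : 0 ≤ θ ⟨0, hm⟩)
    (hθ_ub : ∀ k, θ k < 2 * π) : StrictMono (Th hm θ) := by
  apply strictMono_int_of_lt_succ
  intro N
  obtain ⟨k, q, rfl⟩ := Th_cover hm N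
  rw [Th_succ, Th_eq]
  split_ifs with h
  · have : θ k < θ ⟨k + 1, h⟩ := hθ (by rw [Fin.lt_def]; simp)
    linarith
  · linarith [hθ_ub k]

lemma Th_per {m : ℕ} (hm : 0 < m) (θ : Fin m → ℝ) (N : ℤ) :
    Th hm θ (N + m) = Th hm θ N + 2 * π := by
  obtain ⟨k, q, rfl⟩ := Th_cover hm N
  rw [Th_eq, show (k : ℤ) + q * m + m = k + (q + 1) * m by ring, Th_eq]
  push_cast; ring

lemma gaps_equal {m : ℕ} (hm : 0 < m) {Θ : ℤ → ℝ} (hper : ∀ N, Θ (N + m) = Θ N + 2 * π)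
    (hstep : ∀ N, Θ (N + 1 + 1 + 1) - Θ (N + 1 + 1) ≤ Θ (N + 1 + 1) - Θ (N + 1)) (N : ℤ) :
    Θ (N + 1) - Θ N = 2 * π / m := by
  set g : ℤ → ℝ := fun N => Θ (N + 1) - Θ N with hg
  have hanti : Antitone g := by
    apply antitone_int_of_succ_le
    intro M
    have := hstep (M - 1)
    simpa [hg] using this
  have hgp : Function.Periodic g (m : ℤ) := by
    intro M
    simp only [hg]
    rw [show M + m + 1 = (M + 1) + m by ring, hper, hper]; ring
  have hle : ∀ A B, g A ≤ g B := by
    intro A B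
    have h1 : g (A + (|A| + |B|) * m) = g A := (hgp.int_mul (|A| + |B|)) A
    rw [← h1]
    apply hanti
    have : (1 : ℤ) ≤ m := by exact_mod_cast hm
    nlinarith [neg_abs_le A, le_abs_self B, abs_nonneg A, abs_nonneg B]
  have hc : ∀ A, g A = g N := fun A => le_antisymm (hle _ _) (hle _ _)
  have hlin : ∀ k : ℕ, Θ k = Θ 0 + k * g N := by
    intro k
    induction k with
    | zero => simp
    | succ k ih =>
      have := hc k
      simp only [hg] at this ih ⊢
      push_cast
      linarith
  have h1 := hlin m
  have h2 := hper 0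
  rw [zero_add] at h2
  have hm' : (m : ℝ) ≠ 0 := by positivity
  show g N = _
  field_simp
  linarith

lemma dist_le_of_coord {x y : EuclideanSpace ℝ (Fin (n + 1))} {C : ℝ} (hC : 0 ≤ C)
    (h : ∀ j, |x j - y j| ≤ C) : dist x y ≤ (n + 1) * C := by
  rw [EuclideanSpace.dist_eq]
  apply Real.sqrt_le_iff.2
  refine ⟨by positivity, ?_⟩
  calc ∑ j, dist (x j) (y j) ^ 2 ≤ ∑ _j : Fin (n + 1), C ^ 2 := by
        apply Finset.sum_le_sum
        intro j _
        rw [Real.dist_eq]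
        exact pow_le_pow_left₀ (abs_nonneg _) (h j) 2
    _ = (n + 1) * C ^ 2 := by simp
    _ ≤ ((n + 1) * C) ^ 2 := by
        have : (0:ℝ) ≤ n := by positivity
        nlinarith [sq_nonneg C, mul_nonneg this (sq_nonneg C), mul_nonneg (mul_nonneg this this) (sq_nonneg C)]

lemma coord_le_dist (x y : EuclideanSpace ℝ (Fin (n + 1))) (j : Fin (n + 1)) :
    |x j - y j| ≤ dist x y := by
  have := PiLp.norm_apply_le (x - y) j
  rw [dist_eq_norm]
  simpa using this

lemma haus_fin {W : ℝ → ℝ} {ε : ℝ}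
    {u : EuclideanSpace ℝ (Fin (n + 1)) → ℝ} (hu : IsPhaseTransitionTorus W ε u)
    {Z Sig : Set (EuclideanSpace ℝ (Fin (n + 1)))} (hZ : Z = {x | u x = 0}) (hne : Z.Nonempty)
    {m : ℕ} (hm : 0 < m) (θ : Fin m → ℝ)
    (hSig : Sig = {x | ∃ k : Fin m, ∃ j : ℤ, x 0 = θ k + 2 * π * j}) :
    Metric.hausdorffEDist Z Sig ≠ ⊤ := by
  subst hZ hSig
  obtain ⟨z, hz⟩ := hne
  have hz : u z = 0 := hz
  have key : Metric.hausdorffEDist {x | u x = 0}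
      {x : EuclideanSpace ℝ (Fin (n + 1)) | ∃ k : Fin m, ∃ j : ℤ, x 0 = θ k + 2 * π * j}
      ≤ ENNReal.ofReal ((n + 1) * (2 * π)) := by
    apply Metric.hausdorffEDist_le_of_mem_edist
    · intro x hx
      set j := ⌊(x 0 - θ ⟨0, hm⟩) / (2 * π)⌋ with hj
      have h1 := Int.floor_le ((x 0 - θ ⟨0, hm⟩) / (2 * π))
      have h2 := Int.lt_floor_add_one ((x 0 - θ ⟨0, hm⟩) / (2 * π))
      rw [← hj] at h1 h2
      rw [le_div_iff₀ (by positivity)] at h1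
      rw [div_lt_iff₀ (by positivity)] at h2
      refine ⟨x + (θ ⟨0, hm⟩ + 2 * π * j - x 0) • EuclideanSpace.single 0 (1:ℝ),
        ⟨⟨0, hm⟩, j, ?_⟩, ?_⟩
      · rw [coord_zero]; ring
      · rw [edist_dist]
        apply ENNReal.ofReal_le_ofReal
        apply dist_le_of_coord (by positivity)
        intro i
        by_cases hi : i = 0
        · subst hi
          rw [coord_zero, abs_le]
          constructor <;> linarith
        · simp [hi]; positivity
    · intro y _
      obtain ⟨p, hp, hpy⟩ := near hu z y
      refine ⟨p, hp.trans hz, ?_⟩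
      rw [edist_dist]
      apply ENNReal.ofReal_le_ofReal
      rw [dist_comm]
      exact dist_le_of_coord (by positivity) hpy
  exact ne_top_of_le_ne_top ENNReal.ofReal_ne_top key

end PT

/-- If the nodal sets of double-well phase transitions `u i` on the flat
torus `T^{1+n}` converge in the Hausdorff sense to
`Σ = ⋃_{k=1}^m ({θ_k} + 2πℤ) × ℝⁿ`, then the consecutive gaps between the angles
`θ_1 < ⋯ < θ_m` (with `θ_{m+1} := θ_1 + 2π`) are all equal to `2π/m`; i.e. `Σ` is
invariant under rotation of the circle factor by `2π/m`. -/
theorem phase_transition_limit_equally_spaced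
    {W : ℝ → ℝ} (hW : IsDoubleWell W) {n : ℕ} (hn : 1 ≤ n)
    (ε : ℕ → ℝ) (hε_pos : ∀ i, 0 < ε i) (hε_lim : Tendsto ε atTop (nhds 0))
    (u : ℕ → EuclideanSpace ℝ (Fin (n + 1)) → ℝ)
    (hu : ∀ i, IsPhaseTransitionTorus W (ε i) (u i))
    {m : ℕ} (hm : 0 < m) (θ : Fin m → ℝ)
    (hθ_mono : StrictMono θ) (hθ_lb : 0 ≤ θ ⟨0, hm⟩) (hθ_ub : ∀ k, θ k < 2 * π)
    (Z : ℕ → Set (EuclideanSpace ℝ (Fin (n + 1))))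
    (hZ : ∀ i, Z i = {x | u i x = 0}) (hZ_ne : ∀ i, (Z i).Nonempty)
    (Sig : Set (EuclideanSpace ℝ (Fin (n + 1))))
    (hSig : Sig = {x | ∃ k : Fin m, ∃ j : ℤ, x 0 = θ k + 2 * π * j})
    (hHaus : Tendsto (fun i => Metric.hausdorffDist (Z i) Sig) atTop (nhds 0)) :
    ∀ k : Fin m,
      (if h : (k : ℕ) + 1 < m then θ ⟨(k : ℕ) + 1, h⟩ else θ ⟨0, hm⟩ + 2 * π) - θ k
        = 2 * π / m := by
  have hmono := PT.Th_mono hm θ hθ_mono hθ_lb hθ_ub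
  have hSig' : Sig = {x | ∃ N : ℤ, x 0 = PT.Th hm θ N} := by
    rw [hSig]
    ext x
    constructor
    · rintro ⟨k, j, h⟩
      exact ⟨k + j * m, by rw [PT.Th_eq]; exact h⟩
    · rintro ⟨N, h⟩
      obtain ⟨k, q, rfl⟩ := PT.Th_cover hm N
      exact ⟨k, q, by rw [← PT.Th_eq hm θ]; exact h⟩
  have H : ∀ δ > 0, ∀ ε0 > 0, ∃ e, 0 < e ∧ e < ε0 ∧ ∃ v : EuclideanSpace ℝ (Fin (n + 1)) → ℝ,
      IsPhaseTransitionTorus W e v ∧ (∀ x, v x = 0 → ∃ N, |x 0 - PT.Th hm θ N| < δ) ∧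
      ∀ N, ∃ x, v x = 0 ∧ |x 0 - PT.Th hm θ N| < δ := by
    intro δ hδ ε0 hε0
    obtain ⟨i, hi1, hi2⟩ := ((hε_lim.eventually_lt_const hε0).and
      (hHaus.eventually_lt_const hδ)).exists
    have hfin := PT.haus_fin (hu i) (hZ i) (hZ_ne i) hm θ hSig
    refine ⟨ε i, hε_pos i, hi1, u i, hu i, ?_, ?_⟩
    · intro x hx
      obtain ⟨y, hy, hxy⟩ := Metric.exists_dist_lt_of_hausdorffDist_lt
        (by rw [hZ i]; exact hx : x ∈ Z i) hi2 hfin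
      rw [hSig'] at hy
      obtain ⟨N, hN⟩ := hy
      refine ⟨N, ?_⟩
      rw [← hN]
      exact lt_of_le_of_lt (PT.coord_le_dist x y 0) hxy
    · intro N
      have hy : (EuclideanSpace.single 0 (PT.Th hm θ N) : EuclideanSpace ℝ (Fin (n + 1))) ∈ Sig := by
        rw [hSig']
        exact ⟨N, by simp⟩
      obtain ⟨x, hx, hxy⟩ := Metric.exists_dist_lt_of_hausdorffDist_lt' hy hi2 hfin
      rw [hZ i] at hx
      refine ⟨x, hx, ?_⟩
      have := lt_of_le_of_lt (PT.coord_le_dist x _ 0) hxy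
      simpa using this
  have hgap := PT.gaps_equal hm (PT.Th_per hm θ) (PT.gap_step hW hmono H)
  intro k
  have h1 := hgap (k + 0 * m)
  rw [PT.Th_succ, PT.Th_eq] at h1
  simpa using h1
end

section
/- Fix ε > 0 and a double-well potential W. Let u : ℝ → [−1,1] be a smooth 2π-periodic function satisfying ε² u'' = W'(u) on ℝ, and suppose the zero set of u in [0, 2π) consists of exactly m points z_1 < z_2 < ⋯ < z_m, with m ≥ 1. Then all nodal intervals of u are congruent: setting z_{m+1} := z_1 + 2π, one has z_{k+1} − z_k = 2π/m for every k ∈ {1, …, m}. -/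
open Real Filter Set

lemma doubleWell_deriv_odd {W : ℝ → ℝ} (hW : IsDoubleWell W) (x : ℝ) :
    deriv W (-x) = - deriv W x := by
  have h : (fun x => W (-x)) = W := funext hW.even
  have h2 := deriv_comp_neg W x
  rw [h] at h2
  linarith

lemma phase_reflect {ε : ℝ} (hε : 0 < ε) {W : ℝ → ℝ} (hW : IsDoubleWell W)
    (u : ℝ → ℝ) (hu_smooth : ContDiff ℝ (⊤ : ℕ∞) u)
    (hu_mem : ∀ t, u t ∈ Set.Icc (-1 : ℝ) 1)
    (hODE : ∀ t, ε ^ 2 * iteratedDeriv 2 u t = deriv W (u t))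
    (b : ℝ) (hb : u b = 0) (t : ℝ) : u (2 * b - t) = - u t := by
  have hε2 : ε ^ 2 ≠ 0 := by positivity
  have hu1 : ∀ t, HasDerivAt u (deriv u t) t := fun t =>
    (hu_smooth.differentiable (by simp)).differentiableAt.hasDerivAt
  have hdu : ContDiff ℝ 1 (deriv u) := by
    have : ContDiff ℝ (1 + 1) u := by
      have h2 := contDiff_infty.1 hu_smooth 2
      norm_num at h2 ⊢
      exact h2
    exact (contDiff_succ_iff_deriv.1 this).2.2
  have hdW : ContDiff ℝ 1 (deriv W) := by
    have : ContDiff ℝ (1 + 1) W := by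
      have h2 := contDiff_infty.1 hW.smooth 2
      norm_num at h2 ⊢
      exact h2
    exact (contDiff_succ_iff_deriv.1 this).2.2
  have hu2 : ∀ t, HasDerivAt (deriv u) (deriv W (u t) / ε ^ 2) t := fun t => by
    have h := ((hdu.differentiable (by simp)) t).hasDerivAt
    have e := hODE t
    rw [iteratedDeriv_succ, iteratedDeriv_one] at e
    rw [← e, mul_div_cancel_left₀ _ hε2]
    exact h
  obtain ⟨K, hK⟩ := (hdW.contDiffOn (s := Set.Icc (-1 : ℝ) 1)).exists_lipschitzOnWith
    (by simp) (convex_Icc _ _) isCompact_Icc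
  set S : Set (ℝ × ℝ) := {p | p.1 ∈ Set.Icc (-1 : ℝ) 1} with hS
  set V : ℝ × ℝ → ℝ × ℝ := fun p => (p.2, deriv W p.1 / ε ^ 2) with hV
  have hlip : ∃ K' : NNReal, LipschitzOnWith K' V S := by
    refine ⟨max 1 (Real.toNNReal (1 / ε ^ 2) * K), ?_⟩
    refine LipschitzOnWith.of_dist_le_mul fun p hp q hq => ?_
    have h1 := hK.dist_le_mul p.1 hp q.1 hq
    have hp1 : dist p.1 q.1 ≤ dist p q := le_max_left _ _
    have hp2 : dist p.2 q.2 ≤ dist p q := le_max_right _ _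
    have hpos : (0:ℝ) < 1 / ε ^ 2 := by positivity
    rw [Prod.dist_eq]
    push_cast
    rw [Real.coe_toNNReal _ hpos.le]
    apply max_le
    · calc dist p.2 q.2 ≤ 1 * dist p q := by linarith
        _ ≤ _ := by gcongr; exact le_max_left _ _
    · calc dist (deriv W p.1 / ε ^ 2) (deriv W q.1 / ε ^ 2)
          = 1 / ε ^ 2 * dist (deriv W p.1) (deriv W q.1) := by
            rw [Real.dist_eq, Real.dist_eq, ← sub_div, abs_div, abs_of_pos (by positivity : 0 < ε ^ 2)]
            ring
        _ ≤ 1 / ε ^ 2 * (K * dist p q) := by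
            gcongr
            exact h1.trans (by gcongr)
        _ = (1 / ε ^ 2 * K) * dist p q := by ring
        _ ≤ _ := by gcongr; exact le_max_right _ _
  obtain ⟨K', hK'⟩ := hlip
  have hrefl : ∀ t, HasDerivAt (fun t => 2 * b - t) (-1) t := fun t => by
    simpa using (hasDerivAt_id t).const_sub (2 * b)
  have key := ODE_solution_unique_univ (v := fun _ => V) (s := fun _ => S) (K := K') (t₀ := b)
    (f := fun t => (u t, deriv u t)) (g := fun t => (- u (2 * b - t), deriv u (2 * b - t)))
    (fun _ => hK')
    (fun t => ⟨(hu1 t).prodMk (hu2 t), hu_mem t⟩)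
    (fun t => ⟨by
      have h1 : HasDerivAt (fun t => - u (2 * b - t)) (deriv u (2 * b - t)) t := by
        have h := ((hu1 (2 * b - t)).comp t (hrefl t)).neg
        have e : -(deriv u (2 * b - t) * -1) = deriv u (2 * b - t) := by ring
        rw [e] at h
        exact h
      have h2 : HasDerivAt (fun t => deriv u (2 * b - t)) (deriv W (- u (2 * b - t)) / ε ^ 2) t := by
        rw [doubleWell_deriv_odd hW]
        have h := (hu2 (2 * b - t)).comp t (hrefl t)
        have e : deriv W (u (2 * b - t)) / ε ^ 2 * -1 = -deriv W (u (2 * b - t)) / ε ^ 2 := by ring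
        rw [e] at h
        exact h
      exact h1.prodMk h2, by
      have := hu_mem (2 * b - t)
      simp only [hS, Set.mem_ofPred_eq, Set.mem_Icc] at this ⊢
      constructor <;> linarith⟩)
    (by
      have : 2 * b - b = b := by ring
      simp [this, hb])
  have := congrArg Prod.fst (congrFun key t)
  simp only at this
  linarith

/-- Consecutive zeros. -/
def Consec (u : ℝ → ℝ) (a b : ℝ) : Prop :=
  a < b ∧ u a = 0 ∧ u b = 0 ∧ ∀ t, a < t → t < b → u t ≠ 0

lemma consec_gap {u : ℝ → ℝ} (hr : ∀ b, u b = 0 → ∀ t, u (2 * b - t) = - u t) {a b c : ℝ}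
    (h1 : Consec u a b) (h2 : Consec u b c) : c - b = b - a := by
  obtain ⟨hab, ha, hb, hn⟩ := h1
  obtain ⟨hbc, -, hc, hn'⟩ := h2
  rcases lt_trichotomy (c - b) (b - a) with h | h | h
  · exact absurd (by rw [hr b hb, hc, neg_zero]) (hn (2 * b - c) (by linarith) (by linarith))
  · exact h
  · exact absurd (by rw [hr b hb, ha, neg_zero]) (hn' (2 * b - a) (by linarith) (by linarith))

/-- For a `2π`-periodic one-dimensional double-well phase transition
whose zero set in `[0, 2π)` consists of exactly `m` points `z_1 < ⋯ < z_m`, all nodal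
intervals are congruent: with `z_{m+1} := z_1 + 2π`, one has `z_{k+1} - z_k = 2π/m`. -/
theorem phase_transition_circle_nodal_intervals_congruent
    {ε : ℝ} (hε : 0 < ε) {W : ℝ → ℝ} (hW : IsDoubleWell W)
    (u : ℝ → ℝ) (hu_smooth : ContDiff ℝ (⊤ : ℕ∞) u)
    (hu_mem : ∀ t, u t ∈ Set.Icc (-1 : ℝ) 1)
    (hu_per : ∀ t, u (t + 2 * π) = u t)
    (hODE : ∀ t, ε ^ 2 * iteratedDeriv 2 u t = deriv W (u t))
    {m : ℕ} (hm : 0 < m) (z : Fin m → ℝ) (hz_mono : StrictMono z)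
    (hz : {t ∈ Set.Ico (0 : ℝ) (2 * π) | u t = 0} = Set.range z) :
    ∀ k : Fin m,
      (if h : (k : ℕ) + 1 < m then z ⟨(k : ℕ) + 1, h⟩ else z ⟨0, hm⟩ + 2 * π) - z k
        = 2 * π / m := by
  have hr := fun b hb t => phase_reflect hε hW u hu_smooth hu_mem hODE b hb t
  have hzm : ∀ j, (0 ≤ z j ∧ z j < 2 * π) ∧ u (z j) = 0 := fun j => by
    have : z j ∈ {t ∈ Set.Ico (0 : ℝ) (2 * π) | u t = 0} := hz ▸ Set.mem_range_self j
    exact this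
  have hzs : ∀ t, 0 ≤ t → t < 2 * π → u t = 0 → ∃ j, z j = t := fun t h0 h1 h2 => by
    have : t ∈ Set.range z := hz ▸ ⟨⟨h0, h1⟩, h2⟩
    exact this
  set y : ℕ → ℝ := fun k => if h : k < m then z ⟨k, h⟩ else z ⟨0, hm⟩ + 2 * π with hy
  have hylt : ∀ k (h : k < m), y k = z ⟨k, h⟩ := fun k h => by simp [hy, h]
  have hym : y m = z ⟨0, hm⟩ + 2 * π := by simp [hy]
  have hcons : ∀ k, k < m → Consec u (y k) (y (k + 1)) := by
    intro k hk
    rw [hylt k hk]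
    rcases Nat.lt_or_ge (k + 1) m with h | h
    · rw [hylt _ h]
      refine ⟨hz_mono (by simp), (hzm _).2, (hzm _).2, fun t h1 h2 h3 => ?_⟩
      obtain ⟨j, rfl⟩ := hzs t ((hzm _).1.1.trans h1.le) (h2.trans (hzm _).1.2) h3
      have h1' := hz_mono.lt_iff_lt.1 h1
      have h2' := hz_mono.lt_iff_lt.1 h2
      simp only [Fin.lt_def] at h1' h2'
      omega
    · have hkm : k + 1 = m := by omega
      rw [hkm, hym]
      refine ⟨?_, (hzm _).2, by rw [hu_per]; exact (hzm _).2, fun t h1 h2 h3 => ?_⟩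
      · have := (hzm ⟨k, hk⟩).1.2
        have := (hzm ⟨0, hm⟩).1.1
        linarith
      · rcases lt_or_ge t (2 * π) with h4 | h4
        · obtain ⟨j, rfl⟩ := hzs t ((hzm _).1.1.trans h1.le) h4 h3
          have h1' := hz_mono.lt_iff_lt.1 h1
          simp only [Fin.lt_def] at h1'
          omega
        · have := (hzm ⟨0, hm⟩).1.2
          obtain ⟨j, hj⟩ := hzs (t - 2 * π) (by linarith) (by linarith) (by
            rw [← hu_per, sub_add_cancel]; exact h3)
          have h5 : z j < z ⟨0, hm⟩ := by linarith
          have h1' := hz_mono.lt_iff_lt.1 h5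
          simp [Fin.lt_def] at h1'
  have hgap : ∀ k, k < m → y (k + 1) - y k = y 1 - y 0 := by
    intro k
    induction k with
    | zero => intro _; simp
    | succ n ih =>
      intro h
      rw [consec_gap hr (hcons n (by omega)) (hcons (n + 1) h), ih (by omega)]
  have hlin : ∀ k, k ≤ m → y k = y 0 + k * (y 1 - y 0) := by
    intro k
    induction k with
    | zero => intro _; simp
    | succ n ih =>
      intro h
      have h1 := ih (by omega)
      have h2 := hgap n (by omega)
      push_cast
      linarith
  intro k
  have hk := hgap k k.2
  have e := hlin m le_rfl
  rw [hym, hylt 0 hm] at e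
  have hm' : (m : ℝ) ≠ 0 := by positivity
  rw [hylt k k.2] at hk
  change y (k + 1) - z k = _
  rw [eq_div_iff hm']
  have hk' : y (k + 1) - z k = y 1 - y 0 := hk
  rw [hk', hylt 0 hm]
  linarith
end

section
/- Fix ε > 0 and a double-well potential W. Let u : ℝ → [−1,1] be a smooth 2π-periodic function satisfying ε² u'' = W'(u) on ℝ, and suppose the zero set of u in [0, 2π) consists of exactly m points z_1 < z_2 < ⋯ < z_m, with m ≥ 1. Then for every k ∈ {1, …, m} (setting z_{m+1} := z_1 + 2π) and every s ∈ ℝ, u(z_{k+1} + s) = −u(z_k + s). In particular, on each nodal interval u equals ±1 times one and the same positive profile vanishing at the endpoints, and the sign ± alternates across each zero of u. -/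
open Real Filter Set

theorem aux_unique {ε : ℝ} (hε : 0 < ε) {W : ℝ → ℝ} (hW : ContDiff ℝ (⊤ : ℕ∞) W)
    (f g f' g' : ℝ → ℝ) (hf : ∀ t, HasDerivAt f (f' t) t) (hg : ∀ t, HasDerivAt g (g' t) t)
    (hf' : ∀ t, HasDerivAt f' (deriv W (f t) / ε ^ 2) t)
    (hg' : ∀ t, HasDerivAt g' (deriv W (g t) / ε ^ 2) t)
    (hfm : ∀ t, f t ∈ Set.Icc (-1 : ℝ) 1) (hgm : ∀ t, g t ∈ Set.Icc (-1 : ℝ) 1)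
    (h0 : f 0 = g 0) (h1 : f' 0 = g' 0) : f = g := by
  have hWd : ContDiff ℝ 1 (fun x => deriv W x / ε ^ 2) := by
    have h2 : ContDiff ℝ 2 W := contDiff_infty.1 hW 2
    have : ContDiff ℝ 1 (deriv W) := by
      have h3 : ContDiff ℝ (1 + 1) W := by simpa [one_add_one_eq_two] using h2
      exact (contDiff_succ_iff_deriv.1 h3).2.2
    exact this.div_const _
  obtain ⟨K, hK⟩ : ∃ K, LipschitzOnWith K (fun x => deriv W x / ε ^ 2) (Set.Icc (-1 : ℝ) 1) :=
    hWd.contDiffOn.exists_lipschitzOnWith (by norm_num) (convex_Icc _ _) isCompact_Icc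
  have hL : ∀ t : ℝ, LipschitzOnWith (max 1 K)
      (fun p : ℝ × ℝ => (p.2, deriv W p.1 / ε ^ 2)) (Set.Icc (-1 : ℝ) 1 ×ˢ Set.univ) := by
    intro t
    refine LipschitzOnWith.prodMk (LipschitzWith.prod_snd.lipschitzOnWith) ?_
    have := hK.comp (LipschitzWith.prod_fst (α := ℝ) (β := ℝ)).lipschitzOnWith
      (s := Set.Icc (-1 : ℝ) 1 ×ˢ Set.univ) (fun p hp => hp.1)
    rw [mul_one] at this
    exact this
  have := ODE_solution_unique_univ (v := fun _ p => (p.2, deriv W p.1 / ε ^ 2))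
    (s := fun _ => Set.Icc (-1 : ℝ) 1 ×ˢ Set.univ)
    (f := fun t => (f t, f' t)) (g := fun t => (g t, g' t)) (t₀ := 0) hL
    (fun t => ⟨(hf t).prodMk (hf' t), hfm t, trivial⟩)
    (fun t => ⟨(hg t).prodMk (hg' t), hgm t, trivial⟩) (by simp [h0, h1])
  funext t
  exact congrArg Prod.fst (congrFun this t)

theorem aux_sign (f : ℝ → ℝ) {a b p q : ℝ} (hab : a < b) (ha : HasDerivAt f p a)
    (hb : HasDerivAt f q b) (fa : f a = 0) (fb : f b = 0) (hpos : ∀ t ∈ Set.Ioo a b, 0 < f t) :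
    0 ≤ p ∧ q ≤ 0 := by
  constructor
  · have h := (hasDerivAt_iff_tendsto_slope.1 ha).mono_left
      (nhdsWithin_mono a (show Set.Ioi a ⊆ {a}ᶜ from fun x hx => ne_of_gt hx))
    refine ge_of_tendsto h ?_
    filter_upwards [Ioo_mem_nhdsGT hab] with t ht
    rw [slope_def_field, fa]
    exact div_nonneg (by linarith [hpos t ht]) (by linarith [ht.1])
  · have h := (hasDerivAt_iff_tendsto_slope.1 hb).mono_left
      (nhdsWithin_mono b (show Set.Iio b ⊆ {b}ᶜ from fun x hx => ne_of_lt hx))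
    refine le_of_tendsto h ?_
    filter_upwards [Ioo_mem_nhdsLT hab] with t ht
    rw [slope_def_field, fb]
    exact div_nonpos_of_nonneg_of_nonpos (by linarith [hpos t ht]) (by linarith [ht.2])

theorem aux_main {ε : ℝ} (hε : 0 < ε) {W : ℝ → ℝ} (hW : IsDoubleWell W)
    (u : ℝ → ℝ) (hu_smooth : ContDiff ℝ (⊤ : ℕ∞) u)
    (hu_mem : ∀ t, u t ∈ Set.Icc (-1 : ℝ) 1)
    (hODE : ∀ t, ε ^ 2 * iteratedDeriv 2 u t = deriv W (u t))
    {a b : ℝ} (hab : a < b) (ua : u a = 0) (ub : u b = 0)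
    (hne : ∀ t ∈ Set.Ioo a b, u t ≠ 0) (s : ℝ) : u (b + s) = -u (a + s) := by
  have hε2 : ε ^ 2 ≠ 0 := by positivity
  have hWdiff : Differentiable ℝ W := hW.smooth.differentiable (by simp)
  have hu2 : ContDiff ℝ (1 + 1) u := by
    simpa [one_add_one_eq_two] using contDiff_infty.1 hu_smooth 2
  have hdu : ∀ t, HasDerivAt u (deriv u t) t := fun t =>
    (hu2.differentiable (by norm_num) t).hasDerivAt
  have hddu : ∀ t, HasDerivAt (deriv u) (deriv W (u t) / ε ^ 2) t := by
    intro t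
    have h := ((contDiff_succ_iff_deriv.1 hu2).2.2.differentiable (by norm_num) t).hasDerivAt
    have e : deriv (deriv u) t = deriv W (u t) / ε ^ 2 := by
      rw [← hODE t, iteratedDeriv_succ, iteratedDeriv_one]; field_simp
    rwa [e] at h
  have hE : ∀ x y, ε ^ 2 * deriv u x ^ 2 - 2 * W (u x) = ε ^ 2 * deriv u y ^ 2 - 2 * W (u y) := by
    have hd : ∀ t, HasDerivAt (fun t => ε ^ 2 * deriv u t ^ 2 - 2 * W (u t)) 0 t := by
      intro t
      have h := (((hddu t).pow 2).const_mul (ε ^ 2)).sub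
        ((((hWdiff (u t)).hasDerivAt).comp t (hdu t)).const_mul 2)
      have e : ε ^ 2 * ((2 : ℕ) * deriv u t ^ (2 - 1) * (deriv W (u t) / ε ^ 2))
          - 2 * (deriv W (u t) * deriv u t) = 0 := by
        field_simp
        norm_num
      rw [e] at h
      exact h
    exact is_const_of_deriv_eq_zero (fun t => (hd t).differentiableAt) (fun t => (hd t).deriv)
  have hsq : deriv u b ^ 2 = deriv u a ^ 2 := by
    have := hE b a
    rw [ua, ub] at this
    exact mul_left_cancel₀ hε2 (by linarith)
  have hopp : deriv u b = -deriv u a := by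
    have hsgn : (0 ≤ deriv u a ∧ deriv u b ≤ 0) ∨ (0 ≤ -deriv u a ∧ -deriv u b ≤ 0) := by
      have hcon : (∀ t ∈ Set.Ioo a b, 0 < u t) ∨ (∀ t ∈ Set.Ioo a b, 0 < -u t) := by
        by_contra hc
        push Not at hc
        obtain ⟨⟨x, hx, hx'⟩, ⟨y, hy, hy'⟩⟩ := hc
        obtain ⟨c, hc, hc0⟩ := isPreconnected_Ioo.intermediate_value hx hy
          hu2.continuous.continuousOn (show (0 : ℝ) ∈ Set.Icc (u x) (u y) from
            ⟨hx', by linarith⟩)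
        exact hne c hc hc0
      rcases hcon with h | h
      · exact Or.inl (aux_sign u hab (hdu a) (hdu b) ua ub h)
      · exact Or.inr (aux_sign (fun t => -u t) hab (hdu a).neg (hdu b).neg
          (by simp [ua]) (by simp [ub]) h)
    rcases sq_eq_sq_iff_eq_or_eq_neg.1 hsq with h | h
    · rcases hsgn with h' | h' <;> linarith [h'.1, h'.2]
    · exact h
  have hodd : ∀ x, deriv W (-x) = -deriv W x := by
    intro x
    have h1 := ((hWdiff (-x)).hasDerivAt).comp x (hasDerivAt_neg x)
    have h2 : W ∘ Neg.neg = W := funext hW.even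
    have h3 : HasDerivAt W (deriv W (-x) * -1) x := by
      rw [h2] at h1; exact h1
    rw [h3.deriv]; ring
  have key := aux_unique hε hW.smooth (fun s => u (b + s)) (fun s => -u (a + s))
    (fun s => deriv u (b + s)) (fun s => -deriv u (a + s))
    (fun t => (hdu (b + t)).comp_const_add b t) (fun t => ((hdu (a + t)).comp_const_add a t).neg)
    (fun t => (hddu (b + t)).comp_const_add b t)
    (fun t => by
      have h := ((hddu (a + t)).comp_const_add a t).neg
      rw [hodd, neg_div]; exact h)
    (fun t => hu_mem _) (fun t => ⟨by linarith [(hu_mem (a + t)).2], by linarith [(hu_mem (a + t)).1]⟩)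
    (by simp [ua, ub]) (by simpa using hopp)
  exact congrFun key s



/-- For a `2π`-periodic one-dimensional double-well phase transition
whose zero set in `[0, 2π)` consists of exactly `m` points `z_1 < ⋯ < z_m`, one has
(with `z_{m+1} := z_1 + 2π`) `u (z_{k+1} + s) = -u (z_k + s)` for all `k` and all `s`:
on each nodal interval `u` is `±1` times one and the same positive profile, with the
sign alternating across each zero. -/
theorem phase_transition_circle_alternating_profile
    {ε : ℝ} (hε : 0 < ε) {W : ℝ → ℝ} (hW : IsDoubleWell W)
    (u : ℝ → ℝ) (hu_smooth : ContDiff ℝ (⊤ : ℕ∞) u)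
    (hu_mem : ∀ t, u t ∈ Set.Icc (-1 : ℝ) 1)
    (hu_per : ∀ t, u (t + 2 * π) = u t)
    (hODE : ∀ t, ε ^ 2 * iteratedDeriv 2 u t = deriv W (u t))
    {m : ℕ} (hm : 0 < m) (z : Fin m → ℝ) (hz_mono : StrictMono z)
    (hz : {t ∈ Set.Ico (0 : ℝ) (2 * π) | u t = 0} = Set.range z) :
    ∀ k : Fin m, ∀ s : ℝ,
      u ((if h : (k : ℕ) + 1 < m then z ⟨(k : ℕ) + 1, h⟩ else z ⟨0, hm⟩ + 2 * π) + s)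
        = -u (z k + s) := by
  have hz' : ∀ j, (0 ≤ z j ∧ z j < 2 * π) ∧ u (z j) = 0 := by
    intro j
    have : z j ∈ {t ∈ Set.Ico (0 : ℝ) (2 * π) | u t = 0} := hz ▸ Set.mem_range_self j
    exact this
  have hzz : ∀ t, 0 ≤ t → t < 2 * π → u t = 0 → ∃ j, z j = t := by
    intro t h1 h2 h3
    have : t ∈ {t ∈ Set.Ico (0 : ℝ) (2 * π) | u t = 0} := ⟨⟨h1, h2⟩, h3⟩
    rw [hz] at this
    exact this
  intro k s
  split_ifs with h
  · refine aux_main hε hW u hu_smooth hu_mem hODE (hz_mono (by simp [Fin.lt_def]))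
      (hz' _).2 (hz' _).2 ?_ s
    intro t ht h0
    obtain ⟨j, rfl⟩ := hzz t (by linarith [ht.1, (hz' k).1.1])
      (by linarith [ht.2, (hz' ⟨k + 1, h⟩).1.2]) h0
    have h1 := hz_mono.lt_iff_lt.1 ht.1
    have h2 := hz_mono.lt_iff_lt.1 ht.2
    simp only [Fin.lt_def] at h1 h2
    omega
  · refine aux_main hε hW u hu_smooth hu_mem hODE
      (by linarith [(hz' k).1.2, (hz' ⟨0, hm⟩).1.1])
      (hz' _).2 (by rw [hu_per]; exact (hz' _).2) ?_ s
    intro t ht h0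
    rcases lt_or_ge t (2 * π) with hlt | hge
    · obtain ⟨j, rfl⟩ := hzz t (by linarith [ht.1, (hz' k).1.1]) hlt h0
      have h1 := hz_mono.lt_iff_lt.1 ht.1
      simp only [Fin.lt_def] at h1
      omega
    · obtain ⟨j, hj⟩ := hzz (t - 2 * π) (by linarith)
        (by linarith [ht.2, (hz' ⟨0, hm⟩).1.2]) (by
          rw [← hu_per (t - 2 * π)]; simpa using h0)
      have h1 : z j < z ⟨0, hm⟩ := by rw [hj]; linarith [ht.2]
      have h2 := hz_mono.lt_iff_lt.1 h1
      simp [Fin.lt_def] at h2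
end

section
/- Fix ε > 0 and a double-well potential W. Let u : ℝ → [−1,1] be a smooth 2π-periodic function satisfying ε² u'' = W'(u) on ℝ, and suppose the zero set of u in [0, 2π) consists of exactly m points, with m ≥ 1. Then m is even and u(t + 2π/m) = −u(t) for every t ∈ ℝ. -/
open Real Filter Set

lemma pt_uniq {F : ℝ → ℝ} (hF : ContDiff ℝ 1 F) {x₁ y₁ x₂ y₂ : ℝ → ℝ} {t₀ : ℝ}
    (hx₁ : ∀ t, HasDerivAt x₁ (y₁ t) t) (hy₁ : ∀ t, HasDerivAt y₁ (F (x₁ t)) t)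
    (hx₂ : ∀ t, HasDerivAt x₂ (y₂ t) t) (hy₂ : ∀ t, HasDerivAt y₂ (F (x₂ t)) t)
    (hm₁ : ∀ t, x₁ t ∈ Icc (-1 : ℝ) 1) (hm₂ : ∀ t, x₂ t ∈ Icc (-1 : ℝ) 1)
    (hx : x₁ t₀ = x₂ t₀) (hy : y₁ t₀ = y₂ t₀) : ∀ t, x₁ t = x₂ t := by
  obtain ⟨K, hK⟩ : ∃ K, LipschitzOnWith K F (Icc (-1 : ℝ) 1) :=
    (hF.locallyLipschitz.locallyLipschitzOn).exists_lipschitzOnWith_of_compact isCompact_Icc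
  have key : (fun t => (x₁ t, y₁ t)) = fun t => (x₂ t, y₂ t) := by
    refine ODE_solution_unique_univ (v := fun _ p => (p.2, F p.1))
      (s := fun _ => Icc (-1 : ℝ) 1 ×ˢ univ) (K := max 1 (K * 1)) (t₀ := t₀) ?_ ?_ ?_ ?_
    · intro t
      refine LipschitzOnWith.prodMk (LipschitzWith.prod_snd.lipschitzOnWith) ?_
      exact hK.comp (LipschitzWith.prod_fst.lipschitzOnWith) (fun p hp => hp.1)
    · exact fun t => ⟨(hx₁ t).prodMk (hy₁ t), hm₁ t, mem_univ _⟩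
    · exact fun t => ⟨(hx₂ t).prodMk (hy₂ t), hm₂ t, mem_univ _⟩
    · simp [hx, hy]
  intro t
  exact congrArg Prod.fst (congrFun key t)

lemma pt_count {u : ℝ → ℝ} {a d : ℝ} (hd : 0 < d) (ha : u a = 0)
    (hanti : ∀ t, u (t + d) = -u t) (hno : ∀ t ∈ Ioo a (a + d), u t ≠ 0)
    (hper : ∀ t, u (t + 2 * π) = u t) :
    ∃ k : ℕ, 2 * π = k * d ∧ {t ∈ Set.Ico (0 : ℝ) (2 * π) | u t = 0}.ncard = k := by
  have hz : ∀ (k : ℤ) t, u (t + k * d) = 0 ↔ u t = 0 := by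
    intro k
    induction k using Int.induction_on with
    | zero => simp
    | succ i ih =>
      intro t
      rw [← ih t, show t + ((i + 1 : ℤ) : ℝ) * d = (t + (i : ℤ) * d) + d by push_cast; ring, hanti,
        neg_eq_zero]
    | pred i ih =>
      intro t
      rw [← ih t, ← neg_eq_zero, ← hanti]
      rw [show t + ((-i - 1 : ℤ) : ℝ) * d + d = (t + (-i : ℤ) * d) by push_cast; ring]
  have hmem : ∀ t, u t = 0 → ∃ k : ℤ, t = a + k * d := by
    intro t ht
    refine ⟨toIcoDiv hd a t, ?_⟩
    have h1 := toIcoMod_mem_Ico hd a t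
    rw [← self_sub_toIcoDiv_zsmul, zsmul_eq_mul] at h1
    have h2 := (hz (-toIcoDiv hd a t) t).2 ht
    rcases h1.1.eq_or_lt with h | h
    · linarith
    · refine absurd h2 (hno _ ⟨?_, ?_⟩) <;> push_cast <;> linarith [h1.2]
  obtain ⟨k, hk⟩ := hmem (a + 2 * π) (by rw [hper, ha])
  have hk' : 2 * π = k * d := by linarith
  have hk0 : 0 < k := by
    have : 0 < (k : ℝ) * d := by rw [← hk']; positivity
    exact_mod_cast pos_of_mul_pos_left this hd.le
  lift k to ℕ using hk0.le
  refine ⟨k, by exact_mod_cast hk', ?_⟩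
  set a' := toIcoMod hd 0 a with ha'
  have h1 : a' ∈ Ico 0 d := toIcoMod_mem_Ico' hd a
  have h2 : a - toIcoDiv hd 0 a • d = a' := self_sub_toIcoDiv_zsmul hd 0 a
  rw [zsmul_eq_mul] at h2
  have ha'0 : u a' = 0 := by
    rw [← hz (toIcoDiv hd 0 a), ← h2]; simpa using ha
  have hset : {t ∈ Set.Ico (0 : ℝ) (2 * π) | u t = 0}
      = (fun j : ℕ => a' + j * d) '' (Finset.range k : Set ℕ) := by
    ext t
    simp only [mem_ofPred_eq, Set.mem_image, Finset.coe_range, Set.mem_Iio]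
    constructor
    · rintro ⟨ht, h0⟩
      obtain ⟨j, hj⟩ := hmem t h0
      have hj' : t = a' + ((j + toIcoDiv hd 0 a : ℤ) : ℝ) * d := by
        push_cast; rw [← h2, hj]; ring
      generalize j + toIcoDiv hd 0 a = i at hj'
      have hi0 : -1 < i := by
        have : (-1 : ℝ) < i := by
          by_contra! h
          nlinarith [ht.1, h1.2]
        exact_mod_cast this
      have hik : i < k := by
        have : (i : ℝ) < k := by
          by_contra! h
          have := ht.2
          rw [hk'] at this
          push_cast at this
          nlinarith [h1.1]
        exact_mod_cast this
      lift i to ℕ using by omega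
      exact ⟨i, by exact_mod_cast hik, by rw [hj']; simp⟩
    · rintro ⟨j, hj, rfl⟩
      refine ⟨⟨by have := h1.1; positivity, ?_⟩, ?_⟩
      · rw [hk']
        have : (j : ℝ) + 1 ≤ k := by exact_mod_cast hj
        push_cast
        nlinarith [h1.2]
      · exact_mod_cast (hz j a').2 ha'0
  rw [hset, Set.ncard_image_of_injective _ ?_, Set.ncard_coe_finset, Finset.card_range]
  intro i j hij
  have : (i : ℝ) * d = j * d := by simpa using hij
  exact_mod_cast mul_right_cancel₀ hd.ne' this

/-- If a `2π`-periodic one-dimensional double-well phase transition has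
exactly `m ≥ 1` zeros in `[0, 2π)`, then `m` is even and `u (t + 2π/m) = -u t` for all
`t`. -/
theorem phase_transition_circle_antiperiodic
    {ε : ℝ} (hε : 0 < ε) {W : ℝ → ℝ} (hW : IsDoubleWell W)
    (u : ℝ → ℝ) (hu_smooth : ContDiff ℝ (⊤ : ℕ∞) u)
    (hu_mem : ∀ t, u t ∈ Set.Icc (-1 : ℝ) 1)
    (hu_per : ∀ t, u (t + 2 * π) = u t)
    (hODE : ∀ t, ε ^ 2 * iteratedDeriv 2 u t = deriv W (u t))
    {m : ℕ} (hm : 1 ≤ m)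
    (hcard : {t ∈ Set.Ico (0 : ℝ) (2 * π) | u t = 0}.ncard = m) :
    Even m ∧ ∀ t : ℝ, u (t + 2 * π / m) = -u t := by
  have hWd := contDiff_infty_iff_deriv.1 hW.smooth
  have hud := contDiff_infty_iff_deriv.1 hu_smooth
  have hud2 := contDiff_infty_iff_deriv.1 hud.2
  have hε2 : ε ^ 2 ≠ 0 := by positivity
  set F : ℝ → ℝ := fun x => deriv W x / ε ^ 2 with hFdef
  have hF : ContDiff ℝ 1 F := (hWd.2.of_le (by exact_mod_cast le_top)).div_const _
  have hWodd : ∀ x, deriv W (-x) = -deriv W x := by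
    intro x
    have h := deriv_comp_neg W x
    rw [show (fun x => W (-x)) = W from funext hW.even] at h
    linarith
  have hFodd : ∀ x, F (-x) = -F x := by
    intro x; simp only [hFdef, hWodd]; ring
  have hF0 : F 0 = 0 := by
    have := hFodd 0
    rw [neg_zero] at this; linarith
  set v := deriv u with hv
  have hx : ∀ t, HasDerivAt u (v t) t := fun t => (hud.1 t).hasDerivAt
  have hy : ∀ t, HasDerivAt v (F (u t)) t := by
    intro t
    have h := (hud2.1 t).hasDerivAt
    have h2 := hODE t
    rw [iteratedDeriv_succ, iteratedDeriv_one] at h2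
    have : F (u t) = deriv v t := by
      simp only [hFdef]; rw [← h2]; field_simp; rfl
    rw [this]; exact h
  have hneg : ∀ {x : ℝ}, x ∈ Icc (-1 : ℝ) 1 → -x ∈ Icc (-1 : ℝ) 1 := by
    intro x h; exact ⟨by linarith [h.2], by linarith [h.1]⟩
  -- not identically zero
  have hfin : {t ∈ Set.Ico (0 : ℝ) (2 * π) | u t = 0}.Finite :=
    Set.finite_of_ncard_pos (by omega)
  have hne : ¬ ∀ t, u t = 0 := by
    intro h
    have : {t ∈ Set.Ico (0 : ℝ) (2 * π) | u t = 0} = Set.Ico (0 : ℝ) (2 * π) := by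
      ext t; simp [h]
    rw [this] at hfin
    exact Set.Ico_infinite (by positivity) hfin
  obtain ⟨a, -, ha⟩ : {t ∈ Set.Ico (0 : ℝ) (2 * π) | u t = 0}.Nonempty :=
    Set.nonempty_of_ncard_ne_zero (by omega)
  have hva : v a ≠ 0 := by
    intro h
    apply hne
    exact pt_uniq hF (x₂ := fun _ => 0) (y₂ := fun _ => 0) (t₀ := a) hx hy
      (fun t => hasDerivAt_const _ _) (fun t => by rw [hF0]; exact hasDerivAt_const _ _)
      hu_mem (fun t => by norm_num) ha h
  -- reflection
  have hrefl : ∀ t, u t = -u (2 * a - t) := by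
    refine pt_uniq hF (y₂ := fun t => v (2 * a - t)) (t₀ := a) hx hy ?_ ?_
      hu_mem (fun t => hneg (hu_mem _)) ?_ ?_
    · intro t
      have := (HasDerivAt.comp_const_sub (2 * a) t (hx (2 * a - t))).neg
      rw [neg_neg] at this; exact this
    · intro t
      have := (HasDerivAt.comp_const_sub (2 * a) t (hy (2 * a - t)))
      simpa [hFodd] using this
    · rw [show 2 * a - a = a by ring, ha, neg_zero]
    · rw [show 2 * a - a = a by ring]
  -- next zero
  obtain ⟨b, hab, hb, hno⟩ : ∃ b, a < b ∧ u b = 0 ∧ ∀ t ∈ Ioo a b, u t ≠ 0 := by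
    have hev : ∀ᶠ z in nhdsWithin a (Ioi a), u z ≠ 0 :=
      ((hx a).eventually_ne (c := 0) hva).filter_mono
        (nhdsWithin_mono _ (fun z hz => (ne_of_gt hz : z ≠ a)))
    obtain ⟨c, hc, hc'⟩ := mem_nhdsGT_iff_exists_Ioo_subset.1 hev
    have hc : a < c := hc
    let S : Set ℝ := {t | c ≤ t ∧ u t = 0}
    have hScl : IsClosed S :=
      (isClosed_le continuous_const continuous_id).inter
        (isClosed_eq hu_smooth.continuous continuous_const)
    have hge : ∀ t, a < t → u t = 0 → t ∈ S := by
      intro t h1 h2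
      refine ⟨?_, h2⟩
      by_contra! h
      exact hc' ⟨h1, h⟩ h2
    have hSn : S.Nonempty := ⟨a + 2 * π, hge _ (by linarith [pi_pos]) (by rw [hu_per, ha])⟩
    have hSb : BddBelow S := ⟨c, fun t ht => ht.1⟩
    have hmem := hScl.csInf_mem hSn hSb
    refine ⟨sInf S, hc.trans_le hmem.1, hmem.2, fun t ht h0 => ?_⟩
    exact absurd (csInf_le hSb (hge t ht.1 h0)) (not_le.2 ht.2)
  -- energy
  have hE : v b = v a ∨ v b = -v a := by
    have hd : ∀ t, HasDerivAt (fun t => ε ^ 2 * (v t) ^ 2 - 2 * W (u t)) 0 t := by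
      intro t
      have h1 := ((hy t).pow 2).const_mul (ε ^ 2)
      have h2 := (((hWd.1 (u t)).hasDerivAt.comp t (hx t))).const_mul 2
      have h3 := h1.sub h2
      have h4 : ε ^ 2 * (((2 : ℕ) : ℝ) * v t ^ (2 - 1) * F (u t)) - 2 * (deriv W (u t) * v t) = 0 := by
        simp only [hFdef]
        field_simp
        norm_num
      rw [h4] at h3
      exact h3
    have h := is_const_of_deriv_eq_zero (fun t => (hd t).differentiableAt)
      (fun t => (hd t).deriv) b a
    simp only [ha, hb] at h
    have : ε ^ 2 * (v b ^ 2 - v a ^ 2) = 0 := by linarith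
    have := (mul_eq_zero.1 this).resolve_left hε2
    exact sq_eq_sq_iff_eq_or_eq_neg.1 (by linarith)
  set d := b - a with hdd
  have hd : 0 < d := by linarith
  have hanti : ∀ t, u (t + d) = -u t := by
    have hsx : ∀ t, HasDerivAt (fun t => u (t + d)) (v (t + d)) t :=
      fun t => HasDerivAt.comp_add_const t d (hx (t + d))
    have hsy : ∀ t, HasDerivAt (fun t => v (t + d)) (F (u (t + d))) t :=
      fun t => HasDerivAt.comp_add_const t d (hy (t + d))
    have hadb : a + d = b := by rw [hdd]; ring
    rcases hE with h | h
    · exfalso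
      have hp : ∀ t, u (t + d) = u t :=
        pt_uniq hF (t₀ := a) hsx hsy hx hy (fun t => hu_mem _) hu_mem
          (by simp only [hadb, ha, hb]) (by simp only [hadb, h])
      have h1 := hrefl ((a + b) / 2)
      have h2 := hp (2 * a - (a + b) / 2)
      rw [show 2 * a - (a + b) / 2 + d = (a + b) / 2 by rw [hdd]; ring] at h2
      exact hno ((a + b) / 2) ⟨by linarith, by linarith⟩ (by linarith)
    · refine pt_uniq hF (y₂ := fun t => - v t) (t₀ := a) hsx hsy (fun t => (hx t).neg) ?_
        (fun t => hu_mem _) (fun t => hneg (hu_mem t))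
          (by simp only [hadb, ha, hb, neg_zero]) (by simp only [hadb, h])
      intro t
      rw [hFodd]; exact (hy t).neg
  obtain ⟨k, hk, hkc⟩ := pt_count hd ha hanti (by rwa [show a + d = b by rw [hdd]; ring]) hu_per
  have hkm : k = m := hkc.symm.trans hcard
  subst hkm
  have hk0 : (k : ℝ) ≠ 0 := by positivity
  have hdk : 2 * π / k = d := by rw [hk]; field_simp
  refine ⟨?_, fun t => by rw [hdk]; exact hanti t⟩
  have hpow : ∀ (n : ℕ) t, u (t + n * d) = (-1) ^ n * u t := by
    intro n
    induction n with
    | zero => simp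
    | succ n ih =>
      intro t
      rw [show t + ((n + 1 : ℕ) : ℝ) * d = (t + n * d) + d by push_cast; ring, hanti, ih]
      ring
  by_contra hodd
  rw [Nat.not_even_iff_odd] at hodd
  apply hne
  intro t
  have h := hpow k t
  rw [← hk, hu_per, hodd.neg_one_pow] at h
  linarith
end

section
/- (Model solutions.) Fix ℓ > 0 and a double-well potential W. There exists ε₀ > 0, depending on ℓ and W, such that for every ε ∈ (0, ε₀) there is a smooth function u : [−ℓ, ℓ] → [0, 1] satisfying ε² u'' = W'(u) on [−ℓ, ℓ], with u(−ℓ) = u(ℓ) = 0 and u(t) > 0 for all t ∈ (−ℓ, ℓ). -/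
open Real Filter Set

/-- The flow of `u'' = g(u)` with initial data `u(0) = a`, `u'(0) = 0`. -/
lemma flow_exists {g : ℝ → ℝ} {K : NNReal} (hg : LipschitzWith K g) {M : ℝ}
    (hM : ∀ x, |g x| ≤ M) {T : ℝ} (hT : 0 < T) :
    ∃ U V : ℝ → ℝ → ℝ, (∀ a ∈ Icc (0:ℝ) 1, U a 0 = a ∧ V a 0 = 0 ∧
      ∀ t ∈ Ioo (-T) T, HasDerivAt (U a) (V a t) t ∧ HasDerivAt (V a) (g (U a t)) t) ∧
      ContinuousOn (fun p : ℝ × ℝ => U p.1 p.2) (Icc 0 1 ×ˢ Icc (-T) T) := by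
  have hM0 : 0 ≤ M := (abs_nonneg _).trans (hM 0)
  set lam : ℝ := 1 / (2 * T) with hlam
  have hl : 0 < lam := by positivity
  set F : ℝ × ℝ → ℝ × ℝ := fun p => (lam * p.2, lam⁻¹ * g p.1) with hF
  have hFL : ∃ K' : NNReal, LipschitzWith K' F := by
    have h1 : LipschitzWith (‖lam‖₊ * 1) (fun p : ℝ × ℝ => lam * p.2) :=
      (lipschitzWith_smul lam).comp LipschitzWith.prod_snd
    have h2 : LipschitzWith (‖lam⁻¹‖₊ * (K * 1)) (fun p : ℝ × ℝ => lam⁻¹ * g p.1) :=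
      (lipschitzWith_smul lam⁻¹).comp (hg.comp LipschitzWith.prod_fst)
    exact ⟨_, h1.prodMk h2⟩
  obtain ⟨K', hK'⟩ := hFL
  have h0 : (0:ℝ) ∈ Icc (-T) T := ⟨by linarith, hT.le⟩
  have hPL : IsPicardLindelof (fun _ : ℝ => F) (⟨0, h0⟩ : Icc (-T) T) (0 : ℝ × ℝ)
      ⟨4 * T ^ 2 * M + 2, by positivity⟩ 1 ⟨2 * T * M + 1 / T, by positivity⟩ K' := by
    refine ⟨fun t _ => hK'.lipschitzOnWith, fun x _ => continuousOn_const, ?_, ?_⟩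
    · intro t _ x hx
      rw [mem_closedBall_zero_iff] at hx
      have hx2 : |x.2| ≤ 4 * T ^ 2 * M + 2 := (norm_snd_le x).trans hx
      change ‖F x‖ ≤ 2 * T * M + 1 / T
      rw [Prod.norm_def]
      apply max_le
      · simp only [hF, Real.norm_eq_abs, abs_mul, abs_of_pos hl]
        calc lam * |x.2| ≤ lam * (4 * T ^ 2 * M + 2) := by gcongr
          _ = 2 * T * M + 1 / T := by rw [hlam]; field_simp; ring
      · simp only [hF, Real.norm_eq_abs, abs_mul, abs_of_pos (inv_pos.2 hl)]
        calc lam⁻¹ * |g x.1| ≤ lam⁻¹ * M := by gcongr; exact hM _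
          _ = 2 * T * M := by rw [hlam]; field_simp
          _ ≤ _ := by have : 0 < 1 / T := by positivity
                      linarith
    · change (2 * T * M + 1 / T) * max (T - 0) (0 - (-T)) ≤ (4 * T ^ 2 * M + 2) - 1
      have : max (T - 0) (0 - (-T)) = T := by simp
      rw [this]
      have : (2 * T * M + 1 / T) * T = 2 * T ^ 2 * M + 1 := by field_simp
      rw [this]
      have : 0 ≤ T ^ 2 * M := by positivity
      linarith
  obtain ⟨α, hα, hc⟩ := hPL.exists_forall_mem_closedBall_eq_hasDerivWithinAt_continuousOn
  have hmem : ∀ a ∈ Icc (0:ℝ) 1, ((a, 0) : ℝ × ℝ) ∈ Metric.closedBall (0 : ℝ × ℝ) ((1 : NNReal) : ℝ) := by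
    intro a ha
    rw [mem_closedBall_zero_iff, Prod.norm_def]
    simp [abs_of_nonneg ha.1, ha.2]
  refine ⟨fun a t => (α ((a, 0), t)).1, fun a t => lam * (α ((a, 0), t)).2, ?_, ?_⟩
  · intro a ha
    obtain ⟨h1, h2⟩ := hα _ (hmem a ha)
    have h1' : α ((a, 0), 0) = (a, 0) := h1
    refine ⟨by simp [h1'], by simp [h1'], fun t ht => ?_⟩
    have h3 := (h2 t (Ioo_subset_Icc_self ht)).hasDerivAt (Icc_mem_nhds ht.1 ht.2)
    have h4 : HasDerivAt (fun s => (α ((a, 0), s)).1) (F (α ((a, 0), t))).1 t := by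
      simpa using! (HasFDerivAt.fst h3.hasFDerivAt).hasDerivAt
    have h5 : HasDerivAt (fun s => (α ((a, 0), s)).2) (F (α ((a, 0), t))).2 t := by
      simpa using! (HasFDerivAt.snd h3.hasFDerivAt).hasDerivAt
    refine ⟨h4, (h5.const_mul lam).congr_deriv ?_⟩
    simp only [hF]
    field_simp
  · refine continuous_fst.comp_continuousOn (hc.comp (f := fun p : ℝ × ℝ => ((p.1, (0:ℝ)), p.2)) ?_ ?_)
    · fun_prop
    · rintro ⟨a, t⟩ ⟨ha, ht⟩
      exact ⟨hmem a ha, ht⟩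

lemma flow_unique {g : ℝ → ℝ} {K : NNReal} (hg : LipschitzWith K g) {T : ℝ} (hT : 0 < T)
    {u v u' v' : ℝ → ℝ}
    (h : ∀ t ∈ Ioo (-T) T, HasDerivAt u (v t) t ∧ HasDerivAt v (g (u t)) t)
    (h' : ∀ t ∈ Ioo (-T) T, HasDerivAt u' (v' t) t ∧ HasDerivAt v' (g (u' t)) t)
    (hu : u 0 = u' 0) (hv : v 0 = v' 0) : ∀ t ∈ Ioo (-T) T, u t = u' t := by
  have hF : LipschitzWith (max 1 (K * 1)) (fun p : ℝ × ℝ => (p.2, g p.1)) :=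
    LipschitzWith.prod_snd.prodMk (hg.comp LipschitzWith.prod_fst)
  have := ODE_solution_unique_of_mem_Ioo (v := fun _ => fun p : ℝ × ℝ => (p.2, g p.1))
    (s := fun _ => univ) (t₀ := 0) (a := -T) (b := T)
    (f := fun t => (u t, v t)) (g := fun t => (u' t, v' t))
    (fun t _ => hF.lipschitzOnWith) ⟨by linarith, hT⟩
    (fun t ht => ⟨(h t ht).1.prodMk (h t ht).2, trivial⟩)
    (fun t ht => ⟨(h' t ht).1.prodMk (h' t ht).2, trivial⟩) (by simp [hu, hv])
  intro t ht
  exact congrArg Prod.fst (this ht)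

lemma flow_smooth {g : ℝ → ℝ} (hg : ContDiff ℝ (⊤ : ℕ∞) g) {T : ℝ} {u v : ℝ → ℝ}
    (h : ∀ t ∈ Ioo (-T) T, HasDerivAt u (v t) t ∧ HasDerivAt v (g (u t)) t) :
    ContDiffOn ℝ (⊤ : ℕ∞) u (Ioo (-T) T) := by
  have key : ∀ n : ℕ, ContDiffOn ℝ n u (Ioo (-T) T) ∧ ContDiffOn ℝ n v (Ioo (-T) T) := by
    intro n
    induction n with
    | zero =>
      constructor
      · exact contDiffOn_zero.2 (fun t ht => (h t ht).1.continuousAt.continuousWithinAt)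
      · exact contDiffOn_zero.2 (fun t ht => (h t ht).2.continuousAt.continuousWithinAt)
    | succ n ih =>
      have hgn : ContDiff ℝ n g := hg.of_le (by exact_mod_cast le_top)
      constructor
      · push_cast
        rw [contDiffOn_succ_iff_deriv_of_isOpen isOpen_Ioo]
        refine ⟨fun t ht => (h t ht).1.differentiableAt.differentiableWithinAt, by simp, ?_⟩
        exact ih.2.congr (fun t ht => (h t ht).1.deriv)
      · push_cast
        rw [contDiffOn_succ_iff_deriv_of_isOpen isOpen_Ioo]
        refine ⟨fun t ht => (h t ht).2.differentiableAt.differentiableWithinAt, by simp, ?_⟩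
        exact (hgn.comp_contDiffOn ih.1).congr (fun t ht => (h t ht).2.deriv)
  exact contDiffOn_infty.2 fun n => (key n).1

/-- Conservation of energy. -/
lemma energy {g P : ℝ → ℝ} (hP : ∀ x, HasDerivAt P (g x) x) {T ℓ : ℝ} (hℓ : 0 < ℓ) (hT : ℓ < T)
    {u v : ℝ → ℝ}
    (h : ∀ t ∈ Ioo (-T) T, HasDerivAt u (v t) t ∧ HasDerivAt v (g (u t)) t) (hv : v 0 = 0) :
    ∀ t ∈ Icc 0 ℓ, (v t) ^ 2 / 2 = P (u t) - P (u 0) := by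
  have hd : ∀ t ∈ Icc 0 ℓ, HasDerivAt (fun t => (v t) ^ 2 / 2 - P (u t)) 0 t := by
    intro t ht
    obtain ⟨h1, h2⟩ := h t ⟨by linarith [ht.1], by linarith [ht.2]⟩
    have := ((h2.pow 2).div_const 2).sub ((hP (u t)).comp t h1)
    refine this.congr_deriv ?_
    push_cast
    ring
  intro t ht
  have := constant_of_has_deriv_right_zero (f := fun t => (v t) ^ 2 / 2 - P (u t))
    (fun t ht => (hd t ht).continuousAt.continuousWithinAt)
    (fun t ht => (hd t (Ico_subset_Icc_self ht)).hasDerivWithinAt) t ht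
  simp [hv] at this
  linarith

lemma core {ℓ : ℝ} (hℓ : 0 < ℓ) {g P : ℝ → ℝ} (hgs : ContDiff ℝ (⊤ : ℕ∞) g)
    (hP : ∀ x, HasDerivAt P (g x) x) {K : NNReal} (hg : LipschitzWith K g) {M : ℝ}
    (hM : ∀ x, |g x| ≤ M) (hg1 : g 1 = 0) (hanti : StrictAntiOn P (Icc 0 1)) {k : ℝ}
    (hk : (π / (2 * ℓ)) ^ 2 ≤ k) (hgk : ∀ x ∈ Icc (0:ℝ) (1/2), g x ≤ - (k * x)) :
    ∃ u : ℝ → ℝ, ContDiff ℝ (⊤ : ℕ∞) u ∧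
        (∀ t ∈ Set.Icc (-ℓ) ℓ, u t ∈ Set.Icc (0 : ℝ) 1) ∧
        (∀ t ∈ Set.Icc (-ℓ) ℓ, iteratedDeriv 2 u t = g (u t)) ∧
        u (-ℓ) = 0 ∧ u ℓ = 0 ∧ ∀ t ∈ Set.Ioo (-ℓ) ℓ, 0 < u t := by
  have hT : 0 < 3 * ℓ := by linarith
  have hlT : ℓ < 3 * ℓ := by linarith
  obtain ⟨U, V, hUV, hcont⟩ := flow_exists hg hM hT
  have hin : ∀ t ∈ Icc 0 ℓ, t ∈ Ioo (-(3*ℓ)) (3*ℓ) := fun t ht =>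
    ⟨by linarith [ht.1], by linarith [ht.2]⟩
  have hE : ∀ a ∈ Icc (0:ℝ) 1, ∀ t ∈ Icc 0 ℓ, (V a t) ^ 2 / 2 = P (U a t) - P a := by
    intro a ha t ht
    obtain ⟨h1, h2, h3⟩ := hUV a ha
    have := energy hP hℓ hlT h3 h2 t ht
    rwa [h1] at this
  have hUc : ∀ a ∈ Icc (0:ℝ) 1, ContinuousOn (U a) (Icc 0 ℓ) := fun a ha t ht =>
    ((hUV a ha).2.2 t (hin t ht)).1.continuousAt.continuousWithinAt
  have hlt1 : ∀ a ∈ Ico (0:ℝ) 1, ∀ t ∈ Icc 0 ℓ, U a t < 1 := by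
    intro a ha t ht
    have ha' := Ico_subset_Icc_self ha
    by_contra hcon
    push Not at hcon
    have hsub : Icc 0 t ⊆ Icc 0 ℓ := Icc_subset_Icc_right ht.2
    obtain ⟨s, hs, hs1⟩ := intermediate_value_Icc ht.1 ((hUc a ha').mono hsub)
      (show (1:ℝ) ∈ Icc (U a 0) (U a t) from ⟨by rw [(hUV a ha').1]; exact ha.2.le, hcon⟩)
    have := hE a ha' s (hsub hs)
    rw [hs1] at this
    have h2 := hanti ha' (right_mem_Icc.2 zero_le_one) ha.2
    nlinarith [sq_nonneg (V a s)]
  have hlea : ∀ a ∈ Ico (0:ℝ) 1, ∀ t ∈ Icc 0 ℓ, 0 ≤ U a t → U a t ≤ a := by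
    intro a ha t ht h0
    by_contra hcon
    push Not at hcon
    have := hE a (Ico_subset_Icc_self ha) t ht
    have h2 := hanti (Ico_subset_Icc_self ha) ⟨h0, (hlt1 a ha t ht).le⟩ hcon
    nlinarith [sq_nonneg (V a t)]
  -- the trajectory from `1/2` reaches zero
  have hhalf : ∃ t ∈ Icc 0 ℓ, U (1/2) t ≤ 0 := by
    by_contra hcon
    push Not at hcon
    have ha : (1/2 : ℝ) ∈ Ico (0:ℝ) 1 := by norm_num
    obtain ⟨h1, h2, h3⟩ := hUV (1/2) (Ico_subset_Icc_self ha)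
    set w := π / (2 * ℓ) with hw
    have hwpos : 0 < w := by positivity
    have hwl : w * ℓ = π / 2 := by rw [hw]; field_simp
    have hd : ∀ t ∈ Icc 0 ℓ, HasDerivAt
        (fun t => V (1/2) t * cos (w * t) + U (1/2) t * (w * sin (w * t)))
        ((g (U (1/2) t) + w ^ 2 * U (1/2) t) * cos (w * t)) t := by
      intro t ht
      obtain ⟨hu, hv⟩ := h3 t (hin t ht)
      have hwt : HasDerivAt (fun t : ℝ => w * t) w t := by
        simpa using (hasDerivAt_id t).const_mul w
      have := (hv.mul hwt.cos).add (hu.mul (hwt.sin.const_mul w))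
      refine this.congr_deriv ?_
      ring
    have hA : AntitoneOn (fun t => V (1/2) t * cos (w * t) + U (1/2) t * (w * sin (w * t)))
        (Icc 0 ℓ) := by
      apply antitoneOn_of_deriv_nonpos (convex_Icc 0 ℓ)
      · exact fun t ht => (hd t ht).continuousAt.continuousWithinAt
      · exact fun t ht => (hd t (interior_subset ht)).differentiableAt.differentiableWithinAt
      · intro t ht
        have ht' := interior_subset ht
        rw [(hd t ht').deriv]
        have hp := hcon t ht'
        have hle := hlea _ ha t ht' hp.le
        apply mul_nonpos_of_nonpos_of_nonneg
        · have := hgk _ ⟨hp.le, hle⟩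
          nlinarith [mul_le_mul_of_nonneg_right hk hp.le]
        · apply cos_nonneg_of_mem_Icc
          have : w * t ≤ w * ℓ := by gcongr; exact ht'.2
          have : 0 ≤ w * t := mul_nonneg hwpos.le ht'.1
          constructor <;> linarith [pi_pos]
    have := hA (left_mem_Icc.2 hℓ.le) (right_mem_Icc.2 hℓ.le) hℓ.le
    simp only [hwl, h2, mul_zero, cos_zero, sin_zero, cos_pi_div_two, sin_pi_div_two] at this
    have hp := mul_pos (hcon ℓ (right_mem_Icc.2 hℓ.le)) hwpos
    linarith
  -- the trajectory from `1` is constant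
  have hone : ∀ t ∈ Icc 0 ℓ, U 1 t = 1 := by
    intro t ht
    have h11 : (1:ℝ) ∈ Icc (0:ℝ) 1 := by norm_num
    obtain ⟨h1, h2, h3⟩ := hUV 1 h11
    exact flow_unique hg hT h3 (u' := fun _ => 1) (v' := fun _ => 0)
      (fun t _ => ⟨hasDerivAt_const _ _, by rw [hg1]; exact hasDerivAt_const _ _⟩) h1 h2 t (hin t ht)
  -- the largest initial height whose trajectory touches zero
  have hScompact : IsCompact (Prod.fst '' ((Icc (1/2:ℝ) 1 ×ˢ Icc 0 ℓ) ∩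
      (fun p : ℝ × ℝ => U p.1 p.2) ⁻¹' Iic 0)) := by
    apply IsCompact.image _ continuous_fst
    have hK : IsCompact (Icc (1/2:ℝ) 1 ×ˢ Icc 0 ℓ) := isCompact_Icc.prod isCompact_Icc
    refine hK.of_isClosed_subset ?_ inter_subset_left
    refine ContinuousOn.preimage_isClosed_of_isClosed (hcont.mono ?_) hK.isClosed isClosed_Iic
    exact prod_mono (Icc_subset_Icc_left (by norm_num)) (Icc_subset_Icc (by linarith) hlT.le)
  obtain ⟨a, ⟨⟨⟨a', t0⟩, ⟨⟨ha1, ht0⟩, hUa⟩, rfl⟩, hmax⟩⟩ := hScompact.exists_isGreatest (by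
    obtain ⟨t, ht, hle⟩ := hhalf
    exact ⟨_, ⟨(1/2, t), ⟨⟨by norm_num, ht⟩, hle⟩, rfl⟩⟩)
  simp only [mem_preimage, mem_Iic] at hUa ha1 ht0 hmax
  have hane : a' < 1 := by
    refine lt_of_le_of_ne ha1.2 ?_
    rintro rfl
    rw [hone t0 ht0] at hUa
    linarith
  have haI : a' ∈ Ico (0:ℝ) 1 := ⟨by linarith [ha1.1], hane⟩
  have haI' := Ico_subset_Icc_self haI
  obtain ⟨h1, h2, h3⟩ := hUV a' haI'
  have hnonneg : ∀ t ∈ Icc 0 ℓ, 0 ≤ U a' t := by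
    intro t ht
    have hc : ContinuousOn (fun a => U a t) (Icc 0 1) :=
      hcont.comp (f := fun a => (a, t)) (by fun_prop)
        (fun a ha => ⟨ha, Ioo_subset_Icc_self (hin t ht)⟩)
    have hc' : Tendsto (fun a => U a t) (nhdsWithin a' (Ioo a' 1)) (nhds (U a' t)) :=
      (hc a' haI').mono (fun x hx => ⟨by linarith [haI.1, hx.1], hx.2.le⟩)
    have : (nhdsWithin a' (Ioo a' 1)).NeBot := left_nhdsWithin_Ioo_neBot hane
    refine ge_of_tendsto hc' ?_
    filter_upwards [self_mem_nhdsWithin] with b hb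
    by_contra hcon
    push Not at hcon
    have : b ≤ a' := hmax ⟨(b, t), ⟨⟨⟨by linarith [ha1.1, hb.1], hb.2.le⟩, ht⟩, hcon.le⟩, rfl⟩
    linarith [hb.1]
  have hpos : ∀ t ∈ Ico 0 ℓ, 0 < U a' t := by
    intro t ht
    have ht' := Ico_subset_Icc_self ht
    refine lt_of_le_of_ne (hnonneg t ht') (fun h0 => ?_)
    have htpos : 0 < t := by
      refine lt_of_le_of_ne ht.1 ?_
      rintro rfl
      rw [h1] at h0
      linarith [ha1.1]
    have hmin : IsLocalMin (U a') t := by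
      filter_upwards [Ioo_mem_nhds htpos ht.2] with s hs
      rw [← h0]
      exact hnonneg s (Ioo_subset_Icc_self hs)
    have hv0 := hmin.hasDerivAt_eq_zero (h3 t (hin t ht')).1
    have := hE a' haI' t ht'
    rw [hv0, ← h0] at this
    have h5 := hanti (left_mem_Icc.2 zero_le_one) haI' (by linarith [ha1.1])
    simp at this
    linarith
  have hend : U a' ℓ = 0 := by
    have : t0 = ℓ := by
      by_contra hne
      have := hpos t0 ⟨ht0.1, lt_of_le_of_ne ht0.2 hne⟩
      linarith
    subst this
    exact le_antisymm hUa (hnonneg _ ht0)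
  have heven : ∀ t ∈ Ioo (-(3*ℓ)) (3*ℓ), U a' t = U a' (-t) := by
    refine flow_unique hg hT h3 (u' := fun t => U a' (-t)) (v' := fun t => - V a' (-t)) ?_
      (by simp) (by simp [h2])
    intro t ht
    obtain ⟨h5, h6⟩ := h3 (-t) ⟨by linarith [ht.2], by linarith [ht.1]⟩
    constructor
    · exact (h5.comp t (hasDerivAt_neg t)).congr_deriv (by ring)
    · exact (h6.comp t (hasDerivAt_neg t)).neg.congr_deriv (by ring)
  have hsm := flow_smooth hgs h3
  -- extend smoothly
  let χ : ContDiffBump (0:ℝ) := ⟨3 / 2 * ℓ, 2 * ℓ, by linarith, by linarith⟩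
  have hχ1 : ∀ t ∈ Ioo (-(3/2*ℓ)) (3/2*ℓ), χ t = 1 := by
    intro t ht
    apply χ.one_of_mem_closedBall
    rw [mem_closedBall_zero_iff]
    exact (abs_lt.2 ht).le
  have heq : ∀ t ∈ Ioo (-(3/2*ℓ)) (3/2*ℓ), χ t * U a' t = U a' t := fun t ht => by
    rw [hχ1 t ht, one_mul]
  have hin2 : ∀ t ∈ Icc (-ℓ) ℓ, t ∈ Ioo (-(3/2*ℓ)) (3/2*ℓ) := fun t ht =>
    ⟨by linarith [ht.1], by linarith [ht.2]⟩
  have habs : ∀ t ∈ Icc (-ℓ) ℓ, U a' t = U a' |t| := by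
    intro t ht
    rcases abs_choice t with h | h <;> rw [h]
    exact heven t ⟨by linarith [ht.1], by linarith [ht.2]⟩
  refine ⟨fun t => χ t * U a' t, ?_, ?_, ?_, ?_, ?_, ?_⟩
  · rw [contDiff_iff_contDiffAt]
    intro t
    by_cases ht : t ∈ Ioo (-(3*ℓ)) (3*ℓ)
    · exact χ.contDiffAt.mul (hsm.contDiffAt (Ioo_mem_nhds ht.1 ht.2))
    · have : (fun t => χ t * U a' t) =ᶠ[nhds t] fun _ => 0 := by
        have hop : IsOpen {s : ℝ | 2 * ℓ < |s|} := isOpen_lt continuous_const continuous_abs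
        have htm : t ∈ {s : ℝ | 2 * ℓ < |s|} := by
          by_contra hcon
          rw [Set.mem_ofPred_eq, not_lt] at hcon
          exact ht (abs_lt.1 (by linarith))
        filter_upwards [hop.mem_nhds htm] with s hs
        rw [χ.zero_of_le_dist (by simpa [Real.dist_eq] using! hs.le), zero_mul]
      exact contDiffAt_const.congr_of_eventuallyEq this
  · intro t ht
    beta_reduce
    rw [heq t (hin2 t ht), habs t ht]
    have : |t| ∈ Icc 0 ℓ := ⟨abs_nonneg t, abs_le.2 ht⟩
    exact ⟨hnonneg _ this, (hlt1 a' haI _ this).le⟩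
  · intro t ht
    have ht2 := hin2 t ht
    have hev : (fun t => χ t * U a' t) =ᶠ[nhds t] U a' := by
      filter_upwards [Ioo_mem_nhds ht2.1 ht2.2] with s hs using heq s hs
    have hev2 : deriv (U a') =ᶠ[nhds t] V a' := by
      filter_upwards [Ioo_mem_nhds ht2.1 ht2.2] with s hs
      exact (h3 s ⟨by linarith [hs.1], by linarith [hs.2]⟩).1.deriv
    rw [hev.iteratedDeriv_eq, iteratedDeriv_succ, iteratedDeriv_one, hev2.deriv_eq,
      (h3 t ⟨by linarith [ht.1], by linarith [ht.2]⟩).2.deriv]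
    simp only [heq t ht2]
  · have hm : -ℓ ∈ Icc (-ℓ) ℓ := ⟨le_rfl, by linarith⟩
    beta_reduce
    rw [heq _ (hin2 _ hm), habs _ hm, abs_neg, abs_of_pos hℓ, hend]
  · have hm : ℓ ∈ Icc (-ℓ) ℓ := ⟨by linarith, le_rfl⟩
    beta_reduce
    rw [heq _ (hin2 _ hm), hend]
  · intro t ht
    have hm := Ioo_subset_Icc_self ht
    beta_reduce
    rw [heq _ (hin2 _ hm), habs _ hm]
    exact hpos _ ⟨abs_nonneg t, abs_lt.2 ht⟩

lemma IsDoubleWell.deriv_neg {W : ℝ → ℝ} (hW : IsDoubleWell W) :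
    deriv W 0 = 0 ∧ deriv W 1 = 0 ∧ ∀ x ∈ Ioo (0:ℝ) 1, deriv W x < 0 := by
  have hd : Differentiable ℝ W := hW.smooth.differentiable (by simp)
  have h1 : deriv W 1 = 0 := by
    apply IsLocalMin.deriv_eq_zero
    refine Filter.Eventually.of_forall fun x => ?_
    rw [(hW.eq_zero_iff 1).2 (Or.inl rfl)]
    exact hW.nonneg x
  have h0 : deriv W 0 = 0 := by
    have := deriv_comp_neg W (0:ℝ)
    rw [show (fun x => W (-x)) = W from funext hW.even] at this
    simp at this
    linarith
  refine ⟨h0, h1, fun x hx => ?_⟩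
  by_contra hcon
  push Not at hcon
  -- then `W' > 0` on `(x,1)`, so `W x < W 1 = 0`
  have hmono : StrictMonoOn W (Icc x 1) := by
    apply strictMonoOn_of_deriv_pos (convex_Icc x 1) hd.continuous.continuousOn
    intro y hy
    rw [interior_Icc] at hy
    have hy0 : 0 < y := hx.1.trans hy.1
    have := hW.mono hx ⟨hy0, hy.2⟩ hy.1
    simp only at this
    have h3 : 0 ≤ deriv W x / x := div_nonneg hcon hx.1.le
    have h4 : 0 < deriv W y / y := lt_of_le_of_lt h3 this
    exact (div_pos_iff_of_pos_right hy0).1 h4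
  have := hmono (left_mem_Icc.2 hx.2.le) (right_mem_Icc.2 hx.2.le) hx.2
  rw [(hW.eq_zero_iff 1).2 (Or.inl rfl)] at this
  linarith [hW.nonneg x]

/-- **Model solutions.** For every `ℓ > 0` there is `ε₀ > 0` such that for
all `ε ∈ (0, ε₀)` there is a smooth `u : [-ℓ, ℓ] → [0, 1]` with `ε² u'' = W'(u)` on
`[-ℓ, ℓ]`, `u(±ℓ) = 0`, and `u > 0` on `(-ℓ, ℓ)`. -/
theorem exists_model_phase_transition
    {ℓ : ℝ} (hℓ : 0 < ℓ) {W : ℝ → ℝ} (hW : IsDoubleWell W) :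
    ∃ ε₀ > 0, ∀ ε : ℝ, ε ∈ Set.Ioo 0 ε₀ →
      ∃ u : ℝ → ℝ, ContDiff ℝ (⊤ : ℕ∞) u ∧
        (∀ t ∈ Set.Icc (-ℓ) ℓ, u t ∈ Set.Icc (0 : ℝ) 1) ∧
        (∀ t ∈ Set.Icc (-ℓ) ℓ, ε ^ 2 * iteratedDeriv 2 u t = deriv W (u t)) ∧
        u (-ℓ) = 0 ∧ u ℓ = 0 ∧ ∀ t ∈ Set.Ioo (-ℓ) ℓ, 0 < u t := by
  obtain ⟨hd0, hd1, hdneg⟩ := hW.deriv_neg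
  set c : ℝ := - (deriv W (1/2) / (1/2)) with hc
  have hcpos : 0 < c := by
    have := hdneg (1/2) (by norm_num)
    rw [hc]; linarith
  set w := π / (2 * ℓ) with hw
  have hwpos : 0 < w := by positivity
  refine ⟨√c / w, by positivity, fun ε hε => ?_⟩
  have hεpos := hε.1
  have hε2 : w ^ 2 ≤ c / ε ^ 2 := by
    rw [le_div_iff₀ (by positivity)]
    have h1 : ε * w < √c := (lt_div_iff₀ hwpos).1 hε.2
    have h2 : (ε * w) ^ 2 ≤ √c ^ 2 := by gcongr
    rw [Real.sq_sqrt hcpos.le] at h2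
    linarith [mul_pow ε w 2]
  let χ : ContDiffBump (0:ℝ) := ⟨2, 3, by norm_num, by norm_num⟩
  set Q : ℝ → ℝ := fun x => χ x * W x with hQ
  have hQs : ContDiff ℝ (⊤ : ℕ∞) Q := χ.contDiff.mul hW.smooth
  have hQc : HasCompactSupport Q := χ.hasCompactSupport.mul_right
  have hQd : ContDiff ℝ (⊤ : ℕ∞) (deriv Q) := (contDiff_infty_iff_deriv.1 hQs).2
  have hQdc : HasCompactSupport (deriv Q) := hQc.deriv
  have hQW : ∀ x ∈ Ioo (-2:ℝ) 2, Q x = W x := by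
    intro x hx
    have : χ x = 1 := by
      apply χ.one_of_mem_closedBall
      rw [mem_closedBall_zero_iff]
      exact (abs_lt.2 hx).le
    simp [hQ, this]
  have hQW' : ∀ x ∈ Ioo (-2:ℝ) 2, deriv Q x = deriv W x := by
    intro x hx
    apply Filter.EventuallyEq.deriv_eq
    filter_upwards [Ioo_mem_nhds hx.1 hx.2] with s hs using hQW s hs
  set g : ℝ → ℝ := fun x => (ε ^ 2)⁻¹ * deriv Q x with hgdef
  have hgs : ContDiff ℝ (⊤ : ℕ∞) g := contDiff_const.mul hQd
  have hgc : HasCompactSupport g := hQdc.mul_left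
  obtain ⟨K, hK⟩ := ContDiff.lipschitzWith_of_hasCompactSupport hgc hgs (by simp)
  obtain ⟨M, hM⟩ := hgc.exists_bound_of_continuous hgs.continuous
  have hPd : ∀ x, HasDerivAt (fun x => (ε ^ 2)⁻¹ * Q x) (g x) x := fun x =>
    ((hQs.differentiable (by simp) x).hasDerivAt).const_mul _
  have hanti : StrictAntiOn (fun x => (ε ^ 2)⁻¹ * Q x) (Icc 0 1) := by
    apply strictAntiOn_of_deriv_neg (convex_Icc 0 1)
      (fun x _ => (hPd x).continuousAt.continuousWithinAt)
    intro x hx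
    rw [interior_Icc] at hx
    rw [(hPd x).deriv, hgdef]
    simp only [hQW' x ⟨by linarith [hx.1], by linarith [hx.2]⟩]
    exact mul_neg_of_pos_of_neg (by positivity) (hdneg x hx)
  have hgk : ∀ x ∈ Icc (0:ℝ) (1/2), g x ≤ - (c / ε ^ 2 * x) := by
    intro x hx
    have h1 : deriv W x ≤ - (c * x) := by
      rcases hx.1.eq_or_lt with h | h
      · rw [← h, hd0]; simp
      · have := hW.mono.monotoneOn (a := x) (b := 1/2) ⟨h, by linarith [hx.2]⟩ (by norm_num) hx.2
        rw [div_le_iff₀ h] at this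
        rw [hc]; linarith
    simp only [hgdef, hQW' x ⟨by linarith [hx.1], by linarith [hx.2]⟩]
    calc (ε ^ 2)⁻¹ * deriv W x ≤ (ε ^ 2)⁻¹ * (- (c * x)) := by gcongr
      _ = _ := by field_simp
  obtain ⟨u, hu1, hu2, hu3, hu4⟩ := core hℓ hgs hPd hK hM
    (by simp [hgdef, hQW' 1 (by norm_num), hd1]) hanti hε2 hgk
  refine ⟨u, hu1, hu2, fun t ht => ?_, hu4⟩
  have := hu2 t ht
  rw [hu3 t ht, hgdef]
  simp only [hQW' (u t) ⟨by linarith [this.1], by linarith [this.2]⟩]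
  field_simp
end

section
/- Let W be a double-well potential, n ≥ 1, and let (ε_i) be a sequence of positive reals with ε_i → 0. For each i let u_i be a double-well phase transition with parameter ε_i on the flat torus T^{1+n}. Let θ_1, θ_2 ∈ [0, 2π) (not necessarily distinct) and set Σ := (({θ_1} ∪ {θ_2}) + 2πℤ) × ℝ^n ⊆ ℝ^{1+n}. Assume each nodal set Z_i := { x ∈ ℝ^{1+n} : u_i(x) = 0 } is nonempty and the Hausdorff distance between Z_i and Σ tends to 0 as i → ∞. Then θ_1 ≠ θ_2 and, in fact, the two angles are antipodal: θ_2 − θ_1 ≡ π (mod 2π). -/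
open Real Filter Set

lemma line_contDiff {d : ℕ} {f : EuclideanSpace ℝ (Fin d) → ℝ} (hf : ContDiff ℝ 2 f)
    (x v : EuclideanSpace ℝ (Fin d)) : ContDiff ℝ 2 (fun t : ℝ => f (x + t • v)) := by
  fun_prop

lemma lap_add {d : ℕ} {f g : EuclideanSpace ℝ (Fin d) → ℝ} (hf : ContDiff ℝ 2 f)
    (hg : ContDiff ℝ 2 g) (x : EuclideanSpace ℝ (Fin d)) :
    lap (fun x => f x + g x) x = lap f x + lap g x := by
  unfold lap secondDirDeriv
  rw [← Finset.sum_add_distrib]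
  refine Finset.sum_congr rfl fun j _ => ?_
  exact iteratedDeriv_fun_add (line_contDiff hf _ _).contDiffAt (line_contDiff hg _ _).contDiffAt

lemma lap_const_mul {d : ℕ} {f : EuclideanSpace ℝ (Fin d) → ℝ} (hf : ContDiff ℝ 2 f) (c : ℝ)
    (x : EuclideanSpace ℝ (Fin d)) :
    lap (fun x => c * f x) x = c * lap f x := by
  unfold lap secondDirDeriv
  rw [Finset.mul_sum]
  refine Finset.sum_congr rfl fun j _ => ?_
  exact iteratedDeriv_const_mul c (line_contDiff hf _ _).contDiffAt

lemma lap_translate {d : ℕ} (f : EuclideanSpace ℝ (Fin d) → ℝ)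
    (x v : EuclideanSpace ℝ (Fin d)) :
    lap (fun x => f (x + v)) x = lap f (x + v) := by
  unfold lap secondDirDeriv
  refine Finset.sum_congr rfl fun j _ => ?_
  simp only [add_right_comm]

lemma second_deriv_nonneg {f : ℝ → ℝ} (hf : ContDiff ℝ 2 f) {a : ℝ} (h : IsLocalMin f a) :
    0 ≤ iteratedDeriv 2 f a := by
  by_contra! hneg
  have e : iteratedDeriv 2 f a = deriv (deriv f) a := by
    rw [iteratedDeriv_succ, iteratedDeriv_one]
  rw [e] at hneg
  have hmax := isLocalMax_of_deriv_deriv_neg hneg h.deriv_eq_zero hf.continuous.continuousAt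
  have : f =ᶠ[nhds a] fun _ => f a := by
    filter_upwards [h, hmax] with x h1 h2
    exact le_antisymm h2 h1
  have h2 := this.deriv.deriv_eq
  simp at h2
  linarith

lemma lap_nonneg_of_isLocalMin {d : ℕ} {f : EuclideanSpace ℝ (Fin d) → ℝ} (hf : ContDiff ℝ 2 f)
    {x : EuclideanSpace ℝ (Fin d)} (h : IsLocalMin f x) : 0 ≤ lap f x := by
  unfold lap secondDirDeriv
  refine Finset.sum_nonneg fun j _ => ?_
  refine second_deriv_nonneg (line_contDiff hf _ _) ?_
  have hc : ContinuousAt (fun t : ℝ => x + t • EuclideanSpace.single j (1:ℝ)) 0 := by fun_prop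
  have : IsLocalMin f (x + (0:ℝ) • EuclideanSpace.single j (1:ℝ)) := by simpa using h
  exact IsMinFilter.comp_tendsto (g := fun t : ℝ => x + t • EuclideanSpace.single j (1:ℝ)) this hc

lemma lap_barrier {d : ℕ} (α β : ℝ) (z x : EuclideanSpace ℝ (Fin d)) :
    lap (fun x => exp (-α * ‖x - z‖ ^ 2) + β) x
      = (4 * α ^ 2 * ‖x - z‖ ^ 2 - 2 * α * d) * exp (-α * ‖x - z‖ ^ 2) := by
  have key : ∀ j, secondDirDeriv (fun x => exp (-α * ‖x - z‖ ^ 2) + β) x j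
      = (4 * α ^ 2 * (x j - z j) ^ 2 - 2 * α) * exp (-α * ‖x - z‖ ^ 2) := by
    intro j
    unfold secondDirDeriv
    have h1 : (fun t : ℝ => exp (-α * ‖x + t • EuclideanSpace.single j (1:ℝ) - z‖ ^ 2) + β)
        = fun t : ℝ => exp (-α * (‖x - z‖ ^ 2 + 2 * t * (x j - z j) + t ^ 2)) + β := by
      funext t
      have : x + t • EuclideanSpace.single j (1:ℝ) - z
        = (x - z) + t • EuclideanSpace.single j (1:ℝ) := by abel
      rw [this, norm_add_sq_real, inner_smul_right, norm_smul]
      simp [EuclideanSpace.inner_single_right]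
      left
      ring
    rw [h1, iteratedDeriv_succ, iteratedDeriv_one]
    set c := x j - z j
    set r := ‖x - z‖ ^ 2
    have hp : ∀ t : ℝ, HasDerivAt (fun t : ℝ => -α * (r + 2 * t * c + t ^ 2))
        (-α * (2 * c + 2 * t)) t := by
      intro t
      have := ((((hasDerivAt_id t).const_mul 2).mul_const c).const_add r).add
        ((hasDerivAt_id t).pow 2)
      refine (this.const_mul (-α)).congr_deriv ?_
      simp
    have hd : deriv (fun t : ℝ => exp (-α * (r + 2 * t * c + t ^ 2)) + β)
        = fun t => exp (-α * (r + 2 * t * c + t ^ 2)) * (-α * (2 * c + 2 * t)) := by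
      funext t
      exact ((hp t).exp.add_const β).deriv
    rw [hd]
    have hq : HasDerivAt (fun t : ℝ => -α * (2 * c + 2 * t)) (-α * 2) 0 := by
      have := (((hasDerivAt_id (0:ℝ)).const_mul 2).const_add (2*c)).const_mul (-α)
      simpa using this
    refine ((hp 0).exp.mul hq).deriv.trans ?_
    simp
    ring
  unfold lap
  simp only [key]
  rw [← Finset.sum_mul, Finset.sum_sub_distrib, ← Finset.mul_sum, EuclideanSpace.norm_sq_eq]
  simp
  ring_nf

lemma strong_max {d : ℕ} {w : EuclideanSpace ℝ (Fin d) → ℝ} (hw : ContDiff ℝ 2 w)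
    (hw0 : ∀ x, 0 ≤ w x) {L : ℝ} (hL : 0 < L) (hlap : ∀ x, lap w x ≤ L * w x)
    {y₀ : EuclideanSpace ℝ (Fin d)} (hy₀ : w y₀ = 0) (z : EuclideanSpace ℝ (Fin d)) : w z = 0 := by
  by_contra hz
  have hNc : IsClosed {x | w x = 0} := isClosed_eq hw.continuous continuous_const
  obtain ⟨y, hyN, hyd⟩ := hNc.exists_infDist_eq_dist ⟨y₀, hy₀⟩ z
  have hy : w y = 0 := hyN
  set R := ‖y - z‖ with hRdef
  have hRd : Metric.infDist z {x | w x = 0} = R := by rw [hyd, dist_comm, dist_eq_norm]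
  have hR : 0 < R := by
    rw [hRdef, norm_pos_iff, sub_ne_zero]
    rintro rfl
    exact hz hy
  have hball : ∀ x, ‖x - z‖ < R → 0 < w x := by
    intro x hx
    refine lt_of_le_of_ne (hw0 x) fun h => ?_
    have := Metric.infDist_le_dist_of_mem (x := z) (show x ∈ {x | w x = 0} from h.symm)
    rw [hRd, dist_comm, dist_eq_norm] at this
    linarith
  -- choose parameters
  obtain ⟨α, hα, hαL⟩ : ∃ α : ℝ, 0 < α ∧ L ≤ α ^ 2 * R ^ 2 - 2 * α * d := by
    refine ⟨(L + 2 * d + 1) / R ^ 2 + 1 , by positivity, ?_⟩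
    set q := (L + 2 * d + 1) / R ^ 2 with hq
    have hqR : q * R ^ 2 = L + 2 * d + 1 := by rw [hq]; field_simp
    have hq0 : 0 < q := by positivity
    have : (q + 1) ^ 2 * R ^ 2 - 2 * (q + 1) * d = (q+1) * (q * R^2 - 2 * d) + (q+1) * R^2 := by
      ring
    rw [this, hqR]
    nlinarith [mul_pos hq0 hL, mul_pos hq0 (pow_pos hR 2), pow_pos hR 2]
  obtain ⟨c, hc, hcw⟩ : ∃ c : ℝ, 0 < c ∧ ∀ x, ‖x - z‖ ≤ R / 2 → c ≤ w x := by
    obtain ⟨x₁, hx₁, hmin⟩ := (isCompact_closedBall z (R / 2)).exists_isMinOn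
      ⟨z, by simp; positivity⟩ hw.continuous.continuousOn
    refine ⟨w x₁, hball _ ?_, fun x hx => hmin (by simpa [dist_eq_norm] using hx)⟩
    have : ‖x₁ - z‖ ≤ R / 2 := by simpa [dist_eq_norm] using hx₁
    linarith
  set h : EuclideanSpace ℝ (Fin d) → ℝ :=
    fun x => exp (-α * ‖x - z‖ ^ 2) + -exp (-α * R ^ 2) with hh
  have hhC : ContDiff ℝ 2 h := by
    have : ContDiff ℝ 2 fun x : EuclideanSpace ℝ (Fin d) => ‖x - z‖ ^ 2 :=
      (contDiff_id.sub contDiff_const).norm_sq ℝ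
    rw [hh]; fun_prop
  have hh1 : ∀ x, h x ≤ 1 := by
    intro x
    have h1 : exp (-α * ‖x - z‖ ^ 2) ≤ 1 := by
      rw [Real.exp_le_one_iff]; nlinarith [sq_nonneg ‖x - z‖]
    have := exp_pos (-α * R ^ 2)
    simp only [hh]; linarith
  have hhout : ∀ x, R ≤ ‖x - z‖ → h x ≤ 0 := by
    intro x hx
    have : exp (-α * ‖x - z‖ ^ 2) ≤ exp (-α * R ^ 2) := by
      apply exp_le_exp.2
      have : R ^ 2 ≤ ‖x - z‖ ^ 2 := by gcongr
      nlinarith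
    simp only [hh]; linarith
  set φ : EuclideanSpace ℝ (Fin d) → ℝ := fun x => w x + (-c) * h x with hφ
  have hφC : ContDiff ℝ 2 φ := hw.add (contDiff_const.mul hhC)
  have hφ0 : ∀ x, 0 ≤ φ x := by
    have hout : ∀ x, R ≤ ‖x - z‖ → 0 ≤ φ x := by
      intro x hx
      have := hhout x hx
      have := hw0 x
      simp only [hφ]; nlinarith
    obtain ⟨x₁, hx₁, hmin⟩ := (isCompact_closedBall z R).exists_isMinOn
      ⟨z, by simp; positivity⟩ hφC.continuous.continuousOn
    by_contra! hneg
    obtain ⟨x₂, hx₂⟩ := hneg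
    have hx₂R : ‖x₂ - z‖ < R := by
      by_contra! hcon
      linarith [hout _ hcon]
    have hx1neg : φ x₁ < 0 := by
      have : φ x₁ ≤ φ x₂ := hmin (by simpa [dist_eq_norm] using hx₂R.le)
      linarith
    have hx₁R : ‖x₁ - z‖ < R := by
      by_contra! hcon
      linarith [hout _ hcon]
    have hx₁R2 : R / 2 < ‖x₁ - z‖ := by
      by_contra! hcon
      have := hcw _ hcon
      have := hh1 x₁
      simp only [hφ] at hx1neg
      nlinarith
    have hloc : IsLocalMin φ x₁ :=
      hmin.isLocalMin (Metric.closedBall_mem_nhds_of_mem (by simpa [dist_eq_norm] using hx₁R))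
    have h1 := lap_nonneg_of_isLocalMin hφC hloc
    have h2 : lap φ x₁ = lap w x₁ + (-c) * lap h x₁ := by
      rw [hφ, lap_add hw (contDiff_const.mul hhC), lap_const_mul hhC]
    have h3 : L * h x₁ ≤ lap h x₁ := by
      have e := lap_barrier α (-exp (-α * R ^ 2)) z x₁
      rw [hh, e]
      have hE := exp_pos (-α * ‖x₁ - z‖ ^ 2)
      have hE2 := exp_pos (-α * R ^ 2)
      have hr : (R / 2) ^ 2 ≤ ‖x₁ - z‖ ^ 2 := by gcongr
      have : L ≤ 4 * α ^ 2 * ‖x₁ - z‖ ^ 2 - 2 * α * d := by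
        nlinarith [pow_pos hα 2]
      have := mul_le_mul_of_nonneg_right this hE.le
      simp only []
      nlinarith
    have h4 := hlap x₁
    simp only [hφ] at hx1neg
    nlinarith
  -- derivative contradiction at y
  have hhy : h y = 0 := by simp [hh, hRdef]
  have hγ : ∀ g : EuclideanSpace ℝ (Fin d) → ℝ, (∀ x, 0 ≤ g x) → g y = 0 →
      deriv (fun t : ℝ => g (y + t • (z - y))) 0 = 0 := by
    intro g hg hgy
    apply IsLocalMin.deriv_eq_zero
    refine Filter.Eventually.of_forall fun t => ?_
    simpa [hgy] using hg _
  have d1 := hγ w hw0 hy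
  have d2 := hγ φ hφ0 (by simp [hφ, hhy, hy])
  have d3 : HasDerivAt (fun t : ℝ => h (y + t • (z - y))) (exp (-α * R ^ 2) * (2 * α * R ^ 2)) 0 := by
    have e : (fun t : ℝ => h (y + t • (z - y)))
        = fun t : ℝ => exp (-α * ((1 - t) ^ 2 * R ^ 2)) + -exp (-α * R ^ 2) := by
      funext t
      have : y + t • (z - y) - z = (1 - t) • (y - z) := by
        module
      simp only [hh, this, norm_smul, mul_pow, Real.norm_eq_abs, sq_abs, ← hRdef]
    rw [e]
    have h1 := ((((hasDerivAt_id (0:ℝ)).const_sub 1).pow 2).mul_const (R ^ 2)).const_mul (-α)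
    have h2 := h1.exp.add_const (-exp (-α * R ^ 2))
    refine h2.congr_deriv ?_
    simp
    ring
  have d4 : DifferentiableAt ℝ (fun t : ℝ => w (y + t • (z - y))) 0 :=
    ((line_contDiff hw y (z - y)).differentiable (by norm_num)) 0
  have d5 := (d4.hasDerivAt.add (d3.const_mul (-c))).deriv
  have : deriv (fun t : ℝ => φ (y + t • (z - y))) 0
    = deriv (fun t : ℝ => w (y + t • (z - y))) 0 + -c * (exp (-α * R ^ 2) * (2 * α * R ^ 2)) := d5
  rw [d1, d2] at this
  have : 0 < c * (exp (-α * R ^ 2) * (2 * α * R ^ 2)) := by positivity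
  linarith

lemma IsDoubleWell.deriv_odd {W : ℝ → ℝ} (hW : IsDoubleWell W) (x : ℝ) :
    deriv W (-x) = -deriv W x := by
  have h : (fun x => W (-x)) = W := funext hW.even
  have h2 := deriv_comp_neg W x
  rw [h] at h2
  linarith

lemma IsDoubleWell.contDiff_deriv {W : ℝ → ℝ} (hW : IsDoubleWell W) : ContDiff ℝ 1 (deriv W) := by
  have h2 : ContDiff ℝ (1 + 1) W := by
    have := contDiff_infty.1 hW.smooth 2
    norm_num at this ⊢
    exact this
  exact (contDiff_succ_iff_deriv.1 h2).2.2

lemma IsDoubleWell.ratio_lt {W : ℝ → ℝ} (hW : IsDoubleWell W) {q p : ℝ} (hq : 0 < q) (hqp : q < p)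
    (hp : p ≤ 1) : deriv W q / q < deriv W p / p := by
  have hr : deriv W q / q < deriv W ((q + p) / 2) / ((q + p) / 2) :=
    hW.mono ⟨hq, by linarith⟩ ⟨by linarith, by linarith⟩ (by linarith)
  refine hr.trans_le ?_
  have hc : ContinuousAt (fun x => deriv W x / x) p :=
    hW.contDiff_deriv.continuous.continuousAt.div continuousAt_id (by simp; linarith)
  have hc' : Tendsto (fun x => deriv W x / x) (nhdsWithin p (Set.Iio p)) (nhds (deriv W p / p)) :=
    hc.tendsto.mono_left nhdsWithin_le_nhds
  refine ge_of_tendsto hc' ?_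
  have : Set.Ioo ((q + p) / 2) p ∈ nhdsWithin p (Set.Iio p) :=
    Ioo_mem_nhdsLT (by linarith)
  filter_upwards [this] with x hx
  exact (hW.mono ⟨by linarith, by linarith⟩ ⟨by linarith [hx.1], by linarith [hx.2]⟩ hx.1).le

lemma IsDoubleWell.exists_lip {W : ℝ → ℝ} (hW : IsDoubleWell W) :
    ∃ L : ℝ, 0 < L ∧ ∀ a ∈ Set.Icc (-1:ℝ) 1, ∀ b ∈ Set.Icc (-1:ℝ) 1, a ≤ b →
      deriv W b - deriv W a ≤ L * (b - a) := by
  have hc : ContinuousOn (deriv (deriv W)) (Set.Icc (-1:ℝ) 1) :=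
    (hW.contDiff_deriv.continuous_deriv (by norm_num)).continuousOn
  obtain ⟨C, hC⟩ := isCompact_Icc.exists_bound_of_continuousOn hc
  refine ⟨max C 1, by positivity, fun a ha b hb hab => ?_⟩
  have := (convex_Icc (-1:ℝ) 1).image_sub_le_mul_sub_of_deriv_le (f := deriv W) (C := max C 1)
    hW.contDiff_deriv.continuous.continuousOn
    (hW.contDiff_deriv.differentiable (by norm_num)).differentiableOn
    (fun x hx => ?_) a ha b hb hab
  · exact this
  · exact (le_abs_self _).trans ((hC x (interior_subset hx)).trans (le_max_left _ _))

namespace IsPhaseTransitionTorus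

variable {n : ℕ} {W : ℝ → ℝ} {ε : ℝ} {u : EuclideanSpace ℝ (Fin (n + 1)) → ℝ}

lemma c2 (hu : IsPhaseTransitionTorus W ε u) : ContDiff ℝ 2 u :=
  contDiff_infty.1 hu.smooth 2

lemma neg (hW : IsDoubleWell W) (hu : IsPhaseTransitionTorus W ε u) :
    IsPhaseTransitionTorus W ε (fun x => -u x) where
  smooth := hu.smooth.neg
  mem_Icc x := by
    have := hu.mem_Icc x
    exact ⟨by linarith [this.2], by linarith [this.1]⟩
  periodic_first x := by rw [hu.periodic_first]
  periodic_rest j hj x := by rw [hu.periodic_rest j hj]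
  pde x := by
    have h := lap_const_mul hu.c2 (-1) x
    simp only [neg_one_mul] at h
    rw [h, hW.deriv_odd, ← hu.pde x]
    ring

end IsPhaseTransitionTorus

/-- A function is lattice-periodic. -/
def LatPer {n : ℕ} (f : EuclideanSpace ℝ (Fin (n + 1)) → ℝ) : Prop :=
  ∀ j : Fin (n + 1), j ≠ 0 → ∀ x, f (x + EuclideanSpace.single j 1) = f x

lemma LatPer.zsmul {n : ℕ} {f : EuclideanSpace ℝ (Fin (n + 1)) → ℝ} {v : EuclideanSpace ℝ (Fin (n + 1))}
    (h : ∀ x, f (x + v) = f x) (k : ℤ) (x : EuclideanSpace ℝ (Fin (n + 1))) :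
    f (x + (k : ℝ) • v) = f x := by
  have hp : Function.Periodic f v := h
  have := hp.zsmul k x
  rwa [Int.cast_smul_eq_zsmul]

lemma reduce_rest {n : ℕ} (y : EuclideanSpace ℝ (Fin (n + 1))) :
    ∃ l : EuclideanSpace ℝ (Fin (n + 1)), l 0 = 0 ∧ (∀ j, j ≠ 0 → (y + l) j ∈ Set.Icc (0:ℝ) 1) ∧
      ∀ f : EuclideanSpace ℝ (Fin (n + 1)) → ℝ, LatPer f → ∀ x, f (x + l) = f x := by
  refine ⟨∑ j ∈ Finset.univ.erase 0, ((-⌊y j⌋ : ℤ) : ℝ) • EuclideanSpace.single j (1:ℝ), ?_, ?_, ?_⟩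
  · simp only [WithLp.ofLp_sum, Finset.sum_apply]
    refine Finset.sum_eq_zero fun j hj => ?_
    have : j ≠ 0 := (Finset.mem_erase.1 hj).1
    simp [this.symm]
  · intro j hj
    simp only [PiLp.add_apply, WithLp.ofLp_sum, Finset.sum_apply]
    rw [Finset.sum_eq_single j]
    · simp
      constructor
      · linarith [Int.floor_le (y j)]
      · linarith [Int.lt_floor_add_one (y j)]
    · intro b _ hb
      simp [hb.symm]
    · intro h
      exact absurd (Finset.mem_erase.2 ⟨hj, Finset.mem_univ _⟩) h
  · intro f hf x
    have key : ∀ s : Finset (Fin (n + 1)), (0 : Fin (n+1)) ∉ s → ∀ x,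
        f (x + ∑ j ∈ s, ((-⌊y j⌋ : ℤ) : ℝ) • EuclideanSpace.single j (1:ℝ)) = f x := by
      intro s
      induction s using Finset.induction_on with
      | empty => intro _ x; simp
      | insert a s ha ih =>
        intro h0 x
        rw [Finset.sum_insert ha, ← add_assoc, ih (fun h => h0 (Finset.mem_insert_of_mem h))]
        exact LatPer.zsmul (hf a (fun h => h0 (h ▸ Finset.mem_insert_self a s))) _ x
    exact key _ (by simp) x

lemma isCompact_box {n : ℕ} (a b : ℝ) : IsCompact {y : EuclideanSpace ℝ (Fin (n + 1)) |
    y 0 ∈ Set.Icc a b ∧ ∀ j, j ≠ 0 → y j ∈ Set.Icc (0:ℝ) 1} := by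
  have h : IsCompact (Set.pi Set.univ (fun j : Fin (n+1) => if j = 0 then Set.Icc a b else Set.Icc (0:ℝ) 1)) := by
    apply isCompact_univ_pi
    intro j
    split_ifs <;> exact isCompact_Icc
  have h2 := (EuclideanSpace.equiv (Fin (n+1)) ℝ).toHomeomorph.isCompact_preimage.2 h
  convert h2 using 1
  ext y
  simp only [Set.mem_ofPred_eq, Set.mem_preimage, Set.mem_pi, Set.mem_univ, true_implies]
  constructor
  · rintro ⟨h1, h2⟩ j
    by_cases hj : j = 0
    · subst hj; simpa using h1
    · simpa [hj] using h2 j hj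
  · intro h
    refine ⟨by simpa using h 0, fun j hj => by simpa [hj] using h j⟩

lemma reduce_all {n : ℕ} (y : EuclideanSpace ℝ (Fin (n + 1))) :
    ∃ l : EuclideanSpace ℝ (Fin (n + 1)), ((y + l) 0 ∈ Set.Icc (0:ℝ) (2 * π)) ∧
      (∀ j, j ≠ 0 → (y + l) j ∈ Set.Icc (0:ℝ) 1) ∧
      ∀ f : EuclideanSpace ℝ (Fin (n + 1)) → ℝ, LatPer f →
        (∀ x, f (x + (2 * π) • EuclideanSpace.single 0 1) = f x) → ∀ x, f (x + l) = f x := by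
  obtain ⟨l, h0, h1, h2⟩ := reduce_rest y
  obtain ⟨k, hk, -⟩ := existsUnique_add_zsmul_mem_Ico (two_pi_pos) (y 0) 0
  refine ⟨l + (k : ℝ) • ((2 * π) • EuclideanSpace.single 0 1), ?_, ?_, ?_⟩
  · simp at hk
    simp [h0]
    exact ⟨hk.1, hk.2.le⟩
  · intro j hj
    have := h1 j hj
    simpa [Pi.single_apply, hj] using this
  · intro f hf hf0 x
    rw [← add_assoc, LatPer.zsmul hf0, h2 f hf]

/-- Reflection comparison: Brezis-Oswald type argument by maximising the ratio. -/
lemma compare_half {n : ℕ} {W : ℝ → ℝ} {ε : ℝ} {u : EuclideanSpace ℝ (Fin (n + 1)) → ℝ}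
    (hW : IsDoubleWell W) (hε : 0 < ε)
    (hu : IsPhaseTransitionTorus W ε u) {a : ℝ}
    (hneg : ∀ x : EuclideanSpace ℝ (Fin (n + 1)), x 0 ∈ Set.Icc a (a + π) → u x < 0)
    (y : EuclideanSpace ℝ (Fin (n + 1))) (hy : y 0 ∈ Set.Icc a (a + π)) :
    u y + u (y + π • EuclideanSpace.single 0 1) ≤ 0 := by
  set v : EuclideanSpace ℝ (Fin (n + 1)) := π • EuclideanSpace.single 0 1 with hv
  have hv0 : v 0 = π := by simp [hv]
  have hcu : Continuous u := hu.c2.continuous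
  have hpos : ∀ x : EuclideanSpace ℝ (Fin (n + 1)), x 0 ∈ Set.Icc a (a + π) → 0 < -u x :=
    fun x hx => by linarith [hneg x hx]
  have hper : LatPer u := hu.periodic_rest
  have hper' : LatPer (fun x => u (x + v)) := by
    intro j hj x
    simp only [add_right_comm _ (EuclideanSpace.single j (1:ℝ)) v]
    exact hper j hj _
  obtain ⟨l₀, hl0, hl1, hl2⟩ := reduce_rest y
  have hne : {y : EuclideanSpace ℝ (Fin (n + 1)) |
    y 0 ∈ Set.Icc a (a + π) ∧ ∀ j, j ≠ 0 → y j ∈ Set.Icc (0:ℝ) 1}.Nonempty :=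
    ⟨y + l₀, by simpa [hl0] using hy, hl1⟩
  have hcont : ContinuousOn (fun x => u (x + v) / (-u x)) {y : EuclideanSpace ℝ (Fin (n + 1)) |
    y 0 ∈ Set.Icc a (a + π) ∧ ∀ j, j ≠ 0 → y j ∈ Set.Icc (0:ℝ) 1} := by
    refine ContinuousOn.div (by fun_prop) (by fun_prop) fun x hx => ?_
    exact (hpos x hx.1).ne'
  obtain ⟨x₁, hx₁, hmax⟩ := (isCompact_box a (a + π)).exists_isMaxOn hne hcont
  set m := u (x₁ + v) / (-u x₁) with hm
  have hq := hpos x₁ hx₁.1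
  have hmeq : u (x₁ + v) = m * (-u x₁) := by rw [hm, div_mul_cancel₀ _ hq.ne']
  have hall : ∀ x : EuclideanSpace ℝ (Fin (n + 1)), x 0 ∈ Set.Icc a (a + π) →
      u (x + v) ≤ m * (-u x) := by
    intro x hx
    obtain ⟨l, h0, h1, h2⟩ := reduce_rest x
    have hmem : (x + l) 0 ∈ Set.Icc a (a + π) := by simpa [h0] using hx
    have h3 : u (x + l + v) / (-u (x + l)) ≤ m := hmax ⟨hmem, h1⟩
    rw [h2 u hper, h2 _ hper', div_le_iff₀ (hpos x hx)] at h3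
    exact h3
  rcases le_or_gt m 1 with hm1 | hm1
  · have h1 := hall y hy
    have h2 := hpos y hy
    nlinarith
  exfalso
  have hp : 0 < u (x₁ + v) := by rw [hmeq]; positivity
  have hqp : -u x₁ < u (x₁ + v) := by rw [hmeq]; nlinarith
  have hx₁i : x₁ 0 ∈ Set.Ioo a (a + π) := by
    refine ⟨lt_of_le_of_ne hx₁.1.1 fun h => ?_, lt_of_le_of_ne hx₁.1.2 fun h => ?_⟩
    · have := hneg (x₁ + v) (by simp [hv0, ← h, pi_pos.le])
      linarith
    · have e : x₁ + v = (x₁ + -v) + (2 * π) • EuclideanSpace.single 0 1 := by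
        rw [hv]; module
      rw [e, hu.periodic_first] at hp
      have := hneg (x₁ + -v) (by simp [hv0, h, pi_pos.le])
      linarith
  have hC : ContDiff ℝ 2 u := hu.c2
  have hCv : ContDiff ℝ 2 fun x => u (x + v) := by fun_prop
  have hloc : IsLocalMin (fun x => (-m) * u x + (-1) * u (x + v)) x₁ := by
    have hopen : IsOpen {x : EuclideanSpace ℝ (Fin (n + 1)) | x 0 ∈ Set.Ioo a (a + π)} :=
      isOpen_Ioo.preimage (by fun_prop)
    filter_upwards [hopen.mem_nhds hx₁i] with x hx
    have := hall x ⟨hx.1.le, hx.2.le⟩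
    linarith
  have hlap := lap_nonneg_of_isLocalMin
    ((contDiff_const.mul hC).add (contDiff_const.mul hCv)) hloc
  rw [lap_add (contDiff_const.mul hC) (contDiff_const.mul hCv), lap_const_mul hC,
    lap_const_mul hCv, lap_translate] at hlap
  have e1 := hu.pde x₁
  have e2 := hu.pde (x₁ + v)
  have hlt := hW.ratio_lt hq hqp (hu.mem_Icc _).2
  rw [hW.deriv_odd, div_lt_div_iff₀ hq hp, ← e1, ← e2, hmeq] at hlt
  have hε2 : 0 < ε ^ 2 := by positivity
  have h5 := mul_nonneg (mul_nonneg hε2.le hq.le) hlap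
  nlinarith

lemma neg_everywhere {n : ℕ} {W : ℝ → ℝ} {ε : ℝ} {u : EuclideanSpace ℝ (Fin (n + 1)) → ℝ}
    (hW : IsDoubleWell W) (hε : 0 < ε)
    (hu : IsPhaseTransitionTorus W ε u) {a : ℝ}
    (hneg : ∀ x : EuclideanSpace ℝ (Fin (n + 1)), x 0 ∈ Set.Icc a (a + π) → u x < 0)
    (x : EuclideanSpace ℝ (Fin (n + 1))) : u x < 0 := by
  set e : EuclideanSpace ℝ (Fin (n + 1)) := EuclideanSpace.single 0 1 with he
  have he0 : e 0 = 1 := by simp [he]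
  have hcu : Continuous u := hu.c2.continuous
  have hper : LatPer u := hu.periodic_rest
  -- comparison at shift π
  have hhalf : ∀ x, u x + u (x + π • e) ≤ 0 := by
    intro x
    obtain ⟨k, hk, -⟩ := existsUnique_add_zsmul_mem_Ico pi_pos (x 0) a
    have hmem : (x + (k:ℝ) • (π • e)) 0 ∈ Set.Icc a (a + π) := by
      simp at hk
      simp [he0]
      exact ⟨hk.1, hk.2.le⟩
    have hc := compare_half hW hε hu hneg _ hmem
    rcases Int.even_or_odd' k with ⟨c, rfl | rfl⟩
    · have e1 : x + ((2 * c : ℤ):ℝ) • (π • e) = x + (c:ℝ) • ((2 * π) • e) := by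
        push_cast; module
      have e2 : x + ((2 * c : ℤ):ℝ) • (π • e) + π • e = x + π • e + (c:ℝ) • ((2 * π) • e) := by
        push_cast; module
      rw [← he, e2, e1, LatPer.zsmul hu.periodic_first, LatPer.zsmul hu.periodic_first] at hc
      exact hc
    · have e1 : x + ((2 * c + 1 : ℤ):ℝ) • (π • e) = x + π • e + (c:ℝ) • ((2 * π) • e) := by
        push_cast; module
      have e2 : x + ((2 * c + 1 : ℤ):ℝ) • (π • e) + π • e
          = x + ((c + 1 : ℤ):ℝ) • ((2 * π) • e) := by
        push_cast; module
      rw [← he, e2, e1, LatPer.zsmul hu.periodic_first, LatPer.zsmul hu.periodic_first] at hc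
      linarith
  -- sliding
  set K : Set (EuclideanSpace ℝ (Fin (n + 1))) := {y : EuclideanSpace ℝ (Fin (n + 1)) |
    y 0 ∈ Set.Icc 0 (2 * π) ∧ ∀ j, j ≠ 0 → y j ∈ Set.Icc (0:ℝ) 1} with hK
  have hred : ∀ s : ℝ, ∀ x, ∃ x' ∈ K, u x' = u x ∧ u (x' + s • e) = u (x + s • e) := by
    intro s x
    obtain ⟨l, h0, h1, h2⟩ := reduce_all x
    refine ⟨x + l, ⟨h0, h1⟩, h2 u hper hu.periodic_first x, ?_⟩
    rw [add_right_comm]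
    exact h2 u hper hu.periodic_first _
  set T : Set (ℝ × EuclideanSpace ℝ (Fin (n + 1))) :=
    (Set.Icc 0 π ×ˢ K) ∩ {p | 0 ≤ u p.2 + u (p.2 + p.1 • e)} with hT
  have hTc : IsCompact T := by
    refine (isCompact_Icc.prod (isCompact_box 0 (2 * π))).inter_right ?_
    exact isClosed_le continuous_const (by fun_prop)
  have hmemT : ∀ s ∈ Set.Icc 0 π, ∀ x, 0 ≤ u x + u (x + s • e) → s ∈ Set.image Prod.fst T := by
    intro s hs x hx
    obtain ⟨x', hx', h1, h2⟩ := hred s x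
    refine ⟨(s, x'), ⟨⟨hs, hx'⟩, ?_⟩, rfl⟩
    show 0 ≤ u x' + u (x' + s • e)
    rw [h1, h2]; exact hx
  by_contra! hx
  have h0mem : (0:ℝ) ∈ Set.image Prod.fst T := by
    refine hmemT 0 ⟨le_rfl, pi_pos.le⟩ x ?_
    simp; exact hx
  obtain ⟨s, ⟨⟨s', x₁⟩, ⟨⟨hs, -⟩, hx₁⟩, hss⟩, hub⟩ :=
    (hTc.image continuous_fst).exists_isGreatest ⟨0, h0mem⟩
  simp only at hss hs
  subst hss
  have hx₁ : 0 ≤ u x₁ + u (x₁ + s' • e) := hx₁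
  have hle : ∀ x, u x + u (x + s' • e) ≤ 0 := by
    intro x
    rcases eq_or_lt_of_le hs.2 with h | h
    · rw [h]; exact hhalf x
    by_contra! hcon
    have hc : ContinuousAt (fun s : ℝ => u x + u (x + s • e)) s' := by fun_prop
    have h1 : ∀ᶠ s in nhdsWithin s' (Set.Ioi s'), 0 < u x + u (x + s • e) :=
      (hc.eventually (lt_mem_nhds hcon)).filter_mono nhdsWithin_le_nhds
    obtain ⟨s, hs1, hs2⟩ := (h1.and (Ioo_mem_nhdsGT h)).exists
    have := hub (hmemT s ⟨hs.1.trans hs2.1.le, hs2.2.le⟩ x hs1.le)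
    linarith [hs2.1]
  obtain ⟨L, hL, hlip⟩ := hW.exists_lip
  have hε2 : 0 < ε ^ 2 := by positivity
  have hC : ContDiff ℝ 2 u := hu.c2
  have hCv : ContDiff ℝ 2 fun x => u (x + s' • e) := by fun_prop
  have hz := strong_max (w := fun x => (-1) * u x + (-1) * u (x + s' • e))
    ((contDiff_const.mul hC).add (contDiff_const.mul hCv))
    (fun x => by linarith [hle x]) (L := L / ε ^ 2) (by positivity)
    (fun x => by
      rw [lap_add (contDiff_const.mul hC) (contDiff_const.mul hCv), lap_const_mul hC,
        lap_const_mul hCv, lap_translate, div_mul_eq_mul_div, le_div_iff₀ hε2]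
      have e1 := hu.pde x
      have e2 := hu.pde (x + s' • e)
      have m1 := hu.mem_Icc x
      have m2 := hu.mem_Icc (x + s' • e)
      have := hlip (u (x + s' • e)) m2 (-u x) ⟨by linarith [m1.2], by linarith [m1.1]⟩
        (by linarith [hle x])
      rw [hW.deriv_odd] at this
      linarith)
    (y₀ := x₁) (by linarith [hle x₁]) (a • e)
  have n1 := hneg (a • e) (by simp [he0, pi_pos.le])
  have n2 := hneg (a • e + s' • e) (by simpa [he0] using hs)
  linarith

lemma no_zero {n : ℕ} {W : ℝ → ℝ} {ε : ℝ} {u : EuclideanSpace ℝ (Fin (n + 1)) → ℝ}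
    (hW : IsDoubleWell W) (hε : 0 < ε)
    (hu : IsPhaseTransitionTorus W ε u) {a : ℝ}
    (hne : ∀ x : EuclideanSpace ℝ (Fin (n + 1)), x 0 ∈ Set.Icc a (a + π) → u x ≠ 0)
    (x : EuclideanSpace ℝ (Fin (n + 1))) : u x ≠ 0 := by
  have hcu : Continuous u := hu.c2.continuous
  have hconv : Convex ℝ {x : EuclideanSpace ℝ (Fin (n + 1)) | x 0 ∈ Set.Icc a (a + π)} := by
    intro x hx y hy s t hs ht hst
    have := convex_Icc a (a + π) hx hy hs ht hst
    simpa using this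
  have hpre := hconv.isPreconnected
  by_cases h : ∀ x : EuclideanSpace ℝ (Fin (n + 1)), x 0 ∈ Set.Icc a (a + π) → u x < 0
  · exact (neg_everywhere hW hε hu h x).ne
  · push Not at h
    obtain ⟨x₀, hx₀, hux₀⟩ := h
    have h' : ∀ x : EuclideanSpace ℝ (Fin (n + 1)), x 0 ∈ Set.Icc a (a + π) → -u x < 0 := by
      intro y hy
      by_contra! hcon
      obtain ⟨z, hz, hz0⟩ := hpre.intermediate_value hy hx₀ hcu.continuousOn
        (show (0:ℝ) ∈ Set.Icc (u y) (u x₀) from ⟨by linarith, hux₀⟩)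
      exact hne z hz hz0
    have := neg_everywhere hW hε (hu.neg hW) h' x
    intro h0
    simp [h0] at this

lemma haus_ne_top {n : ℕ} {W : ℝ → ℝ} {ε : ℝ} {u : EuclideanSpace ℝ (Fin (n + 1)) → ℝ}
    (hu : IsPhaseTransitionTorus W ε u) (hZ : {x | u x = 0}.Nonempty) (θ₁ θ₂ : ℝ) :
    Metric.hausdorffEDist {x | u x = 0} {x : EuclideanSpace ℝ (Fin (n + 1)) |
      ∃ j : ℤ, x 0 = θ₁ + 2 * π * j ∨ x 0 = θ₂ + 2 * π * j} ≠ ⊤ := by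
  obtain ⟨R, hR⟩ := (isCompact_box (n := n) 0 (2 * π)).isBounded.exists_norm_le
  refine ne_top_of_le_ne_top (ENNReal.ofReal_ne_top (r := max R (2 * π)))
    (Metric.hausdorffEDist_le_of_mem_edist ?_ ?_)
  · intro x hx
    obtain ⟨k, hk, -⟩ := existsUnique_add_zsmul_mem_Ico (two_pi_pos) (x 0) θ₁
    simp at hk
    refine ⟨x + (θ₁ - (x 0 + k * (2 * π))) • EuclideanSpace.single 0 1, ⟨-k, Or.inl ?_⟩, ?_⟩
    · simp; ring
    · rw [edist_dist]
      apply ENNReal.ofReal_le_ofReal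
      refine le_trans ?_ (le_max_right _ _)
      rw [dist_eq_norm]
      simp [norm_smul]
      rw [abs_le]
      constructor <;> linarith [hk.1, hk.2]
  · intro y hy
    obtain ⟨z, hz⟩ := hZ
    obtain ⟨l, h0, h1, h2⟩ := reduce_all (z - y)
    refine ⟨z + l, ?_, ?_⟩
    · show u (z + l) = 0
      rw [h2 u hu.periodic_rest hu.periodic_first]
      exact hz
    · rw [edist_dist]
      apply ENNReal.ofReal_le_ofReal
      refine le_trans ?_ (le_max_left _ _)
      rw [dist_comm, dist_eq_norm]
      have := hR _ ⟨h0, h1⟩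
      rwa [show z + l - y = z - y + l by abel]

lemma free_arc (θ₁ θ₂ : ℝ) (hθ₁ : θ₁ ∈ Set.Ico 0 (2 * π)) (hθ₂ : θ₂ ∈ Set.Ico 0 (2 * π))
    (h : ¬ ∃ j : ℤ, θ₂ - θ₁ = π + 2 * π * j) :
    ∃ a δ : ℝ, 0 < δ ∧ ∀ t ∈ Set.Icc a (a + π), ∀ j : ℤ,
      δ ≤ |t - (θ₁ + 2 * π * j)| ∧ δ ≤ |t - (θ₂ + 2 * π * j)| := by
  have hpi := pi_pos
  -- arcs `(α, β)` avoiding both orbits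
  have core : ∀ α β : ℝ, α + π < β → (∀ θ, θ = θ₁ ∨ θ = θ₂ → ∃ i : ℤ,
      θ + 2 * π * i ≤ α ∧ β ≤ θ + 2 * π * (i + 1)) →
      ∃ a δ : ℝ, 0 < δ ∧ ∀ t ∈ Set.Icc a (a + π), ∀ j : ℤ,
      δ ≤ |t - (θ₁ + 2 * π * j)| ∧ δ ≤ |t - (θ₂ + 2 * π * j)| := by
    intro α β hab hθ
    refine ⟨α + (β - α - π) / 2, (β - α - π) / 2, by linarith, ?_⟩
    have key : ∀ θ, θ = θ₁ ∨ θ = θ₂ → ∀ t ∈ Set.Icc (α + (β - α - π) / 2)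
        (α + (β - α - π) / 2 + π), ∀ j : ℤ, (β - α - π) / 2 ≤ |t - (θ + 2 * π * j)| := by
      intro θ h t ht j
      obtain ⟨i, hi1, hi2⟩ := hθ θ h
      rcases le_or_gt j i with hj | hj
      · have hj' : (j:ℝ) ≤ i := by exact_mod_cast hj
        have : 2 * π * j ≤ 2 * π * i := by gcongr
        refine le_trans ?_ (le_abs_self _)
        linarith [ht.1]
      · have hj' : (i:ℝ) + 1 ≤ j := by exact_mod_cast hj
        have : 2 * π * (i + 1) ≤ 2 * π * j := by gcongr
        refine le_trans ?_ (neg_le_abs _)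
        linarith [ht.2]
    exact fun t ht j => ⟨key θ₁ (Or.inl rfl) t ht j, key θ₂ (Or.inr rfl) t ht j⟩
  have n1 : θ₂ - θ₁ ≠ π := fun e => h ⟨0, by simp [e]⟩
  have n2 : θ₂ - θ₁ ≠ -π := fun e => h ⟨-1, by rw [e]; push_cast; ring⟩
  obtain ⟨h1, h1'⟩ := hθ₁
  obtain ⟨h2, h2'⟩ := hθ₂
  rcases lt_or_gt_of_ne n1 with c1 | c1
  · rcases lt_or_gt_of_ne n2 with c2 | c2
    · refine core θ₂ θ₁ (by linarith) ?_
      rintro θ (rfl | rfl)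
      · exact ⟨-1, by push_cast; linarith, by push_cast; linarith⟩
      · exact ⟨0, by push_cast; linarith, by push_cast; linarith⟩
    · rcases le_total θ₁ θ₂ with c | c
      · refine core θ₂ (θ₁ + 2 * π) (by linarith) ?_
        rintro θ (rfl | rfl)
        · exact ⟨0, by push_cast; linarith, by push_cast; linarith⟩
        · exact ⟨0, by push_cast; linarith, by push_cast; linarith⟩
      · refine core θ₁ (θ₂ + 2 * π) (by linarith) ?_
        rintro θ (rfl | rfl)
        · exact ⟨0, by push_cast; linarith, by push_cast; linarith⟩
        · exact ⟨0, by push_cast; linarith, by push_cast; linarith⟩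
  · refine core θ₁ θ₂ (by linarith) ?_
    rintro θ (rfl | rfl)
    · exact ⟨0, by push_cast; linarith, by push_cast; linarith⟩
    · exact ⟨-1, by push_cast; linarith, by push_cast; linarith⟩

/-- If the nodal sets of double-well phase transitions `u i` on the flat
torus `T^{1+n}` converge in the Hausdorff sense to
`Σ = (({θ_1} ∪ {θ_2}) + 2πℤ) × ℝⁿ` with `θ_1, θ_2 ∈ [0, 2π)`, then `θ_1 ≠ θ_2` and in
fact `θ_2 - θ_1 ≡ π (mod 2π)`. -/
theorem phase_transition_two_sheets_antipodal
    {W : ℝ → ℝ} (hW : IsDoubleWell W) {n : ℕ} (hn : 1 ≤ n)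
    (ε : ℕ → ℝ) (hε_pos : ∀ i, 0 < ε i) (hε_lim : Tendsto ε atTop (nhds 0))
    (u : ℕ → EuclideanSpace ℝ (Fin (n + 1)) → ℝ)
    (hu : ∀ i, IsPhaseTransitionTorus W (ε i) (u i))
    (θ₁ θ₂ : ℝ) (hθ₁ : θ₁ ∈ Set.Ico 0 (2 * π)) (hθ₂ : θ₂ ∈ Set.Ico 0 (2 * π))
    (Z : ℕ → Set (EuclideanSpace ℝ (Fin (n + 1))))
    (hZ : ∀ i, Z i = {x | u i x = 0}) (hZ_ne : ∀ i, (Z i).Nonempty)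
    (Sig : Set (EuclideanSpace ℝ (Fin (n + 1))))
    (hSig : Sig = {x | ∃ j : ℤ, x 0 = θ₁ + 2 * π * j ∨ x 0 = θ₂ + 2 * π * j})
    (hHaus : Tendsto (fun i => Metric.hausdorffDist (Z i) Sig) atTop (nhds 0)) :
    θ₁ ≠ θ₂ ∧ ∃ j : ℤ, θ₂ - θ₁ = π + 2 * π * j := by
  have main : ∃ j : ℤ, θ₂ - θ₁ = π + 2 * π * j := by
    by_contra hcon
    obtain ⟨a, δ, hδ, harc⟩ := free_arc θ₁ θ₂ hθ₁ hθ₂ hcon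
    obtain ⟨i, hi⟩ := (hHaus.eventually (gt_mem_nhds hδ)).exists
    have hfin : Metric.hausdorffEDist (Z i) Sig ≠ ⊤ := by
      have hne := hZ_ne i
      rw [hZ i] at hne ⊢
      rw [hSig]
      exact haus_ne_top (hu i) hne θ₁ θ₂
    have hne : ∀ x : EuclideanSpace ℝ (Fin (n + 1)), x 0 ∈ Set.Icc a (a + π) → u i x ≠ 0 := by
      intro x hx h0
      have hxZ : x ∈ Z i := by rw [hZ i]; exact h0
      obtain ⟨y, hy, hxy⟩ := Metric.exists_dist_lt_of_hausdorffDist_lt hxZ hi hfin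
      rw [hSig] at hy
      obtain ⟨j, hj⟩ := hy
      have hd : |x 0 - y 0| ≤ dist x y := by
        rw [dist_eq_norm]
        exact PiLp.norm_apply_le (x - y) 0
      have := harc (x 0) hx j
      rcases hj with hj | hj
      · rw [← hj] at this
        linarith [this.1]
      · rw [← hj] at this
        linarith [this.2]
    obtain ⟨x, hx⟩ := hZ_ne i
    rw [hZ i] at hx
    exact no_zero hW (hε_pos i) (hu i) hne x hx
  refine ⟨?_, main⟩
  rintro rfl
  obtain ⟨j, hj⟩ := main
  have h1 : π * ((2 * j + 1 : ℤ) : ℝ) = 0 := by push_cast; linarith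
  rcases mul_eq_zero.1 h1 with h | h
  · exact pi_ne_zero h
  · have : (2 * j + 1 : ℤ) = 0 := by exact_mod_cast h
    omega
end
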